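/- arXiv:2401.14001 — 3 statements merged into one kernel-verified Lean document; each statement's English description precedes it below -/
import Mathlib

section
/- Let K be a number field with [K : ℚ] = 2 and ring of integers 𝓞 K, with absolute norm N(a) = |Norm_ℤ(a)| ∈ ℕ. If the image of N is closed under division (for all nonzero a, b ∈ 𝓞 K with N(a) ∣ N(b) there exists c ∈ 𝓞 K with N(a) * N(c) = N(b)), then ClassGroup (𝓞 K) has no element of odd order greater than 1: every g ∈ ClassGroup (𝓞 K) whose order is odd equals the identity. -/
open NumberField Filter Topology
open scoped nonZeroDivisors

/-- A finite sieve: removing the multiples of finitely many primes from a completely multiplicative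
sum multiplies it by the corresponding Euler factors. -/
lemma prod_one_sub_mul_tsum {M ι : Type*} [CommMonoid M] [IsCancelMul M] (f : M →* ℂ)
    (hf : Summable fun x ↦ ‖f x‖) (p : ι → M) (hp : ∀ i a b, p i ∣ a * b → p i ∣ a ∨ p i ∣ b)
    (hpp : ∀ i j, p i ∣ p j → i = j) (S : Finset ι) :
    (∏ i ∈ S, (1 - f (p i))) * ∑' x, f x =
      ∑' x, {x | ∀ i ∈ S, ¬ p i ∣ x}.indicator f x := by
  classical
  induction S using Finset.induction_on with
  | empty => simp
  | insert q S hq ih =>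
    have hs : ∀ A : Set M, Summable (A.indicator f) := fun A ↦ hf.of_norm.indicator A
    set A := {x | ∀ i ∈ S, ¬ p i ∣ x} with hA
    have hsplit : A.indicator f = fun x ↦
        {x | ∀ i ∈ insert q S, ¬ p i ∣ x}.indicator f x + (A ∩ {x | p q ∣ x}).indicator f x := by
      ext x
      by_cases h1 : x ∈ A <;> by_cases h2 : p q ∣ x <;>
        simp_all [Set.indicator]
    have hmul : ∑' x, (A ∩ {x | p q ∣ x}).indicator f x = f (p q) * ∑' x, A.indicator f x := by
      have hinj : Function.Injective (fun x ↦ p q * x) := mul_right_injective _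
      rw [← tsum_mul_left, ← hinj.tsum_eq]
      · refine tsum_congr fun x ↦ ?_
        have : p q * x ∈ A ∩ {x | p q ∣ x} ↔ x ∈ A := by
          simp only [hA, Set.mem_inter_iff, Set.mem_ofPred_eq, dvd_mul_right, and_true]
          refine forall₂_congr fun i hi ↦ not_congr ⟨fun h ↦ ?_, fun h ↦ h.mul_left _⟩
          exact (hp i _ _ h).resolve_left fun h ↦ hq (hpp i q h ▸ hi)
        by_cases hx : x ∈ A
        · rw [Set.indicator_of_mem (this.2 hx), Set.indicator_of_mem hx, map_mul]
        · rw [Set.indicator_of_notMem (mt this.1 hx), Set.indicator_of_notMem hx, mul_zero]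
      · intro x hx
        obtain ⟨y, rfl⟩ := (Set.mem_of_indicator_ne_zero hx).2
        exact ⟨y, rfl⟩
    rw [Finset.prod_insert hq, mul_assoc, ih, sub_mul, one_mul, ← hmul, sub_eq_iff_eq_add]
    conv_lhs => rw [hsplit]
    exact (hs _).tsum_add (hs _)

lemma tendsto_prod_one_sub_mul_tsum {M ι : Type*} [CommMonoid M] [IsCancelMul M] (f : M →* ℂ)
    (hf : Summable fun x ↦ ‖f x‖) (p : ι → M) (hp : ∀ i a b, p i ∣ a * b → p i ∣ a ∨ p i ∣ b)
    (hpp : ∀ i j, p i ∣ p j → i = j) (h1 : ∀ x, (∀ i, ¬ p i ∣ x) ↔ x = 1) :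
    Tendsto (fun S : Finset ι ↦ (∏ i ∈ S, (1 - f (p i))) * ∑' x, f x) atTop (𝓝 1) := by
  classical
  simp_rw [prod_one_sub_mul_tsum f hf p hp hpp]
  have hlim : (1 : ℂ) = ∑' x, ({1} : Set M).indicator f x := by
    rw [tsum_eq_single 1 (fun x hx ↦ by simp [hx])]
    simp
  rw [hlim]
  refine tendsto_tsum_of_dominated_convergence hf (fun x ↦ ?_)
    (Eventually.of_forall fun S x ↦ norm_indicator_le_norm_self _ _)
  refine tendsto_const_nhds.congr' ?_
  by_cases hx : x = 1
  · refine Eventually.of_forall fun S ↦ ?_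
    beta_reduce
    rw [Set.indicator_of_mem (by simpa using hx), Set.indicator_of_mem]
    exact fun i _ ↦ (h1 x).2 hx i
  · obtain ⟨i, hi⟩ : ∃ i, p i ∣ x := by
      by_contra h
      exact hx ((h1 x).1 (not_exists.1 h))
    filter_upwards [eventually_ge_atTop {i}] with S hS
    rw [Set.indicator_of_notMem (by simpa using hx), Set.indicator_of_notMem]
    exact fun h ↦ h i (hS (by simp)) hi

lemma card_sub_two_mul_card_halves {A B : Finset ℤ} (hB : ∀ i, i ∈ B ↔ 2 * i ∈ A)
    (hA : ∀ x ∈ A, ∀ y ∈ A, ∀ z, x ≤ z → z ≤ y → z ∈ A) :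
    |(A.card : ℤ) - 2 * B.card| ≤ 1 := by
  rcases A.eq_empty_or_nonempty with rfl | hne
  · have : B = ∅ := by ext i; simp [hB]
    simp [this]
  · have hAI : A = Finset.Icc (A.min' hne) (A.max' hne) := by
      ext z
      rw [Finset.mem_Icc]
      exact ⟨fun h ↦ ⟨A.min'_le z h, A.le_max' z h⟩,
        fun h ↦ hA _ (A.min'_mem hne) _ (A.max'_mem hne) z h.1 h.2⟩
    have hle : A.min' hne ≤ A.max' hne := A.min'_le _ (A.max'_mem hne)
    generalize A.min' hne = a at hAI hle
    generalize A.max' hne = b at hAI hle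
    have hBI : B = Finset.Icc ((a + 1) / 2) (b / 2) := by
      ext i
      rw [hB, hAI, Finset.mem_Icc, Finset.mem_Icc]
      omega
    rw [hAI, hBI, Int.card_Icc, Int.card_Icc]
    rw [abs_le]
    omega

lemma card_sub_two_mul_card_halve_rows {A B : Finset (ℤ × ℤ)} {R : ℕ}
    (hR : ∀ x ∈ A, |x.2| ≤ R) (hB : ∀ i j, (i, j) ∈ B ↔ (2 * i, j) ∈ A)
    (hA : ∀ j, ∀ x y z, (x, j) ∈ A → (y, j) ∈ A → x ≤ z → z ≤ y → (z, j) ∈ A) :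
    |(A.card : ℤ) - 2 * B.card| ≤ 2 * R + 1 := by
  classical
  have key (D : Finset (ℤ × ℤ)) (hD : ∀ x ∈ D, |x.2| ≤ R) :
      D.card = ∑ j ∈ Finset.Icc (-R : ℤ) R, ((D.filter (·.2 = j)).image Prod.fst).card := by
    rw [Finset.card_eq_sum_card_fiberwise (f := Prod.snd) (t := Finset.Icc (-R : ℤ) R)
      (fun x hx ↦ by simpa [abs_le] using hD x hx)]
    refine Finset.sum_congr rfl fun j _ ↦ (Finset.card_image_of_injOn ?_).symm
    rintro ⟨x, y⟩ h ⟨x', y'⟩ h' e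
    simp_all
  rw [key A hR, key B (fun x hx ↦ hR (2 * x.1, x.2) ((hB x.1 x.2).1 hx))]
  push_cast
  rw [Finset.mul_sum, ← Finset.sum_sub_distrib]
  refine (Finset.abs_sum_le_sum_abs _ _).trans ?_
  refine (Finset.sum_le_card_nsmul _ _ 1 fun j _ ↦
    card_sub_two_mul_card_halves ?_ ?_).trans ?_
  · intro i
    simp [hB]
  · intro x hx y hy z
    simp only [Finset.mem_image, Finset.mem_filter, Prod.exists, exists_and_right,
      exists_eq_right] at hx hy ⊢
    exact hA _ x y z hx hy
  · simp only [Int.card_Icc, mul_one, nsmul_eq_mul]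
    omega

lemma card_sub_four_mul_card_halves {A B : Finset (ℤ × ℤ)} {R : ℕ}
    (hR : ∀ x ∈ A, |x.1| ≤ R ∧ |x.2| ≤ R) (hB : ∀ i j, (i, j) ∈ B ↔ (2 * i, 2 * j) ∈ A)
    (hrow : ∀ j, ∀ x y z, (x, j) ∈ A → (y, j) ∈ A → x ≤ z → z ≤ y → (z, j) ∈ A)
    (hcol : ∀ i, ∀ x y z, (i, x) ∈ A → (i, y) ∈ A → x ≤ z → z ≤ y → (i, z) ∈ A) :
    |(A.card : ℤ) - 4 * B.card| ≤ 3 * (2 * R + 1) := by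
  classical
  have hfin : {x : ℤ × ℤ | (2 * x.1, x.2) ∈ A}.Finite := by
    refine (A.finite_toSet.preimage (f := fun x : ℤ × ℤ ↦ (2 * x.1, x.2)) ?_)
    rintro ⟨x, y⟩ - ⟨x', y'⟩ -
    simp
  set D := hfin.toFinset with hDdef
  have hD : ∀ i j, (i, j) ∈ D ↔ (2 * i, j) ∈ A := by simp [hDdef]
  have h1 := card_sub_two_mul_card_halve_rows (R := R) (fun x hx ↦ (hR x hx).2) hD hrow
  have h2 := card_sub_two_mul_card_halve_rows (R := R) (A := D.map (Equiv.prodComm ℤ ℤ).toEmbedding)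
    (B := B.map (Equiv.prodComm ℤ ℤ).toEmbedding) ?_ ?_ ?_
  · rw [Finset.card_map, Finset.card_map] at h2
    rw [abs_le] at *
    constructor <;> linarith
  · rintro ⟨x, y⟩ hx
    have := (hR _ ((hD _ _).1 (by simpa using hx))).1
    simp only [abs_mul, abs_two] at this
    have h := abs_nonneg y
    simp only
    linarith
  · intro i j
    simp [hB, hD]
  · intro j x y z hx hy
    simp only [Finset.mem_map_equiv, Equiv.prodComm_symm, Equiv.prodComm_apply,
      Prod.swap_prod_mk, hD] at hx hy ⊢
    exact hcol _ x y z hx hy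

/-- Doubling a bounded convex plane region multiplies its number of lattice points by four, up to
an error proportional to the diameter. -/
lemma Convex.ncard_lattice_double {E : Type*} [AddCommGroup E] [Module ℝ E] {S : Set E}
    (hS : Convex ℝ S) (e₁ e₂ : E) {M : ℝ}
    (hM : ∀ a b : ℝ, a • e₁ + b • e₂ ∈ S → |a| ≤ M ∧ |b| ≤ M) {T : ℝ} (hT : 1 ≤ T) :
    {x : ℤ × ℤ | T⁻¹ • ((x.1 : ℝ) • e₁ + (x.2 : ℝ) • e₂) ∈ S}.Finite ∧
    |({x : ℤ × ℤ | (2 * T)⁻¹ • ((x.1 : ℝ) • e₁ + (x.2 : ℝ) • e₂) ∈ S}.ncard : ℝ) -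
      4 * {x : ℤ × ℤ | T⁻¹ • ((x.1 : ℝ) • e₁ + (x.2 : ℝ) • e₂) ∈ S}.ncard| ≤
      (12 * |M| + 3) * T := by
  have hbd : ∀ U : ℝ, 1 ≤ U → ∀ x : ℤ × ℤ, U⁻¹ • ((x.1 : ℝ) • e₁ + (x.2 : ℝ) • e₂) ∈ S →
      |x.1| ≤ (⌊U * |M|⌋₊ : ℤ) ∧ |x.2| ≤ (⌊U * |M|⌋₊ : ℤ) := by
    intro U hU x hx
    have hU0 : 0 < U := by linarith
    rw [smul_add, smul_smul, smul_smul] at hx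
    have key : ∀ a : ℤ, |U⁻¹ * a| ≤ M → |a| ≤ (⌊U * |M|⌋₊ : ℤ) := by
      intro a ha
      rw [abs_mul, abs_of_pos (inv_pos.2 hU0), inv_mul_le_iff₀ hU0] at ha
      rw [Int.natCast_floor_eq_floor (by positivity), Int.le_floor]
      push_cast
      exact ha.trans (by gcongr; exact le_abs_self M)
    exact ⟨key _ (hM _ _ hx).1, key _ (hM _ _ hx).2⟩
  have hfin : ∀ U : ℝ, 1 ≤ U →
      {x : ℤ × ℤ | U⁻¹ • ((x.1 : ℝ) • e₁ + (x.2 : ℝ) • e₂) ∈ S}.Finite := by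
    intro U hU
    refine ((Finset.Icc (-⌊U * |M|⌋₊ : ℤ) ⌊U * |M|⌋₊) ×ˢ
      (Finset.Icc (-⌊U * |M|⌋₊ : ℤ) ⌊U * |M|⌋₊)).finite_toSet.subset fun x hx ↦ ?_
    have := hbd U hU x hx
    rw [abs_le, abs_le] at this
    simpa only [Finset.coe_product, Set.mem_prod, Finset.coe_Icc, Set.mem_Icc] using this
  refine ⟨hfin T hT, ?_⟩
  have h2 : 1 ≤ 2 * T := by linarith
  rw [Set.ncard_eq_toFinset_card _ (hfin T hT), Set.ncard_eq_toFinset_card _ (hfin _ h2)]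
  have hline : ∀ (p q : E), ∀ x y z : ℤ, (x : ℝ) • p + q ∈ S → (y : ℝ) • p + q ∈ S →
      x ≤ z → z ≤ y → (z : ℝ) • p + q ∈ S := by
    intro p q x y z hx hy hxz hzy
    have hz : (z : ℝ) ∈ segment ℝ (x : ℝ) y := by
      rw [segment_eq_Icc (by exact_mod_cast hxz.trans hzy)]
      exact ⟨by exact_mod_cast hxz, by exact_mod_cast hzy⟩
    obtain ⟨a, b, ha, hb, hab, h⟩ := hz
    have := hS hx hy ha hb hab
    convert this using 1
    rw [← h]
    have hq : q = a • q + b • q := by rw [← add_smul, hab, one_smul]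
    nth_rw 1 [hq]
    simp only [smul_eq_mul]
    module
  have := card_sub_four_mul_card_halves (R := ⌊2 * T * |M|⌋₊) (A := (hfin _ h2).toFinset)
    (B := (hfin T hT).toFinset) ?_ ?_ ?_ ?_
  · have h' := this
    rw [← Int.cast_le (R := ℝ)] at h'
    push_cast at h'
    refine h'.trans ?_
    have h3 : (⌊2 * T * |M|⌋₊ : ℝ) ≤ 2 * T * |M| := Nat.floor_le (by positivity)
    nlinarith
  · intro x hx
    exact hbd _ h2 x (by simpa using hx)
  · intro i j
    simp only [Set.Finite.mem_toFinset, Set.mem_ofPred_eq]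
    push_cast
    have : (2 * T)⁻¹ • ((2 * (i : ℝ)) • e₁ + (2 * (j : ℝ)) • e₂) =
        T⁻¹ • ((i : ℝ) • e₁ + (j : ℝ) • e₂) := by
      rw [mul_smul, mul_smul, ← smul_add, smul_smul]
      congr 1
      field_simp
    rw [this]
  · intro j x y z
    simp only [Set.Finite.mem_toFinset, Set.mem_ofPred_eq]
    have h (i : ℤ) : (2 * T)⁻¹ • ((i : ℝ) • e₁ + (j : ℝ) • e₂) =
        (i : ℝ) • ((2 * T)⁻¹ • e₁) + (2 * T)⁻¹ • (j : ℝ) • e₂ := by module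
    rw [h, h, h]
    exact hline _ _ x y z
  · intro i x y z
    simp only [Set.Finite.mem_toFinset, Set.mem_ofPred_eq]
    have h (j : ℤ) : (2 * T)⁻¹ • ((i : ℝ) • e₁ + (j : ℝ) • e₂) =
        (j : ℝ) • ((2 * T)⁻¹ • e₂) + (2 * T)⁻¹ • (i : ℝ) • e₁ := by module
    rw [h, h, h]
    exact hline _ _ x y z

/-- The number of points of the lattice `ℤ e₁ + ℤ e₂` in the dilate `T • S` is multiplied by four,
up to `O(T)`, when `T` is doubled. -/
def HasDoublingCount {E : Type*} [AddCommGroup E] [Module ℝ E] (e₁ e₂ : E) (S : Set E) : Prop :=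
  ∃ C : ℝ, ∀ T : ℝ, 1 ≤ T →
    {x : ℤ × ℤ | T⁻¹ • ((x.1 : ℝ) • e₁ + (x.2 : ℝ) • e₂) ∈ S}.Finite ∧
    |({x : ℤ × ℤ | (2 * T)⁻¹ • ((x.1 : ℝ) • e₁ + (x.2 : ℝ) • e₂) ∈ S}.ncard : ℝ) -
      4 * {x : ℤ × ℤ | T⁻¹ • ((x.1 : ℝ) • e₁ + (x.2 : ℝ) • e₂) ∈ S}.ncard| ≤ C * T

namespace HasDoublingCount

variable {E : Type*} [AddCommGroup E] [Module ℝ E] {e₁ e₂ : E} {S S' : Set E}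

lemma diff (h : HasDoublingCount e₁ e₂ S) (h' : HasDoublingCount e₁ e₂ S') (hs : S' ⊆ S) :
    HasDoublingCount e₁ e₂ (S \ S') := by
  obtain ⟨C, hC⟩ := h
  obtain ⟨C', hC'⟩ := h'
  have key (T : ℝ) (hT : 1 ≤ T) :
      {x : ℤ × ℤ | T⁻¹ • ((x.1 : ℝ) • e₁ + (x.2 : ℝ) • e₂) ∈ S \ S'}.Finite ∧
      ({x : ℤ × ℤ | T⁻¹ • ((x.1 : ℝ) • e₁ + (x.2 : ℝ) • e₂) ∈ S \ S'}.ncard : ℝ) =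
        {x : ℤ × ℤ | T⁻¹ • ((x.1 : ℝ) • e₁ + (x.2 : ℝ) • e₂) ∈ S}.ncard -
        {x : ℤ × ℤ | T⁻¹ • ((x.1 : ℝ) • e₁ + (x.2 : ℝ) • e₂) ∈ S'}.ncard := by
    refine ⟨(hC T hT).1.subset fun x hx ↦ hx.1, ?_⟩
    rw [eq_sub_iff_add_eq, ← Nat.cast_add]
    congr 1
    exact Set.ncard_sdiff_add_ncard_of_subset (fun x hx ↦ hs hx) (hC T hT).1
  refine ⟨C + C', fun T hT ↦ ⟨(key T hT).1, ?_⟩⟩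
  rw [(key T hT).2, (key (2 * T) (by linarith)).2]
  have h1 := abs_le.1 (hC T hT).2
  have h2 := abs_le.1 (hC' T hT).2
  rw [abs_le]
  constructor <;> linarith

lemma union (h : HasDoublingCount e₁ e₂ S) (h' : HasDoublingCount e₁ e₂ S') (hs : Disjoint S S') :
    HasDoublingCount e₁ e₂ (S ∪ S') := by
  obtain ⟨C, hC⟩ := h
  obtain ⟨C', hC'⟩ := h'
  have key (T : ℝ) (hT : 1 ≤ T) :
      {x : ℤ × ℤ | T⁻¹ • ((x.1 : ℝ) • e₁ + (x.2 : ℝ) • e₂) ∈ S ∪ S'}.Finite ∧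
      ({x : ℤ × ℤ | T⁻¹ • ((x.1 : ℝ) • e₁ + (x.2 : ℝ) • e₂) ∈ S ∪ S'}.ncard : ℝ) =
        {x : ℤ × ℤ | T⁻¹ • ((x.1 : ℝ) • e₁ + (x.2 : ℝ) • e₂) ∈ S}.ncard +
        {x : ℤ × ℤ | T⁻¹ • ((x.1 : ℝ) • e₁ + (x.2 : ℝ) • e₂) ∈ S'}.ncard := by
    refine ⟨(hC T hT).1.union (hC' T hT).1, ?_⟩
    rw [← Nat.cast_add]
    congr 1
    exact Set.ncard_union_eq (Set.disjoint_left.2 fun x hx hx' ↦ Set.disjoint_left.1 hs hx hx')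
      (hC T hT).1 (hC' T hT).1
  refine ⟨C + C', fun T hT ↦ ⟨(key T hT).1, ?_⟩⟩
  rw [(key T hT).2, (key (2 * T) (by linarith)).2]
  have h1 := abs_le.1 (hC T hT).2
  have h2 := abs_le.1 (hC' T hT).2
  rw [abs_le]
  constructor <;> linarith

end HasDoublingCount

lemma Convex.hasDoublingCount {E : Type*} [NormedAddCommGroup E] [NormedSpace ℝ E]
    (b : Module.Basis (Fin 2) ℝ E) {S : Set E} (hS : Convex ℝ S) (hb : Bornology.IsBounded S) :
    HasDoublingCount (b 0) (b 1) S := by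
  have : FiniteDimensional ℝ E := b.finiteDimensional_of_finite
  obtain ⟨M, hM⟩ := ((b.equivFunL : E →L[ℝ] (Fin 2 → ℝ)).lipschitz.isBounded_image
    hb).exists_norm_le
  refine ⟨12 * |M| + 3, fun T hT ↦ hS.ncard_lattice_double (b 0) (b 1) (M := M) ?_ hT⟩
  intro x y hxy
  have h := hM _ (Set.mem_image_of_mem _ hxy)
  have h0 := (norm_le_pi_norm _ (0 : Fin 2)).trans h
  have h1 := (norm_le_pi_norm _ (1 : Fin 2)).trans h
  simp only [ContinuousLinearEquiv.coe_coe, map_add, map_smul, Real.norm_eq_abs] at h0 h1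
  simpa using And.intro h0 h1

lemma abs_sub_mul_sq_le_of_doubling {f : ℝ → ℝ} {c C : ℝ}
    (hf : ∀ T, 1 ≤ T → |f (2 * T) - 4 * f T| ≤ C * T)
    (hlim : Tendsto (fun T ↦ f T / T ^ 2) atTop (𝓝 c)) {T : ℝ} (hT : 1 ≤ T) :
    |f T - c * T ^ 2| ≤ C / 2 * T := by
  have hT0 : 0 < T := by linarith
  have hC : 0 ≤ C := by
    by_contra h
    have := (abs_nonneg _).trans (hf 1 le_rfl)
    linarith
  have hk (k : ℕ) : |f (2 ^ k * T) / 4 ^ k - f T| ≤ C / 2 * T * (1 - (1 / 2) ^ k) := by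
    induction k with
    | zero => simp
    | succ k ih =>
      have h1 := hf (2 ^ k * T) (one_le_mul_of_one_le_of_one_le (one_le_pow₀ one_le_two) hT)
      have h2 : |f (2 ^ (k + 1) * T) / 4 ^ (k + 1) - f (2 ^ k * T) / 4 ^ k| ≤
          C * T / 4 * (1 / 2) ^ k := by
        have e : f (2 ^ (k + 1) * T) / 4 ^ (k + 1) - f (2 ^ k * T) / 4 ^ k =
            (f (2 * (2 ^ k * T)) - 4 * f (2 ^ k * T)) / 4 ^ (k + 1) := by
          rw [pow_succ' 2, mul_assoc]
          field_simp
          ring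
        rw [e, abs_div, abs_of_pos (by positivity : (0 : ℝ) < 4 ^ (k + 1)),
          div_le_iff₀ (by positivity)]
        refine h1.trans (le_of_eq ?_)
        rw [show (4 : ℝ) ^ (k + 1) = 4 * (2 ^ k * 2 ^ k) by rw [← mul_pow]; norm_num; ring,
          one_div, inv_pow]
        field_simp
      rw [abs_le] at *
      rw [pow_succ]
      constructor <;> nlinarith
  have hl : Tendsto (fun k : ℕ ↦ f (2 ^ k * T) / 4 ^ k - f T) atTop (𝓝 (c * T ^ 2 - f T)) := by
    refine Tendsto.sub_const ?_ _
    have h2 : Tendsto (fun k : ℕ ↦ (2 : ℝ) ^ k * T) atTop atTop :=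
      (tendsto_pow_atTop_atTop_of_one_lt one_lt_two).atTop_mul_const hT0
    refine ((hlim.comp h2).mul_const (T ^ 2)).congr fun k ↦ ?_
    simp only [Function.comp_apply]
    rw [show (4 : ℝ) ^ k = 2 ^ k * 2 ^ k by rw [← mul_pow]; norm_num]
    field_simp
  rw [abs_sub_comm]
  refine le_of_tendsto hl.abs (Eventually.of_forall fun k ↦ (hk k).trans ?_)
  have : (0 : ℝ) ≤ (1 / 2) ^ k := by positivity
  have : 0 ≤ C / 2 * T := by positivity
  nlinarith

lemma convex_log_sub_log_mem {Q : Set ℝ} (hQ : Q.OrdConnected) :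
    Convex ℝ {p : ℝ × ℝ | 0 < p.1 ∧ 0 < p.2 ∧ Real.log p.1 - Real.log p.2 ∈ Q} := by
  have key (p q : ℝ × ℝ) (hp1 : 0 < p.1) (hp2 : 0 < p.2) (hq1 : 0 < q.1) (hq2 : 0 < q.2)
      (hp : Real.log p.1 - Real.log p.2 ∈ Q) (hq : Real.log q.1 - Real.log q.2 ∈ Q)
      (hle : p.1 * q.2 ≤ q.1 * p.2) (a b : ℝ) (ha : 0 ≤ a) (hb : 0 ≤ b) (h1 : 0 < a * p.1 + b * q.1)
      (h2 : 0 < a * p.2 + b * q.2) :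
      Real.log (a * p.1 + b * q.1) - Real.log (a * p.2 + b * q.2) ∈ Q := by
    refine hQ.out hp hq ⟨?_, ?_⟩
    · rw [← Real.log_div hp1.ne' hp2.ne', ← Real.log_div h1.ne' h2.ne']
      refine Real.log_le_log (by positivity) ?_
      rw [div_le_div_iff₀ hp2 h2]
      nlinarith
    · rw [← Real.log_div hq1.ne' hq2.ne', ← Real.log_div h1.ne' h2.ne']
      refine Real.log_le_log (by positivity) ?_
      rw [div_le_div_iff₀ h2 hq2]
      nlinarith
  rintro p ⟨hp1, hp2, hp⟩ q ⟨hq1, hq2, hq⟩ a b ha hb hab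
  have hpos (x y : ℝ) (hx : 0 < x) (hy : 0 < y) : 0 < a * x + b * y := by
    rcases ha.eq_or_lt with rfl | ha
    · have : b = 1 := by linarith
      simpa [this]
    · positivity
  have h1 := hpos _ _ hp1 hq1
  have h2 := hpos _ _ hp2 hq2
  refine ⟨h1, h2, ?_⟩
  simp only [Prod.fst_add, Prod.smul_fst, smul_eq_mul, Prod.snd_add, Prod.smul_snd]
  rcases le_total (p.1 * q.2) (q.1 * p.2) with hle | hle
  · exact key p q hp1 hp2 hq1 hq2 hp hq hle a b ha hb h1 h2
  · rw [add_comm (a * _), add_comm (a * _)] at *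
    exact key q p hq1 hq2 hp1 hp2 hq hp hle b a hb ha h1 h2

lemma convex_one_lt_mul : Convex ℝ {p : ℝ × ℝ | 0 < p.1 ∧ 0 < p.2 ∧ 1 < p.1 * p.2} := by
  rintro ⟨p1, p2⟩ ⟨hp1, hp2, hp⟩ ⟨q1, q2⟩ ⟨hq1, hq2, hq⟩ a b ha hb hab
  have hpos (x y : ℝ) (hx : 0 < x) (hy : 0 < y) : 0 < a * x + b * y := by
    rcases ha.eq_or_lt with rfl | ha
    · have : b = 1 := by linarith
      simpa [this]
    · positivity
  simp only at hp1 hp2 hp hq1 hq2 hq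
  refine ⟨hpos _ _ hp1 hq1, hpos _ _ hp2 hq2, ?_⟩
  simp only [Prod.fst_add, Prod.smul_fst, smul_eq_mul, Prod.snd_add, Prod.smul_snd]
  have hx : 0 < p1 * q2 := by positivity
  have hy : 0 < q1 * p2 := by positivity
  have hxy : 1 < (p1 * q2) * (q1 * p2) := by
    have := one_lt_mul_of_lt_of_le hp hq.le
    nlinarith
  have hs : 2 ≤ p1 * q2 + q1 * p2 := by
    nlinarith [sq_nonneg (p1 * q2 - q1 * p2)]
  have e : (a * p1 + b * q1) * (a * p2 + b * q2) =
    a ^ 2 * (p1 * p2) + b ^ 2 * (q1 * q2) + a * b * (p1 * q2 + q1 * p2) := by ring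
  have e1 : (1 : ℝ) = a ^ 2 + b ^ 2 + a * b * 2 := by nlinarith
  rw [e]
  have hab0 : 0 ≤ a * b := by positivity
  have hlt : a ^ 2 + b ^ 2 < a ^ 2 * (p1 * p2) + b ^ 2 * (q1 * q2) := by
    rcases ha.eq_or_lt with rfl | ha
    · have : b = 1 := by linarith
      simpa [this]
    · have h3 : 0 < a ^ 2 := by positivity
      have h4 : 0 ≤ b ^ 2 := by positivity
      nlinarith
  nlinarith

namespace NumberField.mixedEmbedding.fundamentalCone

open InfinitePlace mixedEmbedding NumberField.Units dirichletUnitTheorem Module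

variable (K : Type*) [Field K] [NumberField K]

lemma hasDoublingCount_normLeOne_of_subsingleton [Subsingleton (InfinitePlace K)]
    (b : Module.Basis (Fin 2) ℝ (mixedSpace K)) :
    HasDoublingCount (b 0) (b 1) (normLeOne K) := by
  classical
  let w : InfinitePlace K := Classical.arbitrary _
  have hn (x : mixedSpace K) : ‖x‖ = normAtPlace w x := by
    rw [norm_eq_sup'_normAtPlace]
    refine le_antisymm (Finset.sup'_le _ _ fun v _ ↦ by rw [Subsingleton.elim v w])
      (Finset.le_sup' (fun v ↦ normAtPlace v x) (Finset.mem_univ w))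
  have hN (x : mixedSpace K) : mixedEmbedding.norm x = ‖x‖ ^ mult w := by
    rw [mixedEmbedding.norm_apply, Fintype.prod_subsingleton _ w, hn]
  have hrank : rank K = 0 := by
    have := Fintype.card_le_one_iff_subsingleton.2
      (inferInstance : Subsingleton (InfinitePlace K))
    unfold rank
    omega
  have h : normLeOne K = Metric.closedBall 0 1 \ {0} := by
    ext x
    rw [mem_normLeOne]
    simp only [fundamentalCone, Set.mem_sdiff, Set.mem_preimage, ZSpan.mem_fundamentalDomain,
      Set.mem_ofPred_eq, mem_closedBall_zero_iff, Set.mem_singleton_iff, hN,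
      pow_eq_zero_iff mult_ne_zero, norm_eq_zero, pow_le_one_iff_of_nonneg (norm_nonneg x) mult_ne_zero]
    have (i : Fin (rank K)) : False := by
      rw [hrank] at i
      exact i.elim0
    constructor
    · rintro ⟨⟨_, h1⟩, h2⟩
      exact ⟨h2, h1⟩
    · rintro ⟨h1, h2⟩
      exact ⟨⟨fun i ↦ (this i).elim, h2⟩, h1⟩
  rw [h]
  exact ((convex_closedBall 0 1).hasDoublingCount b Metric.isBounded_closedBall).diff
    ((convex_singleton 0).hasDoublingCount b Bornology.isBounded_singleton) (by simp)

/-- For two real places `w₁ ≠ w₀`, membership in the fundamental cone is a condition on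
`log ‖x‖_{w₁} - log ‖x‖_{w₀}`. -/
lemma exists_ordConnected_mem_fundamentalCone_iff (hdeg : finrank ℚ K = 2)
    {w₁ : InfinitePlace K} (h₀ : IsReal (w₀ : InfinitePlace K)) (h₁ : IsReal w₁) (hne : w₁ ≠ w₀)
    (hall : ∀ w : InfinitePlace K, w = w₁ ∨ w = w₀) :
    (∀ x : mixedSpace K, mixedEmbedding.norm x = |x.1 ⟨w₁, h₁⟩| * |x.1 ⟨w₀, h₀⟩|) ∧
    ∃ Q : Set ℝ, Q.OrdConnected ∧ ∀ x : mixedSpace K, x ∈ fundamentalCone K ↔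
      x.1 ⟨w₁, h₁⟩ ≠ 0 ∧ x.1 ⟨w₀, h₀⟩ ≠ 0 ∧
        Real.log (|x.1 ⟨w₁, h₁⟩|) - Real.log (|x.1 ⟨w₀, h₀⟩|) ∈ Q := by
  classical
  have huniv : (Finset.univ : Finset (InfinitePlace K)) = {w₁, w₀} := by
    ext w
    simpa using hall w
  have hN (x : mixedSpace K) : mixedEmbedding.norm x = |x.1 ⟨w₁, h₁⟩| * |x.1 ⟨w₀, h₀⟩| := by
    rw [mixedEmbedding.norm_apply, huniv, Finset.prod_pair hne, normAtPlace_apply_of_isReal h₁,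
      normAtPlace_apply_of_isReal h₀, h₁.mult_eq_one, h₀.mult_eq_one]
    simp
  refine ⟨hN, ?_⟩
  let B := (basisUnitLattice K).ofZLatticeBasis ℝ (unitLattice K)
  let e : logSpace K := fun _ ↦ 1
  refine ⟨{t | ∀ i, (t * 2⁻¹) * B.repr e i ∈ Set.Ico 0 1}, ⟨?_⟩, fun x ↦ ?_⟩
  · intro s hs t ht u hu i
    have h1 := hs i
    have h2 := ht i
    rw [Set.mem_Ico] at *
    rcases le_total 0 (B.repr e i) with h | h
    · constructor <;> nlinarith [mul_le_mul_of_nonneg_right hu.1 h,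
        mul_le_mul_of_nonneg_right hu.2 h]
    · constructor <;> nlinarith [mul_le_mul_of_nonpos_right hu.1 h,
        mul_le_mul_of_nonpos_right hu.2 h]
  · simp only [fundamentalCone, Set.mem_sdiff, Set.mem_preimage, ZSpan.mem_fundamentalDomain,
      Set.mem_ofPred_eq, hN, mul_eq_zero, abs_eq_zero, not_or]
    rw [and_comm, ← and_assoc (a := _ ≠ _)]
    refine and_congr_right fun ⟨hx1, hx0⟩ ↦ ?_
    have hlog : logMap x =
        ((Real.log |x.1 ⟨w₁, h₁⟩| - Real.log |x.1 ⟨w₀, h₀⟩|) * 2⁻¹) • e := by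
      ext w
      obtain ⟨w, hw⟩ := w
      obtain rfl := (hall w).resolve_right hw
      simp only [logMap_apply, hN, Pi.smul_apply, e, h₁.mult_eq_one, hdeg,
        normAtPlace_apply_of_isReal h₁, Real.norm_eq_abs]
      rw [Real.log_mul (by simpa) (by simpa)]
      simp
      ring
    refine forall_congr' fun i ↦ ?_
    rw [hlog, map_smul, Finsupp.smul_apply, smul_eq_mul]

lemma hasDoublingCount_normLeOne (hdeg : finrank ℚ K = 2)
    (b : Module.Basis (Fin 2) ℝ (mixedSpace K)) :
    HasDoublingCount (b 0) (b 1) (normLeOne K) := by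
  classical
  have hc := card_add_two_mul_card_eq_rank K
  have hc' := card_eq_nrRealPlaces_add_nrComplexPlaces K
  rw [hdeg] at hc
  rcases Nat.eq_zero_or_pos (nrComplexPlaces K) with h | h
  swap
  · have : Subsingleton (InfinitePlace K) := Fintype.card_le_one_iff_subsingleton.1 (by omega)
    exact hasDoublingCount_normLeOne_of_subsingleton K b
  have hreal (w : InfinitePlace K) : IsReal w := by
    rw [← not_isComplex_iff_isReal]
    intro hw
    rw [nrComplexPlaces, Fintype.card_eq_zero_iff] at h
    exact h.false ⟨w, hw⟩
  obtain ⟨w₁, hne, hall⟩ : ∃ w₁ : InfinitePlace K, w₁ ≠ w₀ ∧ ∀ w, w = w₁ ∨ w = w₀ := by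
    have h2 : Fintype.card (InfinitePlace K) = 2 := by omega
    obtain ⟨w₁, hw₁⟩ := Fintype.exists_ne_of_one_lt_card (by omega) (w₀ : InfinitePlace K)
    refine ⟨w₁, hw₁, fun w ↦ ?_⟩
    have : ({w₁, w₀} : Finset (InfinitePlace K)) = Finset.univ := by
      rw [← Finset.card_eq_iff_eq_univ, Finset.card_pair hw₁, h2]
    have hw := Finset.mem_univ w
    rw [← this] at hw
    simpa using hw
  obtain ⟨hN, Q, hQ, hcone⟩ :=
    exists_ordConnected_mem_fundamentalCone_iff K hdeg (hreal w₀) (hreal w₁) hne hall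
  obtain ⟨R, hR⟩ := (isBounded_normLeOne K).exists_norm_le
  let l (w : InfinitePlace K) : mixedSpace K →ₗ[ℝ] ℝ :=
    (LinearMap.proj ⟨w, hreal w⟩).comp (LinearMap.fst ℝ _ _)
  let L (σ τ : ℝ) : mixedSpace K →ₗ[ℝ] ℝ × ℝ := (σ • l w₁).prod (τ • l w₀)
  let D (σ τ : ℝ) : Set (mixedSpace K) :=
    L σ τ ⁻¹' {p | 0 < p.1 ∧ 0 < p.2 ∧ Real.log p.1 - Real.log p.2 ∈ Q} ∩ Metric.closedBall 0 R
  let F (σ τ : ℝ) : Set (mixedSpace K) :=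
    D σ τ ∩ L σ τ ⁻¹' {p | 0 < p.1 ∧ 0 < p.2 ∧ 1 < p.1 * p.2}
  have hDF (σ τ : ℝ) : HasDoublingCount (b 0) (b 1) (D σ τ \ F σ τ) := by
    have hD : Convex ℝ (D σ τ) :=
      ((convex_log_sub_log_mem hQ).linear_preimage (L σ τ)).inter (convex_closedBall 0 R)
    have hDb : Bornology.IsBounded (D σ τ) :=
      Metric.isBounded_closedBall.subset Set.inter_subset_right
    have hF : Convex ℝ (F σ τ) := hD.inter (convex_one_lt_mul.linear_preimage (L σ τ))
    exact (hD.hasDoublingCount b hDb).diff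
      (hF.hasDoublingCount b (hDb.subset Set.inter_subset_left)) Set.inter_subset_left
  have hmem (σ τ : ℝ) (hσ : |σ| = 1) (hτ : |τ| = 1) (x : mixedSpace K) : x ∈ D σ τ \ F σ τ ↔
      (0 < σ * l w₁ x ∧ 0 < τ * l w₀ x) ∧ x ∈ normLeOne K := by
    have e1 : mixedEmbedding.norm x = |σ * l w₁ x| * |τ * l w₀ x| := by
      rw [hN, abs_mul, abs_mul, hσ, hτ, one_mul, one_mul]
      rfl
    have e2 : x ∈ fundamentalCone K ↔ l w₁ x ≠ 0 ∧ l w₀ x ≠ 0 ∧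
        Real.log |σ * l w₁ x| - Real.log |τ * l w₀ x| ∈ Q := by
      rw [hcone, abs_mul, abs_mul, hσ, hτ, one_mul, one_mul]
      rfl
    have hmul : (∀ y, L σ τ y = (σ * l w₁ y, τ * l w₀ y)) := fun y ↦ rfl
    simp only [D, F, Set.mem_sdiff, Set.mem_inter_iff, Set.mem_preimage, Set.mem_ofPred_eq, hmul,
      mem_closedBall_zero_iff]
    constructor
    · rintro ⟨⟨⟨h1, h0, hq⟩, hr⟩, h2⟩
      refine ⟨⟨h1, h0⟩, mem_normLeOne.2 ⟨e2.2 ⟨right_ne_zero_of_mul h1.ne',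
        right_ne_zero_of_mul h0.ne', ?_⟩, ?_⟩⟩
      · rwa [abs_of_pos h1, abs_of_pos h0]
      · rw [e1, abs_of_pos h1, abs_of_pos h0]
        by_contra! h3
        exact h2 ⟨⟨⟨h1, h0, hq⟩, hr⟩, h1, h0, h3⟩
    · rintro ⟨⟨h1, h0⟩, hx⟩
      obtain ⟨hx1, hx2⟩ := mem_normLeOne.1 hx
      rw [e1] at hx2
      have hx3 := (e2.1 hx1).2.2
      rw [abs_of_pos h1, abs_of_pos h0] at hx2 hx3
      exact ⟨⟨⟨h1, h0, hx3⟩, hR x hx⟩, fun h ↦ h.2.2.2.not_ge hx2⟩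
  have hunion : normLeOne K = ((D 1 1 \ F 1 1) ∪ (D 1 (-1) \ F 1 (-1))) ∪
      ((D (-1) 1 \ F (-1) 1) ∪ (D (-1) (-1) \ F (-1) (-1))) := by
    ext x
    simp only [Set.mem_union, hmem 1 1 (by simp) (by simp), hmem 1 (-1) (by simp) (by simp),
      hmem (-1) 1 (by simp) (by simp), hmem (-1) (-1) (by simp) (by simp)]
    rw [← or_and_right, ← or_and_right, ← or_and_right, iff_and_self]
    intro hx
    obtain ⟨h1, h0, _⟩ := (hcone x).1 (mem_normLeOne.1 hx).1
    change l w₁ x ≠ 0 at h1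
    change l w₀ x ≠ 0 at h0
    rcases h1.lt_or_gt with h1 | h1 <;> rcases h0.lt_or_gt with h0 | h0 <;> simp [h1, h0]
  rw [hunion]
  have hdisj (σ τ σ' τ' : ℝ) (hσ : |σ| = 1) (hτ : |τ| = 1) (hσ' : |σ'| = 1) (hτ' : |τ'| = 1)
      (h : σ' = -σ ∨ τ' = -τ) : Disjoint (D σ τ \ F σ τ) (D σ' τ' \ F σ' τ') := by
    refine Set.disjoint_left.2 fun x hx hx' ↦ ?_
    obtain ⟨⟨h1, h2⟩, -⟩ := (hmem σ τ hσ hτ x).1 hx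
    obtain ⟨⟨h3, h4⟩, -⟩ := (hmem σ' τ' hσ' hτ' x).1 hx'
    rcases h with rfl | rfl <;> linarith
  have hone : |(1 : ℝ)| = 1 := by simp
  have hneg : |(-1 : ℝ)| = 1 := by simp
  refine ((hDF _ _).union (hDF _ _) (hdisj _ _ _ _ hone hone hone hneg (by simp))).union
    ((hDF _ _).union (hDF _ _) (hdisj _ _ _ _ hneg hone hneg hneg (by simp))) ?_
  rw [Set.disjoint_union_left, Set.disjoint_union_right, Set.disjoint_union_right]
  exact ⟨⟨hdisj _ _ _ _ hone hone hneg hone (by simp), hdisj _ _ _ _ hone hone hneg hneg (by simp)⟩,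
    hdisj _ _ _ _ hone hneg hneg hone (by simp), hdisj _ _ _ _ hone hneg hneg hneg (by simp)⟩

end NumberField.mixedEmbedding.fundamentalCone

namespace NumberField.Ideal

open InfinitePlace mixedEmbedding fundamentalCone Submodule NumberField.Units Module
open _root_.Ideal

variable (K : Type*) [Field K] [NumberField K]

lemma card_norm_le_and_mk_eq {C : ClassGroup (𝓞 K)} {J : (Ideal (𝓞 K))⁰} (s : ℝ)
    (hJ : ClassGroup.mk0 J = C⁻¹) :
    Nat.card {I : (Ideal (𝓞 K))⁰ // absNorm (I : Ideal (𝓞 K)) ≤ s ∧ ClassGroup.mk0 I = C}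
      = Nat.card {I : (Ideal (𝓞 K))⁰ // (J : Ideal (𝓞 K)) ∣ I ∧ IsPrincipal (I : Ideal (𝓞 K)) ∧
        absNorm (I : Ideal (𝓞 K)) ≤ s * absNorm (J : Ideal (𝓞 K))} := by
  simp_rw [← nonZeroDivisors_dvd_iff_dvd_coe]
  refine Nat.card_congr ?_
  refine ((Equiv.dvd J).subtypeEquiv fun I ↦ ?_).trans
    (Equiv.subtypeSubtypeEquivSubtypeInter (fun I : (Ideal (𝓞 K))⁰ ↦ J ∣ I) _)
  rw [← ClassGroup.mk0_eq_one_iff (SetLike.coe_mem _)]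
  simp_rw [Equiv.dvd_apply, Submonoid.coe_mul, ← Submonoid.mul_def, _root_.map_mul, hJ,
    inv_mul_eq_one, Nat.cast_mul, mul_comm s, eq_comm, and_comm, and_congr_left_iff]
  exact fun _ ↦
    (mul_le_mul_iff_of_pos_left (Nat.cast_pos.mpr (absNorm_pos_of_nonZeroDivisors J))).symm

lemma exists_basis_card_idealSet (hdeg : finrank ℚ K = 2) (J : (Ideal (𝓞 K))⁰) :
    ∃ b : Basis (Fin 2) ℝ (mixedSpace K), ∀ T : ℝ, 0 < T →
      Nat.card {a : idealSet K J // mixedEmbedding.norm (a : mixedSpace K) ≤ T ^ 2} =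
      {x : ℤ × ℤ | T⁻¹ • ((x.1 : ℝ) • b 0 + (x.2 : ℝ) • b 1) ∈ normLeOne K}.ncard := by
  classical
  let I := FractionalIdeal.mk0 K J
  have hcard : Fintype.card (Free.ChooseBasisIndex ℤ I) = 2 := by
    rw [← finrank_eq_card_chooseBasisIndex, fractionalIdeal_rank, RingOfIntegers.rank, hdeg]
  let b := (fractionalIdealLatticeBasis K I).reindex (Fintype.equivFinOfCardEq hcard)
  refine ⟨b, fun T hT ↦ ?_⟩
  have hspan (y : mixedSpace K) : (∃ x : 𝓞 K, x ∈ (J : Set (𝓞 K)) ∧ mixedEmbedding K (x : K) = y) ↔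
      ∃ x : ℤ × ℤ, (x.1 : ℝ) • b 0 + (x.2 : ℝ) • b 1 = y := by
    have h := mem_span_fractionalIdealLatticeBasis K I (x := y)
    rw [← Basis.range_reindex _ (Fintype.equivFinOfCardEq hcard), mem_span_range_iff_exists_fun] at h
    change _ ↔ _ at h
    have h1 : y ∈ mixedEmbedding K '' I ↔
        ∃ x : 𝓞 K, x ∈ (J : Set (𝓞 K)) ∧ mixedEmbedding K (x : K) = y := by
      simp [I, FractionalIdeal.mem_coeIdeal]
    rw [← h1]
    refine Iff.trans (Iff.symm h) ⟨?_, ?_⟩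
    · rintro ⟨c, hc⟩
      refine ⟨(c 0, c 1), ?_⟩
      rw [← hc, Fin.sum_univ_two, Int.cast_smul_eq_zsmul, Int.cast_smul_eq_zsmul]
    · rintro ⟨c, hc⟩
      refine ⟨![c.1, c.2], ?_⟩
      rw [← hc, Fin.sum_univ_two, Int.cast_smul_eq_zsmul, Int.cast_smul_eq_zsmul]
      rfl
  have hinj : Function.Injective fun x : ℤ × ℤ ↦ (x.1 : ℝ) • b 0 + (x.2 : ℝ) • b 1 := by
    intro x y hxy
    have h0 := congrArg (fun z ↦ b.repr z 0) hxy
    have h1 := congrArg (fun z ↦ b.repr z 1) hxy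
    simp at h0 h1
    exact Prod.ext h0 h1
  have hiff (y : mixedSpace K) : T⁻¹ • y ∈ normLeOne K ↔
      y ∈ fundamentalCone K ∧ mixedEmbedding.norm y ≤ T ^ 2 := by
    rw [mem_normLeOne, smul_mem_iff_mem (by positivity), mixedEmbedding.norm_smul, hdeg,
      abs_of_pos (by positivity), inv_pow, inv_mul_le_iff₀ (by positivity), mul_one]
  rw [← Set.ncard_image_of_injective _ hinj,
    Nat.card_congr (Equiv.subtypeSubtypeEquivSubtypeInter (fun a ↦ a ∈ idealSet K J)
      (fun a ↦ mixedEmbedding.norm a ≤ T ^ 2)), ← Nat.card_coe_set_eq]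
  refine Nat.card_congr (Equiv.subtypeEquivProp ?_)
  ext y
  simp only [Set.mem_image, Set.mem_ofPred_eq, hiff]
  have := hspan y
  constructor
  · rintro ⟨h1, h2⟩
    obtain ⟨x, hx⟩ := this.1 (mem_idealSet.1 h1).2
    exact ⟨x, ⟨hx ▸ (mem_idealSet.1 h1).1, hx ▸ h2⟩, hx⟩
  · rintro ⟨x, ⟨h1, h2⟩, rfl⟩
    exact ⟨mem_idealSet.2 ⟨h1, this.2 ⟨x, rfl⟩⟩, h2⟩

/-- Ideals of a quadratic field of bounded norm are equidistributed in ideal classes, with a power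
saving. -/
theorem exists_abs_card_norm_le_and_mk_eq_sub_le (hdeg : finrank ℚ K = 2) :
    ∃ κ : ℝ, ∀ C : ClassGroup (𝓞 K), ∃ B : ℝ, ∀ s : ℝ, 1 ≤ s →
      |(Nat.card {I : (Ideal (𝓞 K))⁰ //
        absNorm (I : Ideal (𝓞 K)) ≤ s ∧ ClassGroup.mk0 I = C} : ℝ) - κ * s| ≤ B * √s := by
  refine ⟨(2 ^ nrRealPlaces K * (2 * Real.pi) ^ nrComplexPlaces K * regulator K) /
    (torsionOrder K * √|(discr K : ℝ)|), fun C ↦ ?_⟩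
  have hlim := tendsto_norm_le_and_mk_eq_div_atTop K C
  set κ := (2 ^ nrRealPlaces K * (2 * Real.pi) ^ nrComplexPlaces K * regulator K) /
    (torsionOrder K * √|(discr K : ℝ)|)
  obtain ⟨J, hJ⟩ := ClassGroup.mk0_surjective C⁻¹
  obtain ⟨b, hb⟩ := exists_basis_card_idealSet K hdeg J
  obtain ⟨A, hA⟩ := hasDoublingCount_normLeOne K hdeg b
  set cnt : ℝ → ℕ := fun s ↦ Nat.card {I : (Ideal (𝓞 K))⁰ //
        absNorm (I : Ideal (𝓞 K)) ≤ s ∧ ClassGroup.mk0 I = C} with hcnt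
  set f : ℝ → ℝ := fun T ↦
    ({x : ℤ × ℤ | T⁻¹ • ((x.1 : ℝ) • b 0 + (x.2 : ℝ) • b 1) ∈ normLeOne K}.ncard : ℝ) with hf
  have hJ1 : (1 : ℝ) ≤ absNorm (J : Ideal (𝓞 K)) := by
    exact_mod_cast absNorm_pos_of_nonZeroDivisors J
  have hw : (0 : ℝ) < torsionOrder K := by exact_mod_cast torsionOrder_pos K
  set n : ℝ := ((absNorm (J : Ideal (𝓞 K)) : ℕ) : ℝ)
  have hfc (T : ℝ) (hT : 0 < T) : f T = cnt (T ^ 2 / n) * torsionOrder K := by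
    simp only [hf, hcnt, ← hb T hT, ← card_isPrincipal_dvd_norm_le]
    rw [card_norm_le_and_mk_eq K _ hJ, Nat.cast_mul, div_mul_cancel₀ _ (by positivity)]
  have hlim' : Tendsto (fun T ↦ f T / T ^ 2) atTop (𝓝 (κ * (torsionOrder K / n))) := by
    have : Tendsto (fun T : ℝ ↦ T ^ 2 / n) atTop atTop :=
      (tendsto_pow_atTop two_ne_zero).atTop_div_const (by positivity)
    refine ((hlim.comp this).mul_const (torsionOrder K / n)).congr' ?_
    filter_upwards [eventually_gt_atTop 0] with T hT
    rw [hfc T hT]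
    change (cnt (T ^ 2 / n) : ℝ) / (T ^ 2 / n) * (torsionOrder K / n) = _
    generalize cnt (T ^ 2 / n) = m
    field_simp
  refine ⟨A / 2 * √n / torsionOrder K, fun s hs ↦ ?_⟩
  have hT : 1 ≤ √(s * n) := by
    rw [Real.one_le_sqrt]
    exact one_le_mul_of_one_le_of_one_le hs hJ1
  have key := abs_sub_mul_sq_le_of_doubling (fun T hT ↦ (hA T hT).2) hlim' hT
  change |f _ - _| ≤ _ at key
  rw [hfc _ (by linarith), Real.sq_sqrt (by positivity), mul_div_cancel_right₀ _ (by positivity),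
    Real.sqrt_mul (by positivity)] at key
  rw [show κ * (torsionOrder K / n) * (s * n) = κ * s * torsionOrder K by field_simp, ← sub_mul,
    abs_mul, abs_of_pos hw, ← le_div_iff₀ hw] at key
  refine key.trans (le_of_eq ?_)
  ring

end NumberField.Ideal

section NormSeries

variable {X : Type*} {N : X → ℕ}

lemma sum_Icc_fiber_eq [DecidableEq X] {E : Type*} [AddCommMonoid E] (hN : ∀ x, 1 ≤ N x)
    (hfin : ∀ n, {x | N x ≤ n}.Finite) (a : X → E) (n : ℕ) :
    ∑ k ∈ Finset.Icc 1 n, ∑ x ∈ (hfin k).toFinset with N x = k, a x =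
      ∑ x ∈ (hfin n).toFinset, a x := by
  rw [← Finset.sum_fiberwise_of_maps_to (t := Finset.Icc 1 n) (g := N)
    (fun x hx ↦ Finset.mem_Icc.2 ⟨hN x, by simpa using hx⟩)]
  refine Finset.sum_congr rfl fun k hk ↦ Finset.sum_congr ?_ fun _ _ ↦ rfl
  ext x
  simp only [Finset.mem_filter, Set.Finite.mem_toFinset, Set.mem_ofPred_eq]
  rw [Finset.mem_Icc] at hk
  constructor
  · rintro ⟨h1, rfl⟩
    exact ⟨hk.2, rfl⟩
  · rintro ⟨h1, rfl⟩
    exact ⟨le_rfl, rfl⟩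

lemma coe_filter_fiber [DecidableEq X] (hfin : ∀ n, {x | N x ≤ n}.Finite) (k : ℕ) :
    (((hfin k).toFinset.filter (N · = k) : Finset X) : Set X) = N ⁻¹' {k} := by
  ext x
  simp only [Finset.coe_filter, Set.Finite.mem_toFinset, Set.mem_ofPred_eq, Set.mem_preimage,
    Set.mem_singleton_iff]
  exact ⟨fun h ↦ h.2, fun h ↦ ⟨h.le, h⟩⟩

lemma summable_rpow_neg_of_card_le (hN : ∀ x, 1 ≤ N x) (hfin : ∀ n, {x | N x ≤ n}.Finite) {A : ℝ}
    (hA : ∀ n : ℕ, ((hfin n).toFinset.card : ℝ) ≤ A * n) {s : ℝ} (hs : 1 < s) :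
    Summable fun x ↦ (N x : ℝ) ^ (-s) := by
  classical
  let f : ℕ → ℝ := fun k ↦ ∑ x ∈ (hfin k).toFinset with N x = k, 1
  have hL : LSeriesSummable (fun n ↦ (f n : ℂ)) (s : ℂ) := by
    refine LSeriesSummable_of_sum_norm_bigO_and_nonneg (r := 1) ?_ (fun n ↦ by positivity)
      zero_le_one (by simpa)
    simp only [f, sum_Icc_fiber_eq hN hfin]
    refine Asymptotics.IsBigO.of_bound |A| (Eventually.of_forall fun n ↦ ?_)
    rw [Finset.sum_const, nsmul_one, Real.rpow_one, Real.norm_natCast, Real.norm_natCast]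
    exact (hA n).trans (by gcongr; exact le_abs_self A)
  rw [← (Equiv.sigmaFiberEquiv N).summable_iff,
    summable_sigma_of_nonneg fun x ↦ by
      rw [Function.comp_apply]
      positivity]
  have hfib (k : ℕ) : Finite {x // N x = k} := (hfin k).subset fun x hx ↦ le_of_eq hx
  refine ⟨fun k ↦ Summable.of_finite, ?_⟩
  refine hL.norm.congr fun k ↦ ?_
  have e : (∑' x : {x // N x = k}, ((fun x ↦ (N x : ℝ) ^ (-s)) ∘ (Equiv.sigmaFiberEquiv N)) ⟨k, x⟩) =
      ∑' x : (N ⁻¹' {k} : Set X), (k : ℝ) ^ (-s) := by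
    refine tsum_congr fun x ↦ ?_
    simp [Equiv.sigmaFiberEquiv, x.2]
  rw [e, ← coe_filter_fiber hfin k, Finset.tsum_subtype' _ (fun _ : X ↦ (k : ℝ) ^ (-s)),
    Finset.sum_const, nsmul_eq_mul]
  rcases Nat.eq_zero_or_pos k with rfl | hk
  · have : (hfin 0).toFinset.filter (N · = 0) = ∅ := by
      ext x
      have := hN x
      simp only [Finset.mem_filter, Finset.notMem_empty, iff_false]
      omega
    rw [this]
    simp
  · rw [LSeries.term_of_ne_zero hk.ne', norm_div, Complex.norm_natCast_cpow_of_pos hk]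
    simp only [f, Finset.sum_const, nsmul_one, Complex.ofReal_re]
    rw [Real.rpow_neg (by positivity), div_eq_mul_inv]
    simp

lemma norm_tsum_mul_rpow_neg_le (hN : ∀ x, 1 ≤ N x) (hfin : ∀ n, {x | N x ≤ n}.Finite) {a : X → ℂ}
    {s : ℝ} (hs : 1 < s) (ha : Summable fun x ↦ ‖a x‖ * (N x : ℝ) ^ (-s)) {B : ℝ}
    (hB : ∀ n : ℕ, ‖∑ x ∈ (hfin n).toFinset, a x‖ ≤ B * √n) :
    ‖∑' x, a x * ((N x : ℝ) ^ (-s) : ℝ)‖ ≤ 2 * B := by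
  classical
  have hB0 : 0 ≤ B := by simpa using (norm_nonneg _).trans (hB 1)
  let f : ℕ → ℂ := fun k ↦ ∑ x ∈ (hfin k).toFinset with N x = k, a x
  have hsum : Summable fun x ↦ a x * ((N x : ℝ) ^ (-s) : ℝ) := by
    refine Summable.of_norm (ha.congr fun x ↦ ?_)
    rw [norm_mul, Complex.norm_real, Real.norm_of_nonneg (by positivity)]
  have hfib (k : ℕ) : (∑' x : (N ⁻¹' {k} : Set X), a x * ((N x : ℝ) ^ (-s) : ℝ)) =
      LSeries.term f s k := by
    rw [← coe_filter_fiber hfin k,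
      Finset.tsum_subtype' _ (fun x ↦ a x * (((N x : ℝ) ^ (-s) : ℝ) : ℂ))]
    rcases Nat.eq_zero_or_pos k with rfl | hk
    · rw [LSeries.term_zero]
      refine Finset.sum_eq_zero fun x hx ↦ ?_
      have := hN x
      rw [Finset.mem_filter] at hx
      omega
    · rw [LSeries.term_of_ne_zero hk.ne', Finset.sum_div]
      refine Finset.sum_congr rfl fun x hx ↦ ?_
      rw [(Finset.mem_filter.1 hx).2, Real.rpow_neg (by positivity), Complex.ofReal_inv,
        Complex.ofReal_cpow (by positivity), div_eq_mul_inv]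
      simp
  have hL := hsum.hasSum.tsum_fiberwise N
  simp only [hfib] at hL
  have hLS : LSeries f s = ∑' x, a x * ((N x : ℝ) ^ (-s) : ℝ) := hL.tsum_eq
  have hpart (n : ℕ) : ‖∑ k ∈ Finset.Icc 1 n, f k‖ ≤ B * √n := by
    simp only [f, sum_Icc_fiber_eq hN hfin]
    exact hB n
  rw [← hLS, LSeries_eq_mul_integral f (r := 1 / 2) (by norm_num)
    (by rw [Complex.ofReal_re]; linarith) hL.summable
    (Asymptotics.IsBigO.of_bound B (Eventually.of_forall fun n ↦ by
      rw [← Real.sqrt_eq_rpow, Real.norm_of_nonneg (Real.sqrt_nonneg _)]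
      exact hpart n)), norm_mul, Complex.norm_real, Real.norm_of_nonneg (by linarith)]
  have hintegral : ‖∫ t in Set.Ioi (1 : ℝ), (∑ k ∈ Finset.Icc 1 ⌊t⌋₊, f k) * (t : ℂ) ^ (-((s : ℂ) + 1))‖ ≤
      ∫ t in Set.Ioi (1 : ℝ), B * t ^ (-s - 1 / 2) := by
    refine MeasureTheory.norm_integral_le_of_norm_le
      ((integrableOn_Ioi_rpow_of_lt (by linarith) one_pos).const_mul B) ?_
    refine (MeasureTheory.ae_restrict_mem measurableSet_Ioi).mono fun t ht ↦ ?_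
    have ht0 : 0 < t := one_pos.trans ht
    rw [norm_mul, Complex.norm_cpow_eq_rpow_re_of_pos ht0,
      show -s - 1 / 2 = 1 / 2 + (-((s : ℂ) + 1)).re by simp; ring, Real.rpow_add ht0, ← mul_assoc,
      ← Real.sqrt_eq_rpow]
    gcongr
    refine (hpart _).trans ?_
    gcongr
    exact Nat.floor_le ht0.le
  rw [MeasureTheory.integral_const_mul, integral_Ioi_rpow_of_lt (by linarith) one_pos,
    Real.one_rpow] at hintegral
  calc _ ≤ s * (B * (-1 / (-s - 1 / 2 + 1))) := by gcongr
    _ = B * (s / (s - 1 / 2)) := by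
      rw [show -s - 1 / 2 + 1 = -(s - 1 / 2) by ring, neg_div_neg_eq]
      ring
    _ ≤ B * 2 := by
      gcongr
      rw [div_le_iff₀ (by linarith)]
      linarith
    _ = 2 * B := mul_comm _ _

end NormSeries

namespace NumberField.Ideal

open Module
open _root_.Ideal

variable (K : Type*) [Field K] [NumberField K]

lemma card_norm_le_and_mk_eq_eq_filter [DecidableEq (ClassGroup (𝓞 K))] (n : ℕ)
    (C : ClassGroup (𝓞 K)) :
    Nat.card {I : (Ideal (𝓞 K))⁰ // (absNorm (I : Ideal (𝓞 K)) : ℝ) ≤ n ∧ ClassGroup.mk0 I = C} =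
      ((finite_setOfPred_absNorm_le₀ (S := 𝓞 K) n).toFinset.filter
        (ClassGroup.mk0 · = C)).card := by
  refine Nat.subtype_card _ fun I ↦ ?_
  simp

lemma finset_absNorm_le_zero :
    (finite_setOfPred_absNorm_le₀ (S := 𝓞 K) 0).toFinset = ∅ := by
  ext I
  have := absNorm_pos_of_nonZeroDivisors I
  simp only [Set.Finite.mem_toFinset, Set.mem_ofPred_eq, Finset.notMem_empty, iff_false]
  lia

lemma exists_card_absNorm_le_le (hdeg : finrank ℚ K = 2) : ∃ A : ℝ, ∀ n : ℕ,
    ((finite_setOfPred_absNorm_le₀ (S := 𝓞 K) n).toFinset.card : ℝ) ≤ A * n := by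
  classical
  obtain ⟨κ, hκ⟩ := exists_abs_card_norm_le_and_mk_eq_sub_le K hdeg
  choose B hB using hκ
  refine ⟨∑ C, (κ + |B C|), fun n ↦ ?_⟩
  rcases Nat.eq_zero_or_pos n with rfl | hn
  · rw [finset_absNorm_le_zero]
    simp
  rw [Finset.card_eq_sum_card_fiberwise (f := ClassGroup.mk0) (t := Finset.univ)
    (fun _ _ ↦ Finset.mem_univ _), Nat.cast_sum, Finset.sum_mul]
  refine Finset.sum_le_sum fun C _ ↦ ?_
  have hn1 : (1 : ℝ) ≤ n := by exact_mod_cast hn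
  have h := (abs_le.1 (hB C n hn1)).2
  rw [card_norm_le_and_mk_eq_eq_filter] at h
  have h2 : B C * √n ≤ |B C| * n := by
    refine mul_le_mul (le_abs_self _) ?_ (Real.sqrt_nonneg _) (abs_nonneg _)
    exact Real.sqrt_le_iff.2 ⟨by positivity, by nlinarith⟩
  linarith

lemma exists_norm_sum_absNorm_le_le (hdeg : finrank ℚ K = 2) (η : ClassGroup (𝓞 K) →* ℂ)
    (hη : η ≠ 1) : ∃ B : ℝ, ∀ n : ℕ,
    ‖∑ I ∈ (finite_setOfPred_absNorm_le₀ (S := 𝓞 K) n).toFinset, η (ClassGroup.mk0 I)‖ ≤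
      B * √n := by
  classical
  obtain ⟨κ, hκ⟩ := exists_abs_card_norm_le_and_mk_eq_sub_le K hdeg
  choose B hB using hκ
  refine ⟨∑ C, B C, fun n ↦ ?_⟩
  rcases Nat.eq_zero_or_pos n with rfl | hn
  · rw [finset_absNorm_le_zero]
    simp
  have hn1 : (1 : ℝ) ≤ n := by exact_mod_cast hn
  have e : ∑ I ∈ (finite_setOfPred_absNorm_le₀ (S := 𝓞 K) n).toFinset, η (ClassGroup.mk0 I) =
      ∑ C, η C * ((((finite_setOfPred_absNorm_le₀ (S := 𝓞 K) n).toFinset.filter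
        (ClassGroup.mk0 · = C)).card - κ * n : ℝ) : ℂ) := by
    push_cast
    simp_rw [mul_sub]
    rw [Finset.sum_sub_distrib, ← Finset.sum_mul, sum_hom_units_eq_zero η hη, zero_mul, sub_zero,
      ← Finset.sum_fiberwise_of_maps_to (g := ClassGroup.mk0) (t := Finset.univ)
        (fun _ _ ↦ Finset.mem_univ _)]
    refine Finset.sum_congr rfl fun C _ ↦ ?_
    rw [Finset.sum_congr rfl fun I hI ↦ by rw [(Finset.mem_filter.1 hI).2], Finset.sum_const,
      nsmul_eq_mul, mul_comm]
  rw [e, Finset.sum_mul]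
  refine norm_sum_le_of_le _ fun C _ ↦ ?_
  have h := hB C n hn1
  rw [card_norm_le_and_mk_eq_eq_filter] at h
  rw [norm_mul, (η.isOfFinOrder (isOfFinOrder_of_finite C)).norm_eq_one, one_mul,
    Complex.norm_real]
  exact h

lemma summable_absNorm_rpow_neg (hdeg : finrank ℚ K = 2) {s : ℝ} (hs : 1 < s) :
    Summable fun I : (Ideal (𝓞 K))⁰ ↦ (absNorm (I : Ideal (𝓞 K)) : ℝ) ^ (-s) := by
  obtain ⟨A, hA⟩ := exists_card_absNorm_le_le K hdeg
  exact summable_rpow_neg_of_card_le (N := fun I : (Ideal (𝓞 K))⁰ ↦ absNorm (I : Ideal (𝓞 K)))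
    absNorm_pos_of_nonZeroDivisors finite_setOfPred_absNorm_le₀ hA hs

/-- The `L`-function of a nontrivial class group character of a quadratic field is bounded near
`s = 1`. -/
theorem exists_norm_tsum_char_mul_rpow_neg_le (hdeg : finrank ℚ K = 2)
    (η : ClassGroup (𝓞 K) →* ℂ) (hη : η ≠ 1) : ∃ B : ℝ, ∀ s : ℝ, 1 < s →
    ‖∑' I : (Ideal (𝓞 K))⁰,
      η (ClassGroup.mk0 I) * ((absNorm (I : Ideal (𝓞 K)) : ℝ) ^ (-s) : ℝ)‖ ≤ B := by
  obtain ⟨B, hB⟩ := exists_norm_sum_absNorm_le_le K hdeg η hη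
  refine ⟨2 * B, fun s hs ↦ ?_⟩
  refine norm_tsum_mul_rpow_neg_le (N := fun I : (Ideal (𝓞 K))⁰ ↦ absNorm (I : Ideal (𝓞 K)))
    absNorm_pos_of_nonZeroDivisors finite_setOfPred_absNorm_le₀ hs ?_ hB
  refine (summable_absNorm_rpow_neg K hdeg hs).congr fun I ↦ ?_
  rw [(η.isOfFinOrder (isOfFinOrder_of_finite _)).norm_eq_one, one_mul]

end NumberField.Ideal

open ArithmeticFunction.vonMangoldt in
/-- The sum of the reciprocals of the primes in an invertible residue class diverges. -/
theorem not_summable_one_div_primes_in_residueClass {q : ℕ} [NeZero q] {a : ZMod q}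
    (ha : IsUnit a) :
    ¬ Summable fun n : ℕ ↦ if n.Prime ∧ (n : ZMod q) = a then (1 : ℝ) / n else 0 := by
  intro H
  obtain ⟨C, hC⟩ := LSeries_residueClass_lower_bound ha
  have hbound (x : ℝ) (hx : x ∈ Set.Ioc 1 2) (n : ℕ) :
      ‖(x - 1) * (residueClass a n / (n : ℝ) ^ x)‖ ≤
        (if n.Prime then 0 else residueClass a n) / n +
          if n.Prime ∧ (n : ZMod q) = a then (1 : ℝ) / n else 0 := by
    have hx1 : 0 < x - 1 := by linarith [hx.1]
    have hr := residueClass_nonneg a n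
    rw [Real.norm_of_nonneg (by positivity)]
    rcases Nat.eq_zero_or_pos n with rfl | hn
    · simp
    have hn0 : (0 : ℝ) < n := by exact_mod_cast hn
    have hn1 : (1 : ℝ) ≤ n := by exact_mod_cast hn
    by_cases hp : n.Prime
    · by_cases hna : (n : ZMod q) = a
      · have hrc : residueClass a n = Real.log n := by
          rw [residueClass, Set.indicator_of_mem (by exact hna),
            ArithmeticFunction.vonMangoldt_apply_prime hp]
        simp only [hp, hna, if_true, zero_div, zero_add, and_self, hrc]
        have h1 : (x - 1) * Real.log n ≤ (n : ℝ) ^ (x - 1) := by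
          rw [Real.rpow_def_of_pos hn0, mul_comm]
          linarith [Real.add_one_le_exp (Real.log n * (x - 1))]
        rw [Real.rpow_sub_one hn0.ne', le_div_iff₀ hn0] at h1
        rw [← mul_div_assoc, div_le_div_iff₀ (by positivity) hn0]
        linarith
      · simp [hp, hna]
    · simp only [hp, if_false, false_and, add_zero]
      have h1 : (n : ℝ) ≤ (n : ℝ) ^ x := by
        conv_lhs => rw [← Real.rpow_one n]
        exact Real.rpow_le_rpow_of_exponent_le hn1 hx.1.le
      calc (x - 1) * (residueClass a n / (n : ℝ) ^ x)
          ≤ 1 * (residueClass a n / n) := by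
            gcongr
            linarith [hx.2]
        _ = residueClass a n / n := one_mul _
  have hmem : ∀ᶠ x : ℝ in 𝓝[>] 1, x ∈ Set.Ioc (1 : ℝ) 2 :=
    Ioc_mem_nhdsGT one_lt_two
  have hlim : Tendsto (fun x : ℝ ↦ ∑' n : ℕ, (x - 1) * (residueClass a n / (n : ℝ) ^ x)) (𝓝[>] 1)
      (𝓝 (∑' _ : ℕ, 0)) := by
    refine tendsto_tsum_of_dominated_convergence ((summable_residueClass_non_primes_div a).add H)
      (fun n ↦ ?_) (hmem.mono hbound)
    rcases Nat.eq_zero_or_pos n with rfl | hn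
    · simp
    have hn0 : (n : ℝ) ≠ 0 := by exact_mod_cast hn.ne'
    have hc : ContinuousAt (fun x : ℝ ↦ (x - 1) * (residueClass a n / (n : ℝ) ^ x)) 1 := by
      have : (n : ℝ) ^ (1 : ℝ) ≠ 0 := by rwa [Real.rpow_one]
      have h2 : ContinuousAt (fun x : ℝ ↦ (n : ℝ) ^ x) 1 :=
        Real.continuousAt_const_rpow hn0
      exact (continuousAt_id.sub continuousAt_const).mul (continuousAt_const.div h2 this)
    have := hc.tendsto
    simp only [sub_self, zero_mul] at this
    exact tendsto_nhdsWithin_of_tendsto_nhds this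
  rw [tsum_zero] at hlim
  have hlow : Tendsto (fun x : ℝ ↦ (q.totient : ℝ)⁻¹ - C * (x - 1)) (𝓝[>] 1)
      (𝓝 ((q.totient : ℝ)⁻¹ - C * (1 - 1))) := by
    refine tendsto_nhdsWithin_of_tendsto_nhds (ContinuousAt.tendsto (by fun_prop))
  have hle := le_of_tendsto_of_tendsto hlow hlim <| hmem.mono fun x hx ↦ by
    have hx1 : 0 < x - 1 := by linarith [hx.1]
    beta_reduce
    rw [tsum_mul_left]
    calc (q.totient : ℝ)⁻¹ - C * (x - 1) = (x - 1) * ((q.totient : ℝ)⁻¹ / (x - 1) - C) := by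
          field_simp
      _ ≤ _ := by
          gcongr
          exact hC hx
  have hq : 0 < (q.totient : ℝ)⁻¹ := inv_pos.mpr (mod_cast q.totient.pos_of_neZero)
  rw [sub_self, mul_zero, sub_zero] at hle
  exact hq.not_ge hle

/-- If `D` is not a square, then `x ^ 2 = D * y ^ 2` only has the trivial solution. -/
lemma Int.eq_zero_of_sq_eq_mul_sq {D x y : ℤ} (hD : ¬ IsSquare D) (h : x ^ 2 = D * y ^ 2) :
    x = 0 ∧ y = 0 := by
  by_cases hy : y = 0
  · subst hy
    simpa using h
  · obtain ⟨k, rfl⟩ : y ∣ x := (Int.pow_dvd_pow_iff two_ne_zero).mp ⟨D, by linarith⟩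
    refine absurd ⟨k, ?_⟩ hD
    have : y ^ 2 ≠ 0 := pow_ne_zero _ hy
    apply mul_right_cancel₀ this
    linarith [mul_pow y k 2]

lemma Fin.sq_sub_le_of_sqrt {n : ℕ} (i j : Fin (Nat.sqrt n + 1)) :
    ((i : ℕ) - (j : ℕ) : ℤ) ^ 2 ≤ n := by
  have h1 : |((i : ℕ) - (j : ℕ) : ℤ)| ≤ |(Nat.sqrt n : ℤ)| := by
    rw [abs_of_nonneg (a := (Nat.sqrt n : ℤ)) (by positivity), abs_le]
    constructor <;> have := i.2 <;> have := j.2 <;> omega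
  have h2 : ((Nat.sqrt n : ℕ) : ℤ) ^ 2 ≤ n := by exact_mod_cast Nat.sqrt_le' n
  exact (sq_le_sq.mpr h1).trans h2

/-- A small solution of the two congruences cutting out a lattice of index `p * m`. -/
lemma exists_small_solution {p m : ℕ} [NeZero p] [NeZero m] (ρ : ℤ) :
    ∃ x y z : ℤ, (x ≠ 0 ∨ y ≠ 0 ∨ z ≠ 0) ∧ x ^ 2 ≤ (p * m : ℕ) ∧ y ^ 2 ≤ p ∧ z ^ 2 ≤ m ∧
      (p : ℤ) ∣ x - ρ * y ∧ (m : ℤ) ∣ x - z := by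
  let f : Fin (Nat.sqrt (p * m) + 1) × Fin (Nat.sqrt p + 1) × Fin (Nat.sqrt m + 1) →
      ZMod p × ZMod m := fun t ↦
    (((((t.1 : ℕ) : ℤ) - ρ * ((t.2.1 : ℕ) : ℤ) : ℤ) : ZMod p),
      ((((t.1 : ℕ) : ℤ) - ((t.2.2 : ℕ) : ℤ) : ℤ) : ZMod m))
  have hcard : Fintype.card (ZMod p × ZMod m) <
      Fintype.card (Fin (Nat.sqrt (p * m) + 1) × Fin (Nat.sqrt p + 1) × Fin (Nat.sqrt m + 1)) := by
    simp only [Fintype.card_prod, ZMod.card, Fintype.card_fin]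
    have h1 := Nat.lt_succ_sqrt' (p * m)
    have h2 := Nat.lt_succ_sqrt' p
    have h3 := Nat.lt_succ_sqrt' m
    simp only [Nat.succ_eq_add_one] at h1 h2 h3
    refine lt_of_pow_lt_pow_left₀ 2 (by positivity) ?_
    calc (p * m) ^ 2 = (p * m) * (p * m) := sq _
      _ < (Nat.sqrt (p * m) + 1) ^ 2 * ((Nat.sqrt p + 1) ^ 2 * (Nat.sqrt m + 1) ^ 2) :=
        Nat.mul_lt_mul'' h1 (Nat.mul_lt_mul'' h2 h3)
      _ = _ := by ring
  obtain ⟨⟨a, b, c⟩, ⟨a', b', c'⟩, hne, heq⟩ := Fintype.exists_ne_map_eq_of_card_lt f hcard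
  simp only [f, Prod.mk.injEq] at heq
  refine ⟨(a : ℕ) - (a' : ℕ), (b : ℕ) - (b' : ℕ), (c : ℕ) - (c' : ℕ), ?_,
    Fin.sq_sub_le_of_sqrt a a', Fin.sq_sub_le_of_sqrt b b', Fin.sq_sub_le_of_sqrt c c', ?_, ?_⟩
  · by_contra! h
    refine hne ?_
    simp only [Prod.mk.injEq, Fin.ext_iff]
    omega
  · have := (ZMod.intCast_eq_intCast_iff_dvd_sub _ _ p).mp heq.1.symm
    convert this using 1
    ring
  · have := (ZMod.intCast_eq_intCast_iff_dvd_sub _ _ m).mp heq.2.symm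
    convert this using 1
    ring

set_option maxHeartbeats 800000 in
/-- A prime `p ≡ 1 mod 4|D|` is a quotient of two nonzero values of the form `x ^ 2 - D * y ^ 2`. -/
lemma Nat.Prime.exists_sq_sub_mul_sq_eq {D : ℤ} (hD : ¬ IsSquare D) (hD1 : 1 < D.natAbs) {p : ℕ}
    (hp : p.Prime) (h : p % (4 * D.natAbs) = 1) :
    ∃ x y u v : ℤ, x ^ 2 - D * y ^ 2 = p * (u ^ 2 - D * v ^ 2) ∧ u ^ 2 - D * v ^ 2 ≠ 0 := by
  have := Fact.mk hp
  set m := D.natAbs with hm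
  have : NeZero m := ⟨by omega⟩
  obtain ⟨k, hk⟩ : ∃ k, p = 4 * m * k + 1 := ⟨p / (4 * m), by rw [← h, Nat.div_add_mod]⟩
  have hodd : Odd p := ⟨2 * m * k, by rw [hk]; ring⟩
  have hk0 : 0 < k := Nat.pos_of_ne_zero (by rintro rfl; exact hp.ne_one (by simpa using hk))
  have hmp : m < p := by nlinarith
  have hsq : IsSquare (D : ZMod p) := by
    apply ZMod.isSquare_of_jacobiSym_eq_one
    rw [jacobiSym.mod_right _ hodd, ← hm, h, jacobiSym.one_right]
  obtain ⟨r, hr⟩ := hsq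
  obtain ⟨ρ, rfl⟩ := ZMod.intCast_surjective r
  have hρ : (p : ℤ) ∣ ρ * ρ - D := by
    rw [← ZMod.intCast_eq_intCast_iff_dvd_sub]
    push_cast
    exact hr
  obtain ⟨x, y, z, h0, hx, hy, hz, ⟨s, hs⟩, ⟨t, ht⟩⟩ := exists_small_solution (p := p) (m := m) ρ
  have hpi : _root_.Prime (p : ℤ) := Nat.prime_iff_prime_int.mp hp
  have hp0 : (0 : ℤ) < p := by exact_mod_cast hp.pos
  have hm0 : (0 : ℤ) < m := by exact_mod_cast (by omega : 0 < m)
  have hxlt : x ^ 2 < p * m := by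
    push_cast at hx
    refine lt_of_le_of_ne hx fun he ↦ ?_
    obtain ⟨w, rfl⟩ := hpi.dvd_of_dvd_pow ⟨_, he⟩
    have h1 : (p : ℤ) * w ^ 2 = m := mul_left_cancel₀ hp0.ne' (by linarith)
    have h2 : p ∣ m := by exact_mod_cast Dvd.intro _ h1
    exact absurd (Nat.le_of_dvd (by omega) h2) (by omega)
  have hylt : y ^ 2 < p := by
    refine lt_of_le_of_ne hy fun he ↦ ?_
    exact hpi.irreducible.not_isSquare ⟨y, by rw [← he, sq]⟩
  have hpQ : (p : ℤ) ∣ x ^ 2 - D * y ^ 2 - p * z ^ 2 := by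
    obtain ⟨w, hw⟩ := hρ
    refine ⟨s * (x + ρ * y) + w * y ^ 2 - z ^ 2, ?_⟩
    linear_combination (x + ρ * y) * hs + y ^ 2 * hw
  have hmD : (m : ℤ) ∣ D := Int.natAbs_dvd.mpr dvd_rfl
  have hmQ : (m : ℤ) ∣ x ^ 2 - D * y ^ 2 - p * z ^ 2 := by
    obtain ⟨w, hw⟩ := hmD
    refine ⟨t * (x + z) - w * y ^ 2 - 4 * k * z ^ 2, ?_⟩
    have : (p : ℤ) = 4 * m * k + 1 := by exact_mod_cast hk
    linear_combination (x + z) * ht - y ^ 2 * hw - z ^ 2 * this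
  have hcop : IsCoprime (p : ℤ) m := by
    rw [Nat.isCoprime_iff_coprime, hp.coprime_iff_not_dvd]
    exact fun h ↦ absurd (Nat.le_of_dvd (by omega) h) (by omega)
  obtain ⟨q, hq⟩ := hcop.mul_dvd hpQ hmQ
  have hpm : (0 : ℤ) < p * m := by positivity
  have hfin : x ^ 2 - D * y ^ 2 - p * z ^ 2 = 0 ∨ x ^ 2 - D * y ^ 2 - p * z ^ 2 = -(p * D) := by
    rcases Int.natAbs_eq D with hD' | hD' <;> rw [← hm] at hD'
    · have h1 : q < 1 := by nlinarith [sq_nonneg y, sq_nonneg z]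
      have h2 : -2 < q := by nlinarith [sq_nonneg x, sq_nonneg z]
      obtain rfl | rfl : q = 0 ∨ q = -1 := by omega
      · left; simpa using hq
      · right; rw [hq]; linear_combination p * hD'
    · have h1 : q < 2 := by nlinarith [sq_nonneg y, sq_nonneg z]
      have h2 : -1 ≤ q := by nlinarith [sq_nonneg x, sq_nonneg y]
      obtain rfl | rfl | rfl : q = 0 ∨ q = 1 ∨ q = -1 := by omega
      · left; simpa using hq
      · right; rw [hq]; linear_combination p * hD'
      · exfalso
        rw [hD'] at hq
        have hpz : (p : ℤ) * z ^ 2 ≤ p * m := mul_le_mul_of_nonneg_left hz hp0.le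
        have hx0 : x = 0 := by nlinarith [sq_nonneg x, sq_nonneg y]
        have hy0 : y = 0 := by
          have : (m : ℤ) * y ^ 2 ≤ 0 := by nlinarith [sq_nonneg x, sq_nonneg y]
          have : y ^ 2 ≤ 0 := by nlinarith
          nlinarith
        subst hx0 hy0
        have hz2 : z ^ 2 = m := mul_left_cancel₀ hp0.ne' (by linarith)
        have hz3 : z = -(m * t) := by linarith
        have ht0 : t ≠ 0 := by
          rintro rfl
          simp [hz3] at h0
        have : (1 : ℤ) ≤ t ^ 2 := by have := sq_pos_of_ne_zero ht0; omega
        have h4 : (m : ℤ) * t ^ 2 = 1 := mul_left_cancel₀ hm0.ne' (by rw [hz3] at hz2; linarith)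
        have : (1 : ℤ) < m := by exact_mod_cast hD1
        nlinarith
  rcases hfin with h1 | h1
  · refine ⟨x, y, z, 0, by linear_combination h1, fun hz0 ↦ ?_⟩
    have hz0 : z = 0 := by simpa using hz0
    subst hz0
    have := Int.eq_zero_of_sq_eq_mul_sq hD (x := x) (y := y) (by linear_combination h1)
    simp [this] at h0
  · refine ⟨x, y, z, 1, by linear_combination h1, fun hz0 ↦ hD ⟨z, ?_⟩⟩
    linear_combination -hz0

namespace NumberField
variable {K : Type*} [Field K] [NumberField K]

lemma exists_norm_eq_mul_of_finrank_eq_two (hdeg : Module.finrank ℚ K = 2) :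
    ∃ σ : K ≃ₐ[ℚ] K, σ ≠ 1 ∧ ∀ x, algebraMap ℚ K (Algebra.norm ℚ x) = x * σ x := by
  classical
  have : Algebra.IsQuadraticExtension ℚ K := ⟨hdeg⟩
  have hcard : Fintype.card (K ≃ₐ[ℚ] K) = 2 := by
    rw [← Nat.card_eq_fintype_card, IsGalois.card_aut_eq_finrank, hdeg]
  have : Nontrivial (K ≃ₐ[ℚ] K) := Fintype.one_lt_card_iff_nontrivial.mp (by omega)
  obtain ⟨σ, hσ⟩ := exists_ne (1 : K ≃ₐ[ℚ] K)
  have huniv : (Finset.univ : Finset (K ≃ₐ[ℚ] K)) = {1, σ} := by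
    symm
    rw [← Finset.card_eq_iff_eq_univ, Finset.card_pair hσ.symm, hcard]
  refine ⟨σ, hσ, fun x ↦ ?_⟩
  rw [Algebra.norm_eq_prod_automorphisms, huniv, Finset.prod_pair hσ.symm]
  rfl

/-- Every integer of a quadratic field has a conjugate. -/
lemma RingOfIntegers.exists_mul_eq_norm (hdeg : Module.finrank ℚ K = 2) (c : 𝓞 K) :
    ∃ c' : 𝓞 K, c * c' = (Algebra.norm ℤ c : 𝓞 K) ∧ Algebra.norm ℤ c' = Algebra.norm ℤ c := by
  obtain ⟨σ, -, hσ⟩ := exists_norm_eq_mul_of_finrank_eq_two hdeg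
  obtain ⟨c', hc'⟩ : ∃ c' : 𝓞 K, (c' : K) = σ c :=
    ⟨⟨σ c, (RingOfIntegers.isIntegral_coe c).map σ.toRingEquiv.toRingHom.toIntAlgHom⟩, rfl⟩
  refine ⟨c', ?_, ?_⟩
  · apply RingOfIntegers.ext
    have := hσ c
    rw [← Algebra.coe_norm_int, ← hc'] at this
    simpa using this.symm
  · have h : ((Algebra.norm ℤ c' : ℤ) : ℚ) = (Algebra.norm ℤ c : ℤ) := by
      rw [Algebra.coe_norm_int, Algebra.coe_norm_int, hc']
      exact Algebra.norm_eq_of_algEquiv σ _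
    exact_mod_cast h

/-- A quadratic field contains an order of the form `ℤ[√D]`. -/
lemma exists_norm_eq_sq_sub_mul_sq (hdeg : Module.finrank ℚ K = 2) :
    ∃ D : ℤ, ¬ IsSquare D ∧ 1 < D.natAbs ∧
      ∀ x y : ℤ, ∃ a : 𝓞 K, Algebra.norm ℤ a = x ^ 2 - D * y ^ 2 := by
  obtain ⟨σ, hσ1, hσ⟩ := exists_norm_eq_mul_of_finrank_eq_two hdeg
  obtain ⟨α, hα⟩ : ∃ α : 𝓞 K, σ α ≠ α := by
    by_contra! h
    refine hσ1 (AlgEquiv.ext fun x ↦ ?_)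
    obtain ⟨a, b, -, rfl⟩ := IsFractionRing.div_surjective (A := 𝓞 K) x
    simp only [map_div₀, AlgEquiv.one_apply]
    exact congrArg₂ (· / ·) (h a) (h b)
  obtain ⟨β, hβ⟩ : ∃ β : 𝓞 K, (β : K) = α - σ α := ⟨⟨α - σ α, (RingOfIntegers.isIntegral_coe α).sub
    ((RingOfIntegers.isIntegral_coe α).map σ.toRingEquiv.toRingHom.toIntAlgHom)⟩, rfl⟩
  have hβ0 : (β : K) ≠ 0 := by rw [hβ, sub_ne_zero]; exact hα.symm
  have hσσ : σ (σ α) = α := by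
    have h1 := hσ (σ α)
    rw [Algebra.norm_eq_of_algEquiv, hσ, mul_comm] at h1
    have h2 : σ α ≠ 0 := fun h ↦ hα (by
      have h3 : (α : K) = 0 := by simpa using h
      rw [h3, map_zero])
    exact (mul_left_cancel₀ h2 h1).symm
  have hσβ : σ β = -β := by rw [hβ, map_sub, hσσ]; ring
  have hnorm : ((Algebra.norm ℤ β : ℤ) : K) = -(β : K) ^ 2 := by
    have := hσ β
    rw [← Algebra.coe_norm_int, hσβ] at this
    simp only [eq_ratCast, Rat.cast_intCast] at this
    rw [this]; ring
  refine ⟨-(4 * Algebra.norm ℤ β), ?_, ?_, fun x y ↦ ⟨x + y * (2 * β), ?_⟩⟩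
  · rintro ⟨k, hk⟩
    have h1 : (2 * β : K) ^ 2 = (k : K) ^ 2 := by
      have h2 := congrArg (Int.cast : ℤ → K) hk
      push_cast at h2
      rw [hnorm] at h2
      linear_combination h2
    have h3 : σ (2 * β) = 2 * β := by
      rcases sq_eq_sq_iff_eq_or_eq_neg.mp h1 with h | h <;> simp [h]
    rw [map_mul, hσβ, map_ofNat] at h3
    have : (4 : K) * β = 0 := by linear_combination -h3
    simp [hβ0] at this
  · have : Algebra.norm ℤ β ≠ 0 := fun h ↦ hβ0 (by simpa [h] using hnorm.symm)
    omega
  · have h2 : ((Algebra.norm ℤ (x + y * (2 * β) : 𝓞 K) : ℤ) : K) =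
        ((x ^ 2 - -(4 * Algebra.norm ℤ β) * y ^ 2 : ℤ) : K) := by
      have h3 := hσ ((x + y * (2 * β) : 𝓞 K) : K)
      rw [← Algebra.coe_norm_int] at h3
      simp only [eq_ratCast, Rat.cast_intCast] at h3
      rw [h3]
      push_cast
      rw [hnorm]
      simp only [map_add, map_mul, map_intCast, map_ofNat, hσβ]
      ring
    exact_mod_cast h2

/-- If the norms are closed under division, then all primes in some residue class
coprime to the modulus are norms. -/
lemma exists_modulus_forall_prime_exists_norm_eq (hdeg : Module.finrank ℚ K = 2)
    (hdiv : ∀ a b : 𝓞 K, a ≠ 0 → b ≠ 0 →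
      (Algebra.norm ℤ a).natAbs ∣ (Algebra.norm ℤ b).natAbs →
      ∃ c : 𝓞 K, (Algebra.norm ℤ a).natAbs * (Algebra.norm ℤ c).natAbs =
        (Algebra.norm ℤ b).natAbs) :
    ∃ q : ℕ, q ≠ 0 ∧ ∀ p : ℕ, p.Prime → (p : ZMod q) = 1 →
      ∃ c : 𝓞 K, (Algebra.norm ℤ c).natAbs = p := by
  obtain ⟨D, hD, hD1, hnorm⟩ := exists_norm_eq_sq_sub_mul_sq hdeg
  refine ⟨4 * D.natAbs, by omega, fun p hp h ↦ ?_⟩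
  have hmod : p % (4 * D.natAbs) = 1 := by
    have : p % (4 * D.natAbs) = 1 % (4 * D.natAbs) :=
      (ZMod.natCast_eq_natCast_iff' p 1 _).mp (by simpa using h)
    rwa [Nat.mod_eq_of_lt (by omega : 1 < 4 * D.natAbs)] at this
  obtain ⟨x, y, u, v, hxy, huv⟩ := hp.exists_sq_sub_mul_sq_eq hD hD1 hmod
  obtain ⟨b, hb⟩ := hnorm x y
  obtain ⟨a, ha⟩ := hnorm u v
  have hab : (Algebra.norm ℤ b).natAbs = (Algebra.norm ℤ a).natAbs * p := by
    rw [hb, ha, hxy, Int.natAbs_mul, Int.natAbs_natCast, mul_comm]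
  have ha0 : Algebra.norm ℤ a ≠ 0 := by rwa [ha]
  have hb0 : Algebra.norm ℤ b ≠ 0 := by
    rw [← Int.natAbs_ne_zero, hab]
    exact mul_ne_zero (Int.natAbs_ne_zero.mpr ha0) hp.ne_zero
  obtain ⟨c, hc⟩ := hdiv a b (by rintro rfl; simp at ha0) (by rintro rfl; simp at hb0)
    ⟨p, hab⟩
  exact ⟨c, mul_left_cancel₀ (Int.natAbs_ne_zero.mpr ha0) (hc.trans hab)⟩

end NumberField

namespace NumberField
variable {K : Type*} [Field K] [NumberField K]

lemma isPrincipal_of_mem_of_natAbs_norm_eq {P : Ideal (𝓞 K)} (hP : P ≠ ⊥) {c : 𝓞 K} (hc : c ∈ P)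
    (h : (Algebra.norm ℤ c).natAbs = Ideal.absNorm P) : P.IsPrincipal := by
  obtain ⟨Q, hQ⟩ : P ∣ Ideal.span {c} :=
    Ideal.dvd_iff_le.mpr ((Ideal.span_singleton_le_iff_mem _).mpr hc)
  have h1 : Ideal.absNorm P * Ideal.absNorm Q = Ideal.absNorm P * 1 := by
    rw [← map_mul, ← hQ, Ideal.absNorm_span_singleton, h, mul_one]
  have h2 := mul_left_cancel₀ (mt Ideal.absNorm_eq_zero_iff.mp hP) h1
  rw [Ideal.absNorm_eq_one_iff.mp h2, Ideal.mul_top] at hQ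
  exact ⟨c, hQ.symm⟩

/-- If the norms of a quadratic field are closed under division, then a prime whose class is a
square is principal. -/
lemma mk0_eq_one_of_isSquare (hdeg : Module.finrank ℚ K = 2)
    (hdiv : ∀ a b : 𝓞 K, a ≠ 0 → b ≠ 0 →
      (Algebra.norm ℤ a).natAbs ∣ (Algebra.norm ℤ b).natAbs →
      ∃ c : 𝓞 K, (Algebra.norm ℤ a).natAbs * (Algebra.norm ℤ c).natAbs =
        (Algebra.norm ℤ b).natAbs)
    (P : (Ideal (𝓞 K))⁰) (hP : (P : Ideal (𝓞 K)).IsPrime) (hsq : IsSquare (ClassGroup.mk0 P)) :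
    ClassGroup.mk0 P = 1 := by
  obtain ⟨g, hg⟩ := hsq
  obtain ⟨J, hJ⟩ := ClassGroup.mk0_surjective g⁻¹
  have h1 : ClassGroup.mk0 (P * J * J) = 1 := by
    rw [map_mul, map_mul, hg, hJ]
    group
  have hP0 : (P : Ideal (𝓞 K)) ≠ ⊥ := nonZeroDivisors.coe_ne_zero P
  have hJ0 : (J : Ideal (𝓞 K)) ≠ ⊥ := nonZeroDivisors.coe_ne_zero J
  obtain ⟨α, hα⟩ := (ClassGroup.mk0_eq_one_iff (P * J * J).2).mp h1
  set n := Ideal.absNorm (J : Ideal (𝓞 K)) with hn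
  have hn0 : n ≠ 0 := mt Ideal.absNorm_eq_zero_iff.mp hJ0
  have hNα : (Algebra.norm ℤ α).natAbs = n ^ 2 * Ideal.absNorm (P : Ideal (𝓞 K)) := by
    have := congrArg Ideal.absNorm hα
    rw [Ideal.submodule_span_eq, Ideal.absNorm_span_singleton] at this
    rw [← this]
    simp only [Submonoid.coe_mul, map_mul, ← hn]
    ring
  have hNn : (Algebra.norm ℤ (n : 𝓞 K)).natAbs = n ^ 2 := by
    have := Algebra.norm_algebraMap (S := 𝓞 K) (n : ℤ)
    rw [RingOfIntegers.rank, hdeg] at this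
    simp only [algebraMap_int_eq, eq_intCast, Int.cast_natCast] at this
    rw [this, Int.natAbs_pow, Int.natAbs_natCast]
  have hα0 : α ≠ 0 := by
    rintro rfl
    have : Ideal.absNorm (P : Ideal (𝓞 K)) = 0 := by simpa [hn0] using hNα.symm
    exact hP0 (Ideal.absNorm_eq_zero_iff.mp this)
  obtain ⟨c, hc⟩ := hdiv n α (by exact_mod_cast hn0) hα0 (by rw [hNn, hNα]; exact dvd_mul_right _ _)
  rw [hNn, hNα] at hc
  have hc := mul_left_cancel₀ (pow_ne_zero 2 hn0) hc
  obtain ⟨c', hcc', hc'⟩ := RingOfIntegers.exists_mul_eq_norm hdeg c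
  have hmem : c * c' ∈ (P : Ideal (𝓞 K)) := by
    have hm := Ideal.absNorm_mem (P : Ideal (𝓞 K))
    rw [hcc']
    rcases Int.natAbs_eq (Algebra.norm ℤ c) with h | h <;> rw [h, hc]
    · simpa using hm
    · simpa using hm
  rw [ClassGroup.mk0_eq_one_iff P.2]
  rcases hP.mem_or_mem hmem with h | h
  · exact isPrincipal_of_mem_of_natAbs_norm_eq hP0 h hc
  · exact isPrincipal_of_mem_of_natAbs_norm_eq hP0 h (by rw [hc', hc])

end NumberField

lemma Complex.norm_one_sub_le_exp (z : ℂ) : ‖1 - z‖ ≤ Real.exp (-z.re + ‖z‖ ^ 2 / 2) := by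
  refine (sq_le_sq₀ (norm_nonneg _) (Real.exp_pos _).le).mp ?_
  rw [← Real.exp_nat_mul, Complex.sq_norm, Complex.sq_norm, Complex.normSq_apply,
    Complex.normSq_apply]
  refine le_trans (le_of_eq ?_) (Real.add_one_le_exp _)
  simp only [sub_re, one_re, sub_im, one_im]
  push_cast
  ring

namespace NumberField.Ideal

open IsDedekindDomain
open _root_.Ideal (absNorm absNorm_pos_of_nonZeroDivisors)

variable (K : Type*) [Field K] [NumberField K]

/-- A prime of a number field as a nonzero integral ideal. -/
noncomputable def ofPrime (P : HeightOneSpectrum (𝓞 K)) : (Ideal (𝓞 K))⁰ :=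
  ⟨P.asIdeal, mem_nonZeroDivisors_of_ne_zero P.ne_bot⟩

variable {K} in
lemma norm_char_eq_one (η : ClassGroup (𝓞 K) →* ℂ) (x : ClassGroup (𝓞 K)) : ‖η x‖ = 1 :=
  Complex.norm_eq_one_of_pow_eq_one (n := Fintype.card (ClassGroup (𝓞 K)))
    (by rw [← map_pow, pow_card_eq_one, map_one]) Fintype.card_ne_zero

/-- The summand of the `L`-series of a class group character. -/
noncomputable def charTerm (η : ClassGroup (𝓞 K) →* ℂ) (s : ℝ) : (Ideal (𝓞 K))⁰ →* ℂ where
  toFun I := η (ClassGroup.mk0 I) * ((absNorm (I : Ideal (𝓞 K)) : ℝ) ^ (-s) : ℝ)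
  map_one' := by simp
  map_mul' I J := by
    simp only [map_mul, Submonoid.coe_mul, Nat.cast_mul]
    rw [Real.mul_rpow (by positivity) (by positivity)]
    push_cast
    ring

variable {K}

lemma charTerm_apply (η : ClassGroup (𝓞 K) →* ℂ) (s : ℝ) (I : (Ideal (𝓞 K))⁰) :
    charTerm K η s I = η (ClassGroup.mk0 I) * ((absNorm (I : Ideal (𝓞 K)) : ℝ) ^ (-s) : ℝ) := rfl

lemma norm_charTerm (η : ClassGroup (𝓞 K) →* ℂ) (s : ℝ) (I : (Ideal (𝓞 K))⁰) :
    ‖charTerm K η s I‖ = (absNorm (I : Ideal (𝓞 K)) : ℝ) ^ (-s) := by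
  rw [charTerm_apply, norm_mul, norm_char_eq_one, one_mul, Complex.norm_real, Real.norm_eq_abs,
    abs_of_nonneg (by positivity)]

/-- The Euler product of the `L`-series of a class group character. -/
lemma tendsto_prod_one_sub_charTerm_mul_tsum (hdeg : Module.finrank ℚ K = 2)
    (η : ClassGroup (𝓞 K) →* ℂ) {s : ℝ} (hs : 1 < s) :
    Tendsto (fun S : Finset (HeightOneSpectrum (𝓞 K)) ↦
      (∏ P ∈ S, (1 - charTerm K η s (ofPrime K P))) * ∑' I, charTerm K η s I) atTop (𝓝 1) := by
  have : IsLeftCancelMul (Ideal (𝓞 K))⁰ := ⟨fun a b c h ↦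
    Subtype.ext (mul_left_cancel₀ (nonZeroDivisors.coe_ne_zero a) (congrArg Subtype.val h))⟩
  have : IsCancelMul (Ideal (𝓞 K))⁰ := CommMagma.IsLeftCancelMul.toIsCancelMul _
  refine tendsto_prod_one_sub_mul_tsum _ ?_ _ ?_ ?_ ?_
  · simpa only [norm_charTerm] using summable_absNorm_rpow_neg K hdeg hs
  · intro P a b h
    rw [nonZeroDivisors_dvd_iff_dvd_coe] at h ⊢
    rw [nonZeroDivisors_dvd_iff_dvd_coe]
    exact P.prime.dvd_or_dvd h
  · intro P Q h
    rw [nonZeroDivisors_dvd_iff_dvd_coe, Ideal.dvd_iff_le] at h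
    exact HeightOneSpectrum.ext (Q.isMaximal.eq_of_le P.isPrime.ne_top h).symm
  · intro I
    constructor
    · intro h
      by_contra hI
      have hI' : (I : Ideal (𝓞 K)) ≠ ⊤ := fun h ↦ hI (Subtype.ext (h.trans Ideal.one_eq_top.symm))
      obtain ⟨P, hP, hIP⟩ := Ideal.exists_le_maximal _ hI'
      have hP0 : P ≠ ⊥ := fun h0 ↦ nonZeroDivisors.coe_ne_zero I (le_bot_iff.mp (h0 ▸ hIP))
      refine h ⟨P, hP.isPrime, hP0⟩ ?_
      rw [nonZeroDivisors_dvd_iff_dvd_coe, Ideal.dvd_iff_le]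
      exact hIP
    · rintro rfl P h
      rw [nonZeroDivisors_dvd_iff_dvd_coe] at h
      exact P.prime.not_dvd_one h

/-- An upper bound on partial sums of a character over primes coming from the boundedness of its
`L`-series near `1`. -/
lemma exists_eventually_sum_re_charTerm_le (hdeg : Module.finrank ℚ K = 2)
    (η : ClassGroup (𝓞 K) →* ℂ) (hη : η ≠ 1) :
    ∃ M : ℝ, ∀ s : ℝ, 1 < s → ∀ᶠ S : Finset (HeightOneSpectrum (𝓞 K)) in atTop,
      ∑ P ∈ S, (charTerm K η s (ofPrime K P)).re ≤ M := by
  obtain ⟨B, hB⟩ := exists_norm_tsum_char_mul_rpow_neg_le K hdeg η hη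
  set C := ∑' I : (Ideal (𝓞 K))⁰, (absNorm (I : Ideal (𝓞 K)) : ℝ) ^ (-2 : ℝ) with hC
  have hinj : Function.Injective (ofPrime K) := fun P Q h ↦
    HeightOneSpectrum.ext (congrArg Subtype.val h)
  refine ⟨Real.log (2 * B) + C / 2, fun s hs ↦ ?_⟩
  have hlim := (tendsto_prod_one_sub_charTerm_mul_tsum hdeg η hs).norm
  rw [norm_one] at hlim
  filter_upwards [hlim.eventually_const_le (by norm_num : (1 / 2 : ℝ) < 1)] with S hS
  set X := ∑ P ∈ S, (-(charTerm K η s (ofPrime K P)).re + ‖charTerm K η s (ofPrime K P)‖ ^ 2 / 2)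
  have h1 : (1 / 2 : ℝ) ≤ Real.exp X * B := by
    refine hS.trans ?_
    rw [norm_mul, norm_prod, Real.exp_sum]
    refine mul_le_mul (Finset.prod_le_prod (fun _ _ ↦ norm_nonneg _)
      fun _ _ ↦ Complex.norm_one_sub_le_exp _) (hB s hs) (norm_nonneg _) (by positivity)
  have h2 : Real.exp (-X) ≤ 2 * B := by
    rw [Real.exp_neg, inv_le_iff_one_le_mul₀ (Real.exp_pos _)]
    linarith
  have h3 : -X ≤ Real.log (2 * B) :=
    (Real.le_log_iff_exp_le ((Real.exp_pos _).trans_le h2)).mpr h2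
  have h4 : ∑ P ∈ S, ‖charTerm K η s (ofPrime K P)‖ ^ 2 ≤ C := by
    calc ∑ P ∈ S, ‖charTerm K η s (ofPrime K P)‖ ^ 2
        ≤ ∑ P ∈ S, (absNorm (ofPrime K P : Ideal (𝓞 K)) : ℝ) ^ (-2 : ℝ) := by
          refine Finset.sum_le_sum fun P _ ↦ ?_
          rw [norm_charTerm, ← Real.rpow_mul_natCast (by positivity)]
          refine Real.rpow_le_rpow_of_exponent_le ?_ (by push_cast; linarith)
          exact_mod_cast absNorm_pos_of_nonZeroDivisors (ofPrime K P)
      _ = ∑ I ∈ S.map ⟨ofPrime K, hinj⟩, (absNorm (I : Ideal (𝓞 K)) : ℝ) ^ (-2 : ℝ) := by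
          rw [Finset.sum_map]; rfl
      _ ≤ C := (summable_absNorm_rpow_neg K hdeg one_lt_two).sum_le_tsum _
          fun _ _ ↦ by positivity
  have h5 : X = -(∑ P ∈ S, (charTerm K η s (ofPrime K P)).re) +
      (∑ P ∈ S, ‖charTerm K η s (ofPrime K P)‖ ^ 2) / 2 := by
    rw [Finset.sum_div, ← Finset.sum_neg_distrib, ← Finset.sum_add_distrib]
  linarith

/-- If a finite family of nontrivial class group characters has a sum with nonnegative
real part at all primes, then the sum of the inverse norms of the principal primes is bounded. -/
theorem exists_sum_absNorm_inv_le (hdeg : Module.finrank ℚ K = 2) {ι : Type*} [Fintype ι]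
    [Nonempty ι] (η : ι → ClassGroup (𝓞 K) →* ℂ) (hη : ∀ i, η i ≠ 1)
    (hnonneg : ∀ P, 0 ≤ (∑ i, η i (ClassGroup.mk0 (ofPrime K P))).re) :
    ∃ M : ℝ, ∀ S : Finset (HeightOneSpectrum (𝓞 K)),
      (∀ P ∈ S, ClassGroup.mk0 (ofPrime K P) = 1) →
      ∑ P ∈ S, (absNorm P.asIdeal : ℝ)⁻¹ ≤ M := by
  classical
  choose M hM using fun i ↦ exists_eventually_sum_re_charTerm_le hdeg (η i) (hη i)
  refine ⟨∑ i, M i, fun S hS ↦ ?_⟩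
  have key : ∀ s : ℝ, 1 < s → ∑ P ∈ S, (absNorm P.asIdeal : ℝ) ^ (-s) ≤ ∑ i, M i := by
    intro s hs
    obtain ⟨T, hT, hST⟩ := ((eventually_all.mpr fun i ↦ hM i s hs).and
      (eventually_ge_atTop S)).exists
    have hterm : ∀ P, ∑ i, (charTerm K (η i) s (ofPrime K P)).re =
        (∑ i, η i (ClassGroup.mk0 (ofPrime K P))).re * (absNorm P.asIdeal : ℝ) ^ (-s) := by
      intro P
      simp only [charTerm_apply, Complex.re_mul_ofReal, Complex.re_sum, Finset.sum_mul]
      rfl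
    calc ∑ P ∈ S, (absNorm P.asIdeal : ℝ) ^ (-s)
        ≤ ∑ P ∈ S, ∑ i, (charTerm K (η i) s (ofPrime K P)).re := by
          refine Finset.sum_le_sum fun P hP ↦ ?_
          rw [hterm, hS P hP]
          simp only [map_one, Finset.sum_const, Finset.card_univ, nsmul_eq_mul, mul_one,
            Complex.natCast_re]
          refine le_mul_of_one_le_left (by positivity) ?_
          exact_mod_cast Fintype.card_pos
      _ ≤ ∑ P ∈ T, ∑ i, (charTerm K (η i) s (ofPrime K P)).re := by
          refine Finset.sum_le_sum_of_subset_of_nonneg hST fun P _ _ ↦ ?_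
          rw [hterm]
          exact mul_nonneg (hnonneg P) (by positivity)
      _ ≤ ∑ i, M i := by
          rw [Finset.sum_comm]
          exact Finset.sum_le_sum fun i _ ↦ hT i
  have hlim : Tendsto (fun s : ℝ ↦ ∑ P ∈ S, (absNorm P.asIdeal : ℝ) ^ (-s)) (𝓝[>] 1)
      (𝓝 (∑ P ∈ S, (absNorm P.asIdeal : ℝ)⁻¹)) := by
    refine tendsto_finsetSum _ fun P _ ↦ ?_
    have h0 : (absNorm P.asIdeal : ℝ) ≠ 0 := by
      exact_mod_cast (absNorm_pos_of_nonZeroDivisors (ofPrime K P)).ne'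
    have : ContinuousAt (fun s : ℝ ↦ (absNorm P.asIdeal : ℝ) ^ (-s)) 1 :=
      (Real.continuousAt_const_rpow h0).comp continuous_neg.continuousAt
    simpa [Real.rpow_neg_one] using this.tendsto.mono_left nhdsWithin_le_nhds
  exact le_of_tendsto hlim (eventually_nhdsWithin_of_forall key)

end NumberField.Ideal

section characters

/-- The complex characters of a commutative group whose square is trivial. -/
abbrev quadraticCharacters (G : Type*) [CommGroup G] : Subgroup (G →* ℂˣ) :=
  (powMonoidHom 2).ker

variable {G : Type*} [CommGroup G] [Finite G]

lemma exists_monoidHom_sq_eq_one_of_not_isSquare {x : G} (hx : ¬ IsSquare x) :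
    ∃ ψ : quadraticCharacters G, (ψ : G →* ℂˣ) x ≠ 1 := by
  let H : Subgroup G := (powMonoidHom 2 : G →* G).range
  have hx' : (x : G ⧸ H) ≠ 1 := by
    rw [Ne, QuotientGroup.eq_one_iff]
    rintro ⟨y, hy⟩
    exact hx ⟨y, by rw [← hy, powMonoidHom_apply, sq]⟩
  obtain ⟨φ, hφ⟩ := CommGroup.exists_apply_ne_one_of_hasEnoughRootsOfUnity (G ⧸ H) ℂ hx'
  refine ⟨⟨φ.comp (QuotientGroup.mk' H), ?_⟩, hφ⟩
  rw [MonoidHom.mem_ker]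
  ext y
  have hy : ((y ^ 2 : G) : G ⧸ H) = 1 := (QuotientGroup.eq_one_iff _).mpr ⟨y, rfl⟩
  have : φ (y : G ⧸ H) ^ 2 = 1 := by rw [← map_pow, ← QuotientGroup.mk_pow, hy, map_one]
  exact congrArg Units.val this

/-- If `g ^ 2 ≠ 1`, there is a coset of the quadratic characters which does not contain the trivial
character; its sum vanishes off the squares. -/
lemma exists_characters_sum_eq_zero {g : G} (hg : g ^ 2 ≠ 1) :
    ∃ η : quadraticCharacters G → G →* ℂ, (∀ ψ, η ψ ≠ 1) ∧
      ∀ [Fintype (quadraticCharacters G)] (x : G), ¬ IsSquare x →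
        ∑ ψ, η ψ x = 0 := by
  obtain ⟨χ, hχ⟩ := CommGroup.exists_apply_ne_one_of_hasEnoughRootsOfUnity G ℂ hg
  refine ⟨fun ψ ↦ (Units.coeHom ℂ).comp (χ * ψ), fun ψ h ↦ hχ ?_, fun x hx ↦ ?_⟩
  · have h1 : (χ * (ψ : G →* ℂˣ)) (g ^ 2) = 1 := Units.ext (DFunLike.congr_fun h (g ^ 2))
    have h2 : (ψ : G →* ℂˣ) (g ^ 2) = 1 := by
      rw [map_pow]
      exact DFunLike.congr_fun (MonoidHom.mem_ker.mp ψ.2) g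
    rwa [MonoidHom.mul_apply, h2, mul_one] at h1
  · obtain ⟨ψ₀, hψ₀⟩ := exists_monoidHom_sq_eq_one_of_not_isSquare hx
    have h0 : ((ψ₀ : G →* ℂˣ) x : ℂ) ≠ 1 := fun h ↦ hψ₀ (Units.ext h)
    set t := ∑ ψ : quadraticCharacters G,
      (Units.coeHom ℂ).comp (χ * (ψ : G →* ℂˣ)) x with hs
    have h1 : t = ((ψ₀ : G →* ℂˣ) x : ℂ) * t := by
      conv_lhs => rw [hs, ← Equiv.sum_comp (Equiv.mulLeft ψ₀)]
      rw [hs, Finset.mul_sum]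
      refine Finset.sum_congr rfl fun ψ _ ↦ ?_
      simp only [Equiv.coe_mulLeft, Subgroup.coe_mul, MonoidHom.comp_apply, MonoidHom.mul_apply,
        Units.coeHom_apply, Units.val_mul]
      ring
    have h2 : (((ψ₀ : G →* ℂˣ) x : ℂ) - 1) * t = 0 := by linear_combination -h1
    exact (mul_eq_zero.mp h2).resolve_left (sub_ne_zero.mpr h0)

end characters

open IsDedekindDomain in
/-- If all primes congruent to `1` modulo `q` are norms, then the sum of the inverse norms of the
principal primes diverges. -/
lemma NumberField.Ideal.not_bounded_sum_absNorm_inv {K : Type*} [Field K] [NumberField K] {q : ℕ}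
    (hq : q ≠ 0) (h : ∀ p : ℕ, p.Prime → (p : ZMod q) = 1 →
      ∃ c : 𝓞 K, (Algebra.norm ℤ c).natAbs = p) (M : ℝ) :
    ∃ S : Finset (HeightOneSpectrum (𝓞 K)), (∀ P ∈ S, ClassGroup.mk0 (ofPrime K P) = 1) ∧
      M < ∑ P ∈ S, (Ideal.absNorm P.asIdeal : ℝ)⁻¹ := by
  classical
  have : NeZero q := ⟨hq⟩
  by_contra! hM
  refine not_summable_one_div_primes_in_residueClass (q := q) isUnit_one
    (summable_of_sum_le (c := M) (fun n ↦ ?_) fun u ↦ ?_)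
  · dsimp only
    split_ifs <;> positivity
  have hP : ∀ p : ℕ, p.Prime ∧ (p : ZMod q) = 1 → ∃ P : HeightOneSpectrum (𝓞 K),
      ClassGroup.mk0 (ofPrime K P) = 1 ∧ Ideal.absNorm P.asIdeal = p := by
    rintro p ⟨hp, hp1⟩
    obtain ⟨c, hc⟩ := h p hp hp1
    have hnorm : Ideal.absNorm (Ideal.span {c}) = p := by rw [Ideal.absNorm_span_singleton, hc]
    have hprime : (Ideal.span {c}).IsPrime :=
      Ideal.isPrime_of_irreducible_absNorm (hnorm.symm ▸ hp)
    refine ⟨⟨Ideal.span {c}, hprime, fun h0 ↦ hp.ne_zero ?_⟩, ?_, hnorm⟩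
    · rw [← hnorm, h0, Ideal.absNorm_bot]
    · exact (ClassGroup.mk0_eq_one_iff _).mpr ⟨c, rfl⟩
  rw [← Finset.sum_filter, ← Finset.sum_attach]
  choose P hP1 hPn using fun p : {p // p ∈ u.filter fun p : ℕ ↦ p.Prime ∧ (p : ZMod q) = 1} ↦
    hP p (Finset.mem_filter.mp p.2).2
  have hinj : Function.Injective P := fun a b hab ↦ Subtype.ext <| by rw [← hPn a, ← hPn b, hab]
  have h1 := hM (Finset.univ.image P) fun Q hQ ↦ by
    obtain ⟨p, -, rfl⟩ := Finset.mem_image.mp hQ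
    exact hP1 p
  rw [Finset.sum_image hinj.injOn] at h1
  refine le_trans (le_of_eq (Finset.sum_congr rfl fun p _ ↦ ?_)) h1
  rw [hPn p, one_div]

/-- let `K` be a quadratic number field. If the image of the
absolute norm `N` is closed under division, then the class group has no
element of odd order greater than 1. -/
theorem stmt_13 (K : Type*) [Field K] [NumberField K]
    (hdeg : Module.finrank ℚ K = 2)
    (hdiv : ∀ a b : 𝓞 K, a ≠ 0 → b ≠ 0 →
      (Algebra.norm ℤ a).natAbs ∣ (Algebra.norm ℤ b).natAbs →
      ∃ c : 𝓞 K,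
        (Algebra.norm ℤ a).natAbs * (Algebra.norm ℤ c).natAbs =
          (Algebra.norm ℤ b).natAbs) :
    ∀ g : ClassGroup (𝓞 K), Odd (orderOf g) → g = 1 := by
  intro g hg
  by_contra hg1
  have hg2 : g ^ 2 ≠ 1 := fun h ↦ hg1 <| by
    rw [← orderOf_eq_one_iff]
    exact Nat.Coprime.eq_one_of_dvd hg.coprime_two_right (orderOf_dvd_of_pow_eq_one h)
  obtain ⟨η, hη, hsum⟩ := exists_characters_sum_eq_zero hg2
  have := Fintype.ofFinite (quadraticCharacters (ClassGroup (𝓞 K)))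
  obtain ⟨M, hM⟩ := NumberField.Ideal.exists_sum_absNorm_inv_le hdeg η hη fun P ↦ by
    by_cases hP : IsSquare (ClassGroup.mk0 (NumberField.Ideal.ofPrime K P))
    · rw [mk0_eq_one_of_isSquare hdeg hdiv _ P.isPrime hP]
      simp
    · rw [hsum _ hP, Complex.zero_re]
  obtain ⟨q, hq, hprime⟩ := exists_modulus_forall_prime_exists_norm_eq hdeg hdiv
  obtain ⟨S, hS, hlt⟩ := NumberField.Ideal.not_bounded_sum_absNorm_inv hq hprime M
  exact (hM S hS).not_gt hlt
end

section
/- Let K be a number field with [K : ℚ] = 2 and ring of integers 𝓞 K, with absolute norm N(a) = |Norm_ℤ(a)| ∈ ℕ. If the image of N is closed under division (for all nonzero a, b ∈ 𝓞 K with N(a) ∣ N(b) there exists c ∈ 𝓞 K with N(a) * N(c) = N(b)), then ClassGroup (𝓞 K) has no element of order four: no g ∈ ClassGroup (𝓞 K) has orderOf g = 4. -/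
open NumberField
open scoped NumberTheorySymbols

theorem Nat.mod_four_eq_one_of_forall_prime {n : ℕ} (hn : n ≠ 0)
    (h : ∀ q : ℕ, q.Prime → q ∣ n → q % 4 = 1) : n % 4 = 1 := by
  induction n using Nat.recOnMul with
  | zero => exact absurd rfl hn
  | one => rfl
  | prime p hp => exact h p hp dvd_rfl
  | mul a b iha ihb =>
    have ha := iha (left_ne_zero_of_mul hn) fun q hq hd => h q hq (hd.mul_right b)
    have hb := ihb (right_ne_zero_of_mul hn) fun q hq hd => h q hq (hd.mul_left a)
    rw [Nat.mul_mod, ha, hb]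

theorem Nat.mod_four_eq_one_of_odd {n k : ℕ} (hn : Odd n) (hnk : n ∣ k)
    (h : ∀ q : ℕ, q.Prime → q ≠ 2 → q ∣ k → q % 4 = 1) : n % 4 = 1 :=
  Nat.mod_four_eq_one_of_forall_prime hn.pos.ne' fun q hq hqn =>
    h q hq (fun h2 => Nat.not_odd_iff_even.2 (even_iff_two_dvd.2 (h2 ▸ hqn)) hn) (hqn.trans hnk)

theorem jacobiSym_congr {a c : ℤ} {n : ℕ} (h : (n : ℤ) ∣ a - c) : J(a | n) = J(c | n) :=
  jacobiSym.mod_left' (Int.modEq_iff_dvd.2 h).symm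

theorem jacobiSym_neg_one {n : ℕ} (hn : n % 4 = 1) : J(-1 | n) = 1 := by
  rw [jacobiSym.at_neg_one (Nat.odd_iff.2 (by omega)), ZMod.χ₄_nat_one_mod_four hn]

/-- A relation `c = ± e * x ^ 2` modulo `n` transfers the Jacobi symbol when `-1` is a square. -/
theorem jacobiSym_eq_of_dvd_sq {c e x w : ℤ} {n : ℕ} (hn : n % 4 = 1) (hw : w = 1 ∨ w = -1)
    (hc : IsCoprime c n) (h : (n : ℤ) ∣ c - w * (e * x ^ 2)) : J(c | n) = J(e | n) := by
  have h1 : J(w | n) = 1 := by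
    rcases hw with rfl | rfl
    · simp
    · exact jacobiSym_neg_one hn
  have h2 := jacobiSym_congr h
  have h3 : J(c | n) ≠ 0 := jacobiSym.ne_zero (Int.isCoprime_iff_gcd_eq_one.1 hc)
  rw [jacobiSym.mul_left, jacobiSym.mul_left, h1, one_mul, jacobiSym.pow_left] at h2
  rcases jacobiSym.trichotomy x n with h4 | h4 | h4 <;> rw [h4] at h2
  · simp at h2; exact absurd h2 h3
  · simpa using h2
  · simpa using h2

theorem jacobiSym_eq_one_of_ambiguous {b b' r m : ℕ} {x y w : ℤ} (hsq : Squarefree (b * b'))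
    (hb : ∀ q : ℕ, q.Prime → q ∣ b → q % 4 = 1)
    (hr₁ : ∀ r', r' ∣ b' → J(r' | b) = 1) (hs₁ : ∀ s, s ∣ b → J(b' | s) = 1)
    (hr : r ∣ b * b') (hm : m.Coprime b) (hw : w = 1 ∨ w = -1)
    (h : (4 * m * r : ℤ) = w * (x ^ 2 - b * b' * y ^ 2)) : J(m | b) = 1 := by
  have hb0 : b ≠ 0 := by rintro rfl; simp at hsq
  have hdvd4 : ∀ s, s ∣ b → s % 4 = 1 := fun s hs =>
    Nat.mod_four_eq_one_of_forall_prime (ne_zero_of_dvd_ne_zero hb0 hs)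
      fun q hq hd => hb q hq (hd.trans hs)
  obtain ⟨hbb', hbsq, -⟩ := Nat.squarefree_mul_iff.1 hsq
  obtain ⟨s, r', hs, hr', rfl⟩ : ∃ s r', s ∣ b ∧ r' ∣ b' ∧ s * r' = r := by
    obtain ⟨s, r', hs, hr', h⟩ := exists_dvd_and_dvd_of_dvd_mul hr
    exact ⟨s, r', hs, hr', h.symm⟩
  obtain ⟨t, rfl⟩ := hs
  have hs0 : s ≠ 0 := left_ne_zero_of_mul hb0
  have ht0 : t ≠ 0 := right_ne_zero_of_mul hb0
  obtain ⟨hst, hssq, -⟩ := Nat.squarefree_mul_iff.1 hbsq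
  have hs4 := hdvd4 s (dvd_mul_right s t)
  have ht4 := hdvd4 t (dvd_mul_left t s)
  have hst4 := hdvd4 _ dvd_rfl
  have hw2 : w * w = 1 := by rcases hw with rfl | rfl <;> rfl
  obtain ⟨x₁, rfl⟩ : (s : ℤ) ∣ x := by
    have : (s : ℤ) ∣ x ^ 2 := by
      refine ⟨w * (4 * m * r') + t * b' * y ^ 2, ?_⟩
      push_cast at h
      linear_combination (-w) * h + (- x ^ 2 + s * t * b' * y ^ 2) * hw2
    exact (Int.squarefree_natCast.2 hssq).isRadical 2 _ this
  have h' : (4 * m * r' : ℤ) = w * (s * x₁ ^ 2 - t * b' * y ^ 2) := by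
    have : (s : ℤ) ≠ 0 := by exact_mod_cast hs0
    apply mul_left_cancel₀ this
    push_cast at h
    linear_combination h
  have hcop : IsCoprime (4 * m * r' : ℤ) ((s * t : ℕ) : ℤ) := by
    have h4 : Nat.Coprime 4 (s * t) := by
      have : Nat.Coprime 2 (s * t) := (Nat.coprime_two_left).2 (Nat.odd_iff.2 (by omega))
      exact Nat.Coprime.pow_left 2 this
    have := (h4.mul_left hm).mul_left (hbb'.symm.coprime_dvd_left hr')
    exact_mod_cast (Nat.isCoprime_iff_coprime.2 this)
  have hcop' := hcop
  push_cast at hcop'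
  have e1 : J(4 * m * r' | t) = J(s | t) :=
    jacobiSym_eq_of_dvd_sq (x := x₁) ht4 hw (hcop'.of_mul_right_right)
      ⟨- w * b' * y ^ 2, by linear_combination h'⟩
  have e2 : J(4 * m * r' | s) = J(t * b' | s) :=
    jacobiSym_eq_of_dvd_sq (x := y) (w := - w) hs4 (by rcases hw with rfl | rfl <;> simp)
      (hcop'.of_mul_right_left)
      ⟨w * x₁ ^ 2, by linear_combination h'⟩
  have e3 : J(4 * m * r' | s * t) = 1 := by
    rw [jacobiSym.mul_right' _ hs0 ht0, e1, e2, jacobiSym.mul_left, hs₁ s (dvd_mul_right s t),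
      jacobiSym.quadratic_reciprocity_one_mod_four hs4 (Nat.odd_iff.2 (by omega)), mul_one, ← sq]
    exact jacobiSym.sq_one (by simpa using hst.symm)
  rw [jacobiSym.mul_left, jacobiSym.mul_left, hr₁ r' hr',
    jacobiSym.at_four (Nat.odd_iff.2 (by omega))] at e3
  simpa using e3

/-- Pell's equation: if `x² - d y² = -1` has no solution, the fundamental solution of
`x² - d y² = 1` yields a nontrivial factorization of `d`. -/
theorem exists_factorization_of_pell {d : ℕ} (hd : 1 < d) (hsq : Squarefree d)
    (hd4 : ∀ q : ℕ, q.Prime → q ≠ 2 → q ∣ d → q % 4 = 1)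
    (hneg : ∀ u v : ℤ, u ^ 2 - d * v ^ 2 ≠ -1) :
    ∃ b b' : ℕ, ∃ u v w : ℤ, b * b' = d ∧ 1 < b ∧ 1 < b' ∧ Odd b ∧ (w = 1 ∨ w = -1) ∧
      b * u ^ 2 - b' * v ^ 2 = w := by
  have hnsq : ¬ IsSquare (d : ℤ) := by
    rw [Int.isSquare_natCast_iff]
    rintro ⟨k, rfl⟩
    have := hsq k dvd_rfl
    simp [Nat.isUnit_iff.1 this] at hd
  obtain ⟨a, ha⟩ := Pell.IsFundamental.exists_of_not_isSquare (d := (d : ℤ)) (by omega) hnsq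
  have hprop := a.prop
  have hx1 : 1 < a.x := ha.1
  have hdmod : d % 4 = 1 ∨ d % 4 = 2 := by
    by_cases h2 : 2 ∣ d
    · right
      have : ¬ 2 * 2 ∣ d := fun h => by simpa using hsq 2 h
      omega
    · left
      exact Nat.mod_four_eq_one_of_odd (Nat.odd_iff.2 (by omega)) dvd_rfl hd4
  have hyev : a.y % 2 = 0 := by
    by_contra hy
    have hy4 : a.y ^ 2 % 4 = 1 := by
      rcases (by omega : a.y % 4 = 1 ∨ a.y % 4 = 3) with h | h <;> simp [pow_two, Int.mul_emod, h]
    have hx4 : a.x ^ 2 % 4 = 0 ∨ a.x ^ 2 % 4 = 1 := by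
      rcases (by omega : a.x % 4 = 0 ∨ a.x % 4 = 1 ∨ a.x % 4 = 2 ∨ a.x % 4 = 3) with h | h | h | h <;>
        simp [pow_two, Int.mul_emod, h]
    have : (d * a.y ^ 2 : ℤ) % 4 = d % 4 := by rw [Int.mul_emod, hy4]; omega
    omega
  obtain ⟨z, hz⟩ : ∃ z, a.y = 2 * z := ⟨a.y / 2, by omega⟩
  have hxodd : a.x % 2 = 1 := by
    have : a.x ^ 2 = 1 + 2 * (2 * (d * z ^ 2)) := by rw [a.prop_x, hz]; ring
    by_contra h
    obtain ⟨x', hx'⟩ : ∃ z, a.x = 2 * z := ⟨a.x / 2, by omega⟩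
    rw [hx'] at this
    have : 2 * (2 * x' ^ 2) = 1 + 2 * (2 * (d * z ^ 2)) := by rw [← this]; ring
    omega
  obtain ⟨s, hs⟩ : ∃ s : ℕ, a.x = 2 * s + 1 := ⟨((a.x - 1) / 2).toNat, by omega⟩
  have hs0 : 0 < s := by omega
  have hprod : s * (s + 1) = d * z.natAbs ^ 2 := by
    zify
    rw [sq_abs]
    have := a.prop_x
    rw [hs, hz] at this
    linarith
  have hcop : Nat.Coprime s (s + 1) := by simp
  have hbb : d.gcd s * d.gcd (s + 1) = d := by
    rw [← hcop.gcd_mul]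
    exact Nat.gcd_eq_left ⟨_, hprod⟩
  obtain ⟨s₁, hs₁⟩ := Nat.gcd_dvd_right d s
  obtain ⟨s₂, hs₂⟩ := Nat.gcd_dvd_right d (s + 1)
  generalize d.gcd s = b at *
  generalize d.gcd (s + 1) = b' at *
  have hss : s₁ * s₂ = z.natAbs ^ 2 := by
    have : d * (s₁ * s₂) = d * z.natAbs ^ 2 := by
      calc d * (s₁ * s₂) = (b * s₁) * (b' * s₂) := by rw [← hbb]; ring
        _ = d * z.natAbs ^ 2 := by rw [← hs₁, ← hs₂, hprod]
    exact Nat.eq_of_mul_eq_mul_left (by omega) this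
  have hcop' : Nat.Coprime s₁ s₂ :=
    (hcop.coprime_dvd_left ⟨b, by rw [hs₁, mul_comm]⟩).coprime_dvd_right ⟨b', by rw [hs₂, mul_comm]⟩
  obtain ⟨u, hu⟩ := exists_eq_pow_of_mul_eq_pow (Nat.isUnit_iff.2 hcop') hss
  obtain ⟨v, hv⟩ := exists_eq_pow_of_mul_eq_pow (Nat.isUnit_iff.2 hcop'.symm) (by rw [mul_comm, hss])
  have hrel : (b * (u : ℤ) ^ 2 - b' * (v : ℤ) ^ 2) = -1 := by
    rw [hu] at hs₁
    rw [hv] at hs₂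
    zify at hs₁ hs₂
    linarith
  have hb1 : b ≠ 1 := by
    rintro rfl
    apply hneg u v
    rw [← hrel, ← hbb]; push_cast; ring
  have hb'1 : b' ≠ 1 := by
    rintro rfl
    have hv1 : 1 < v := by
      rw [hv] at hs₂
      nlinarith
    have hsol : (v : ℤ) ^ 2 - d * (u : ℤ) ^ 2 = 1 := by
      rw [← hbb]; push_cast at hrel ⊢; linear_combination -hrel
    have h1 := ha.x_le_x (a := Pell.Solution₁.mk (v : ℤ) u hsol)
      (by rw [Pell.Solution₁.x_mk]; exact_mod_cast hv1)
    rw [Pell.Solution₁.x_mk, hs] at h1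
    rw [hv] at hs₂
    have : v < v ^ 2 := by nlinarith
    omega
  have hb0 : b ≠ 0 := by rintro rfl; omega
  have hb'0 : b' ≠ 0 := by rintro rfl; omega
  by_cases hodd : Odd b
  · exact ⟨b, b', u, v, -1, hbb, by omega, by omega, hodd, Or.inr rfl, hrel⟩
  · have hodd' : Odd b' := by
      rw [Nat.not_odd_iff] at hodd
      by_contra h
      rw [Nat.not_odd_iff] at h
      have : b * b' % 4 = 0 := by
        obtain ⟨k, rfl⟩ : 2 ∣ b := by omega
        obtain ⟨l, rfl⟩ : 2 ∣ b' := by omega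
        rw [show 2 * k * (2 * l) = 4 * (k * l) by ring]; simp
      omega
    exact ⟨b', b, v, u, 1, by rw [mul_comm, hbb], by omega, by omega, hodd', Or.inl rfl,
      by linear_combination -hrel⟩

theorem exists_jacobiSym_eq_neg_one {n : ℕ} (hn : 1 < n) (hodd : Odd n) (hsq : Squarefree n) :
    ∃ a : ℕ, a.Coprime n ∧ J(a | n) = -1 := by
  obtain ⟨q, hq, n', rfl⟩ := Nat.exists_prime_and_dvd hn.ne'
  have := Fact.mk hq
  have hq2 : q ≠ 2 := by rintro rfl; rw [Nat.odd_mul] at hodd; exact absurd hodd.1 (by decide)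
  obtain ⟨hcop, -, -⟩ := Nat.squarefree_mul_iff.1 hsq
  obtain ⟨c, hc⟩ := FiniteField.exists_nonsquare (F := ZMod q) (by rwa [ZMod.ringChar_zmod_n])
  have hn'0 : n' ≠ 0 := by rintro rfl; simp at hn
  obtain ⟨a, ha₁, ha₂⟩ := Nat.chineseRemainder hcop c.val 1
  have haq : J(a | q) = -1 := by
    apply ZMod.nonsquare_iff_jacobiSym_eq_neg_one.2
    have : ((a : ℤ) : ZMod q) = c := by
      have := (ZMod.natCast_eq_natCast_iff _ _ _).2 ha₁
      push_cast; rw [this]; simp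
    rwa [this]
  have han : J(a | n') = 1 := by
    rw [jacobiSym_congr (c := 1), jacobiSym.one_left]
    exact (Nat.modEq_iff_dvd.1 ha₂.symm)
  have hJ : J(a | q * n') = -1 := by
    rw [jacobiSym.mul_right' _ hq.ne_zero hn'0, haq, han]; rfl
  refine ⟨a, ?_, hJ⟩
  by_contra h
  have : NeZero (q * n') := ⟨mul_ne_zero hq.ne_zero hn'0⟩
  rw [jacobiSym.eq_zero_iff_not_coprime.2 (by rwa [Int.gcd_natCast_natCast])] at hJ
  norm_num at hJ

/-- The value of the symbol of `n` at primes in a suitable residue class is `-1`. -/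
theorem exists_residue_jacobiSym_eq_neg_one {n : ℕ} (hn : 1 < n) (hsq : Squarefree n)
    (h4 : ∀ q : ℕ, q.Prime → q ≠ 2 → q ∣ n → q % 4 = 1) :
    ∃ a M : ℕ, M ≠ 0 ∧ a.Coprime M ∧ M ∣ 4 * n ∧ ∀ p : ℕ, Odd p → p ≡ a [MOD M] → J(n | p) = -1 := by
  rcases Nat.even_or_odd n with hev | hodd
  · obtain ⟨k, hk⟩ := hev.two_dvd
    subst hk
    obtain ⟨hcop, -, hksq⟩ := Nat.squarefree_mul_iff.1 hsq
    have hk4 : k % 4 = 1 := Nat.mod_four_eq_one_of_odd (Nat.coprime_two_left.1 hcop)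
      (dvd_mul_left k 2) h4
    have hkc : Nat.Coprime 8 k := Nat.Coprime.pow_left 3 hcop
    obtain ⟨a, ha₁, ha₂⟩ := Nat.chineseRemainder hkc 5 1
    refine ⟨a, 8 * k, by omega, ?_, ⟨1, by ring⟩, fun p hp hpa => ?_⟩
    · apply Nat.Coprime.mul_right
      · rw [Nat.coprime_iff_gcd_eq_one, ha₁.gcd_eq]; rfl
      · rw [Nat.coprime_iff_gcd_eq_one, ha₂.gcd_eq]; simp
    · have hp8 : p % 8 = 5 := (hpa.of_mul_right k).trans ha₁
      have hpk : p ≡ 1 [MOD k] := (hpa.of_mul_left 8).trans ha₂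
      push_cast
      rw [jacobiSym.mul_left, jacobiSym.at_two hp,
        jacobiSym.quadratic_reciprocity_one_mod_four hk4 hp,
        jacobiSym_congr (c := 1) (Nat.modEq_iff_dvd.1 hpk.symm), jacobiSym.one_left,
        ZMod.χ₈_nat_eq_if_mod_eight]
      simp [hp8, show p % 2 = 1 by omega]
  · obtain ⟨a, ha, hJ⟩ := exists_jacobiSym_eq_neg_one hn hodd hsq
    have hn4 : n % 4 = 1 := Nat.mod_four_eq_one_of_odd hodd dvd_rfl h4
    refine ⟨a, n, by omega, ha, ⟨4, by ring⟩, fun p hp hpa => ?_⟩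
    rw [jacobiSym.quadratic_reciprocity_one_mod_four hn4 hp,
      jacobiSym_congr (Nat.modEq_iff_dvd.1 hpa.symm), hJ]

theorem exists_prime_jacobiSym_eq_neg_one {b b' : ℕ} (hb : 1 < b) (hb' : 1 < b') (hodd : Odd b)
    (hsq : Squarefree (b * b')) (h4 : ∀ q : ℕ, q.Prime → q ≠ 2 → q ∣ b * b' → q % 4 = 1) :
    ∃ p : ℕ, p.Prime ∧ p ≠ 2 ∧ p.Coprime (b * b') ∧ J(b | p) = -1 ∧ J(b' | p) = -1 := by
  obtain ⟨hbb', hbsq, hb'sq⟩ := Nat.squarefree_mul_iff.1 hsq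
  have hb4 : b % 4 = 1 := Nat.mod_four_eq_one_of_odd hodd (dvd_mul_right b b') h4
  obtain ⟨a, ha, hJ⟩ := exists_jacobiSym_eq_neg_one hb hodd hbsq
  obtain ⟨a', M, hM, ha', hMd, hJ'⟩ := exists_residue_jacobiSym_eq_neg_one hb' hb'sq
    fun q hq hq2 hd => h4 q hq hq2 (hd.mul_left b)
  have hcop : b.Coprime M := by
    refine Nat.Coprime.coprime_dvd_right hMd (Nat.Coprime.mul_right ?_ hbb')
    exact Nat.Coprime.pow_right 2 (Nat.coprime_two_right.2 hodd)
  obtain ⟨c, hc₁, hc₂⟩ := Nat.chineseRemainder hcop a a'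
  have hc : c.Coprime (b * M) := by
    apply Nat.Coprime.mul_right
    · rwa [Nat.coprime_iff_gcd_eq_one, hc₁.gcd_eq]
    · rwa [Nat.coprime_iff_gcd_eq_one, hc₂.gcd_eq]
  have : NeZero (b * M) := ⟨mul_ne_zero (by omega) hM⟩
  obtain ⟨p, hpgt, hp, hpc⟩ := Nat.forall_exists_prime_gt_and_eq_mod
    ((ZMod.isUnit_iff_coprime c (b * M)).2 hc) (b * b' + 2)
  have hpc' := (ZMod.natCast_eq_natCast_iff _ _ _).1 hpc
  have hpodd : Odd p := hp.odd_of_ne_two (by omega)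
  refine ⟨p, hp, by omega, ?_, ?_, hJ' p hpodd ((hpc'.of_mul_left b).trans hc₂)⟩
  · exact (Nat.Prime.coprime_iff_not_dvd hp).2 fun h =>
      absurd (Nat.le_of_dvd (by positivity) h) (by omega)
  · rw [jacobiSym.quadratic_reciprocity_one_mod_four hb4 hpodd,
      jacobiSym_congr (Nat.modEq_iff_dvd.1 ((hpc'.of_mul_right M).trans hc₁).symm), hJ]

theorem jacobiSym_eq_one_of_dvd_right {b b' s : ℕ} {u v w : ℤ} (hw : w = 1 ∨ w = -1)
    (h : b * u ^ 2 - b' * v ^ 2 = w) (hs : s ∣ b) (hs4 : s % 4 = 1) : J(b' | s) = 1 := by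
  obtain ⟨t, rfl⟩ := hs
  have hw2 : w * w = 1 := by rcases hw with rfl | rfl <;> rfl
  push_cast at h
  have := jacobiSym_eq_of_dvd_sq (c := 1) (e := b') (x := v) (n := s) (w := -w) hs4
    (by rcases hw with rfl | rfl <;> simp) isCoprime_one_left
    ⟨w * t * u ^ 2, by linear_combination -hw2 - w * h⟩
  rw [← this, jacobiSym.one_left]

theorem jacobiSym_eq_one_of_dvd_left {b b' r : ℕ} {u v w : ℤ} (hw : w = 1 ∨ w = -1)
    (h : b * u ^ 2 - b' * v ^ 2 = w) (hb4 : b % 4 = 1) (hr : r ∣ b')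
    (hsq : Squarefree b') (h4 : ∀ q : ℕ, q.Prime → q ≠ 2 → q ∣ b' → q % 4 = 1) :
    J(r | b) = 1 := by
  have key : ∀ k, k ∣ b' → Odd k → J(k | b) = 1 := by
    intro k hk hodd
    have hk4 : k % 4 = 1 := Nat.mod_four_eq_one_of_odd hodd hk h4
    rw [jacobiSym.quadratic_reciprocity_one_mod_four hk4 (Nat.odd_iff.2 (by omega))]
    exact jacobiSym_eq_one_of_dvd_right (b := b') (u := v) (v := u) (w := -w)
      (by rcases hw with rfl | rfl <;> simp) (by linear_combination -h) hk hk4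
  rcases Nat.even_or_odd r with hev | hodd
  · obtain ⟨k, rfl⟩ := hev.two_dvd
    obtain ⟨l, rfl⟩ := hr
    have hcop : Nat.Coprime 2 (k * l) :=
      (Nat.squarefree_mul_iff.1 (by rwa [mul_assoc] at hsq)).1
    have hkl : Odd (k * l) := Nat.coprime_two_left.1 hcop
    have hkl4 : k * l % 4 = 1 := Nat.mod_four_eq_one_of_odd hkl
      ⟨2, by ring⟩ h4
    push_cast
    rw [jacobiSym.mul_left, key k ⟨2 * l, by ring⟩ (Nat.odd_mul.1 hkl).1, mul_one,
      jacobiSym.at_two (Nat.odd_iff.2 (by omega)), ZMod.χ₈_nat_eq_if_mod_eight]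
    have hb8 : b % 8 = 1 := by
      have h' : (b : ℤ) * u ^ 2 - 2 * ((k * l : ℕ) : ℤ) * v ^ 2 = w := by
        rw [← h]; push_cast; ring
      have hb8' : b % 8 = 1 ∨ b % 8 = 5 := by omega
      have hu : u % 2 = 1 := by
        by_contra hu
        obtain ⟨u', rfl⟩ : ∃ z, u = 2 * z := ⟨u / 2, by omega⟩
        have : 2 * (2 * b * u' ^ 2 - ((k * l : ℕ) : ℤ) * v ^ 2) = w := by rw [← h']; ring
        omega
      have hu8 : u ^ 2 % 8 = 1 := by
        rcases (by omega : u % 8 = 1 ∨ u % 8 = 3 ∨ u % 8 = 5 ∨ u % 8 = 7) with h | h | h | h <;>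
          simp [pow_two, Int.mul_emod, h]
      have hv4 : v ^ 2 % 4 = 0 ∨ v ^ 2 % 4 = 1 := by
        rcases (by omega : v % 4 = 0 ∨ v % 4 = 1 ∨ v % 4 = 2 ∨ v % 4 = 3) with h | h | h | h <;>
          simp [pow_two, Int.mul_emod, h]
      have e1 : (b * u ^ 2 : ℤ) % 8 = b % 8 := by rw [Int.mul_emod, hu8]; omega
      have e2 : (((k * l : ℕ) : ℤ) * v ^ 2) % 4 = v ^ 2 % 4 := by
        rw [Int.mul_emod, show ((k * l : ℕ) : ℤ) % 4 = 1 by exact_mod_cast hkl4]; omega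
      rw [mul_assoc] at h'
      omega
    simp [hb8, show b % 2 = 1 by omega]
  · exact key r hr hodd

section Conjugation

variable {K : Type*} [Field K] [NumberField K]

/-- `σ` is the nontrivial automorphism of the ring of integers of a quadratic field. -/
structure IsQuadraticConj (σ : 𝓞 K ≃+* 𝓞 K) : Prop where
  finrank : Module.finrank ℚ K = 2
  invol : ∀ x, σ (σ x) = x
  norm : ∀ x, ((Algebra.norm ℤ x : ℤ) : 𝓞 K) = x * σ x
  fixed : ∀ x, σ x = x → ∃ n : ℤ, x = n

/-- `D` is a square root of the squarefree integer `d` generating the quadratic field. -/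
structure IsQuadraticSqrt (σ : 𝓞 K ≃+* 𝓞 K) (d : ℤ) (D : 𝓞 K) : Prop where
  squarefree : Squarefree d
  sq : D ^ 2 = d
  conj : σ D = -D
  repr : ∀ x, ∃ u v : ℤ, 2 * x = u + v * D

theorem exists_isQuadraticConj (h : Module.finrank ℚ K = 2) :
    ∃ σ : 𝓞 K ≃+* 𝓞 K, IsQuadraticConj σ := by
  classical
  have : Algebra.IsQuadraticExtension ℚ K := ⟨h⟩
  have hcard : Fintype.card Gal(K/ℚ) = 2 := by
    rw [← Nat.card_eq_fintype_card, IsGalois.card_aut_eq_finrank, h]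
  have : Nontrivial Gal(K/ℚ) := Fintype.one_lt_card_iff_nontrivial.1 (by omega)
  obtain ⟨τ, hτ⟩ := exists_ne (1 : Gal(K/ℚ))
  have huniv : (Finset.univ : Finset Gal(K/ℚ)) = {1, τ} := by
    symm
    apply Finset.eq_univ_of_card
    rw [hcard, Finset.card_pair hτ.symm]
  have hττ : ∀ x, τ (τ x) = x := by
    intro x
    have h1 : τ * τ ∈ ({1, τ} : Finset Gal(K/ℚ)) := huniv ▸ Finset.mem_univ _
    rw [Finset.mem_insert, Finset.mem_singleton] at h1
    rcases h1 with h1 | h1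
    · exact congrArg (fun f : Gal(K/ℚ) => f x) h1
    · exact absurd (mul_eq_right.1 h1) hτ
  let σ : 𝓞 K ≃+* 𝓞 K := RingOfIntegers.mapRingEquiv τ.toRingEquiv
  have hσ : ∀ x : 𝓞 K, ((σ x : 𝓞 K) : K) = τ x := fun x => rfl
  refine ⟨σ, h, fun x => ?_, fun x => ?_, fun x hx => ?_⟩
  · apply RingOfIntegers.ext
    rw [hσ, hσ, hττ]
  · apply RingOfIntegers.ext
    have h1 := Algebra.norm_eq_prod_automorphisms ℚ (x : K)
    rw [huniv, Finset.prod_pair hτ.symm, ← Algebra.coe_norm_int] at h1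
    simpa [hσ] using h1
  · have h1 : (x : K) ∈ (⊥ : IntermediateField ℚ K) := by
      rw [IsGalois.mem_bot_iff_fixed]
      intro f
      have h1 : f ∈ ({1, τ} : Finset Gal(K/ℚ)) := huniv ▸ Finset.mem_univ _
      rw [Finset.mem_insert, Finset.mem_singleton] at h1
      rcases h1 with rfl | rfl
      · rfl
      · rw [← hσ, hx]
    obtain ⟨q, hq⟩ := IntermediateField.mem_bot.1 h1
    have h2 : IsIntegral ℤ q := by
      rw [← isIntegral_algebraMap_iff (algebraMap ℚ K).injective, hq]
      exact x.isIntegral_coe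
    obtain ⟨n, rfl⟩ := IsIntegrallyClosed.isIntegral_iff.1 h2
    refine ⟨n, RingOfIntegers.ext ?_⟩
    rw [← hq]; simp

namespace IsQuadraticConj

variable {σ : 𝓞 K ≃+* 𝓞 K}

theorem exists_sqrt (hσ : IsQuadraticConj σ) :
    ∃ (d : ℤ) (D : 𝓞 K), IsQuadraticSqrt σ d D := by
  obtain ⟨θ, hθ⟩ : ∃ θ : 𝓞 K, σ θ ≠ θ := by
    by_contra! hall
    have hbot : ∀ x : K, x ∈ (⊥ : Subalgebra ℚ K) := by
      intro x
      obtain ⟨y, z, hz, rfl⟩ := IsFractionRing.div_surjective (A := 𝓞 K) x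
      obtain ⟨m, rfl⟩ := hσ.fixed y (hall y)
      obtain ⟨n, rfl⟩ := hσ.fixed z (hall z)
      exact ⟨(m : ℚ) / n, by simp⟩
    have h1 : (⊥ : Subalgebra ℚ K) = ⊤ := by ext x; simp [hbot x]
    have h2 := hσ.finrank
    have h3 := Subalgebra.bot_eq_top_iff_finrank_eq_one.1 h1
    omega
  have hconj : σ (θ - σ θ) = -(θ - σ θ) := by rw [map_sub, hσ.invol]; ring
  have hne : θ - σ θ ≠ 0 := sub_ne_zero.2 hθ.symm
  obtain ⟨e, he⟩ := hσ.fixed ((θ - σ θ) ^ 2) (by rw [map_pow, hconj]; ring)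
  have he0 : e ≠ 0 := by
    rintro rfl
    exact hne (by simpa using he)
  obtain ⟨a, s, hs, hsq⟩ := Nat.sq_mul_squarefree e.natAbs
  obtain ⟨d, hd, hdsq⟩ : ∃ d : ℤ, e = s ^ 2 * d ∧ Squarefree d := by
    refine ⟨e.sign * a, ?_, ?_⟩
    · conv_lhs => rw [← Int.sign_mul_natAbs e, ← hs]
      push_cast; ring
    · rw [← Int.squarefree_natAbs, Int.natAbs_mul, Int.natAbs_sign_of_ne_zero he0, one_mul]
      simpa using hsq
  have hs0 : (s : K) ≠ 0 := by
    rintro h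
    have : s = 0 := by exact_mod_cast h
    rw [this] at hd
    simp [he0] at hd
  have hIntegral : IsIntegral ℤ (((θ - σ θ : 𝓞 K) : K) / s) := by
    refine IsIntegral.of_pow (n := 2) two_pos ?_
    have : (((θ - σ θ : 𝓞 K) : K) / s) ^ 2 = algebraMap ℤ K d := by
      rw [div_pow, div_eq_iff (pow_ne_zero 2 hs0)]
      have := congrArg (algebraMap (𝓞 K) K) he
      rw [hd] at this
      rw [map_pow] at this
      rw [this]
      push_cast
      simp
      ring
    rw [this]
    exact isIntegral_algebraMap
  let D : 𝓞 K := ⟨_, hIntegral⟩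
  have hsD : (s : 𝓞 K) * D = θ - σ θ := by
    apply RingOfIntegers.ext
    change algebraMap (𝓞 K) K (s * D) = _
    rw [map_mul, map_natCast]
    change (s : K) * (((θ - σ θ : 𝓞 K) : K) / s) = _
    field_simp
  have hs0' : (s : 𝓞 K) ≠ 0 := by
    intro h; apply hs0; simpa using congrArg (algebraMap (𝓞 K) K) h
  have hD2 : D ^ 2 = d := by
    apply mul_left_cancel₀ (pow_ne_zero 2 hs0')
    rw [← mul_pow, hsD, he, hd]; push_cast; ring
  have hDc : σ D = -D := by
    apply mul_left_cancel₀ hs0'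
    have := hconj
    rw [← hsD, map_mul, map_natCast] at this
    rw [this]; ring
  have hd0 : d ≠ 0 := hdsq.ne_zero
  have hD0 : D ≠ 0 := by
    rintro h
    rw [h] at hD2
    apply hd0
    have : (d : 𝓞 K) = 0 := by rw [← hD2]; simp
    exact_mod_cast this
  refine ⟨d, D, hdsq, hD2, hDc, fun x => ?_⟩
  obtain ⟨u, hu⟩ := hσ.fixed (x + σ x) (by rw [map_add, hσ.invol]; ring)
  obtain ⟨w, hw⟩ := hσ.fixed ((x - σ x) * D) (by rw [map_mul, map_sub, hσ.invol, hDc]; ring)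
  obtain ⟨n, hn⟩ := hσ.fixed ((x - σ x) ^ 2) (by rw [map_pow, map_sub, hσ.invol]; ring)
  have hdw : d ∣ w := by
    apply hdsq.isRadical 2 w
    refine ⟨n, ?_⟩
    have : ((w ^ 2 : ℤ) : 𝓞 K) = ((d * n : ℤ) : 𝓞 K) := by
      push_cast
      rw [← hw, ← hn, ← hD2]; ring
    exact_mod_cast this
  obtain ⟨v, rfl⟩ := hdw
  refine ⟨u, v, ?_⟩
  have h1 : x - σ x = v * D := by
    apply mul_right_cancel₀ hD0
    rw [hw, Int.cast_mul, ← hD2]; ring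
  rw [← hu, ← h1]; ring

theorem norm_intCast (hσ : IsQuadraticConj σ) (n : ℤ) : Algebra.norm ℤ (n : 𝓞 K) = n ^ 2 := by
  have : ((Algebra.norm ℤ (n : 𝓞 K) : ℤ) : 𝓞 K) = ((n ^ 2 : ℤ) : 𝓞 K) := by
    rw [hσ.norm, map_intCast]; push_cast; ring
  exact_mod_cast this

theorem absNorm_span_natCast (hσ : IsQuadraticConj σ) (n : ℕ) :
    Ideal.absNorm (Ideal.span {(n : 𝓞 K)}) = n ^ 2 := by
  rw [Ideal.absNorm_span_singleton]
  have := hσ.norm_intCast n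
  push_cast at this
  rw [this, Int.natAbs_pow, Int.natAbs_natCast]

theorem absNorm_map (I : Ideal (𝓞 K)) : Ideal.absNorm (I.map σ) = Ideal.absNorm I := by
  rw [Ideal.absNorm_apply, Ideal.absNorm_apply, Submodule.cardQuot_apply, Submodule.cardQuot_apply]
  exact (Nat.card_congr (Ideal.quotientEquiv I (I.map σ) σ rfl).toEquiv).symm

theorem map_map (hσ : IsQuadraticConj σ) (I : Ideal (𝓞 K)) : (I.map σ).map σ = I := by
  have : (σ : 𝓞 K →+* 𝓞 K).comp (σ : 𝓞 K →+* 𝓞 K) = RingHom.id _ := RingHom.ext hσ.invol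
  have h := Ideal.map_map (I := I) (σ : 𝓞 K →+* 𝓞 K) (σ : 𝓞 K →+* 𝓞 K)
  rw [this, Ideal.map_id] at h
  exact h

/-- An ideal times its conjugate is generated by its norm. -/
theorem mul_map_eq (hσ : IsQuadraticConj σ) (I : Ideal (𝓞 K)) :
    I * I.map σ = Ideal.span {(Ideal.absNorm I : 𝓞 K)} := by
  rcases eq_or_ne I ⊥ with rfl | hI
  · simp
  set n := Ideal.absNorm I with hn
  have hn0 : n ≠ 0 := by rwa [hn, Ne, Ideal.absNorm_eq_zero_iff]
  have hdvd : ∀ x ∈ I, (n : ℤ) ∣ Algebra.norm ℤ x := fun x hx => Ideal.absNorm_dvd_norm_of_mem hx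
  have hle : I * I.map σ ≤ Ideal.span {(n : 𝓞 K)} := by
    rw [Ideal.mul_le]
    intro x hx y' hy'
    obtain ⟨y, hy, rfl⟩ := (Ideal.mem_map_of_equiv σ y').1 hy'
    obtain ⟨t, ht⟩ : (n : ℤ) ∣ Algebra.norm ℤ (x + y) - Algebra.norm ℤ x - Algebra.norm ℤ y :=
      ((hdvd _ (I.add_mem hx hy)).sub (hdvd x hx)).sub (hdvd y hy)
    obtain ⟨a, ha⟩ := hdvd x hx
    obtain ⟨c, hc⟩ := hdvd y hy
    have htr : x * σ y + y * σ x = n * t := by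
      have := congrArg (Int.cast : ℤ → 𝓞 K) ht
      push_cast [hσ.norm] at this
      rw [map_add] at this
      linear_combination this
    have hnm : (x * σ y) * (y * σ x) = n ^ 2 * (a * c) := by
      have h1 := congrArg (Int.cast : ℤ → 𝓞 K) ha
      have h2 := congrArg (Int.cast : ℤ → 𝓞 K) hc
      push_cast [hσ.norm] at h1 h2
      calc (x * σ y) * (y * σ x) = (x * σ x) * (y * σ y) := by ring
        _ = _ := by rw [h1, h2]; ring
    have hn0K : (n : K) ≠ 0 := by exact_mod_cast hn0
    have hIntegral : IsIntegral ℤ (((x * σ y : 𝓞 K) : K) / n) := by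
      refine ⟨Polynomial.X ^ 2 - Polynomial.C t * Polynomial.X + Polynomial.C (a * c), ?_, ?_⟩
      · monicity!
      · have h3 : (x * σ y) ^ 2 - n * t * (x * σ y) + n ^ 2 * (a * c) = 0 := by
          rw [← htr, ← hnm]; ring
        have h4 := congrArg (algebraMap (𝓞 K) K) h3
        simp only [map_add, map_sub, map_mul, map_pow, map_natCast, map_intCast, map_zero] at h4
        simp only [Polynomial.eval₂_add, Polynomial.eval₂_sub, Polynomial.eval₂_mul,
          Polynomial.eval₂_pow, Polynomial.eval₂_X, Polynomial.eval₂_C, map_mul]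
        simp only [eq_intCast]
        field_simp
        linear_combination h4
    rw [Ideal.mem_span_singleton]
    let z : 𝓞 K := ⟨_, hIntegral⟩
    refine ⟨z, RingOfIntegers.ext ?_⟩
    change _ = algebraMap (𝓞 K) K (n * z)
    rw [map_mul, map_natCast]
    change _ = (n : K) * (((x * σ y : 𝓞 K) : K) / n)
    field_simp
  obtain ⟨C, hC⟩ := Ideal.dvd_iff_le.2 hle
  have h1 := congrArg Ideal.absNorm hC
  rw [map_mul, map_mul, absNorm_map, hσ.absNorm_span_natCast, ← hn, ← sq] at h1
  have h2 : Ideal.absNorm C = 1 := by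
    have : 0 < n ^ 2 := by positivity
    nlinarith
  rw [hC, Ideal.absNorm_eq_one_iff.1 h2, Ideal.mul_top]

end IsQuadraticConj

end Conjugation

section Ambiguous

variable {K : Type*} [Field K] [NumberField K] {σ : 𝓞 K ≃+* 𝓞 K}

theorem Ideal.eq_of_dvd_of_absNorm_eq {I J : Ideal (𝓞 K)} (hJ : J ≠ ⊥) (h : I ∣ J)
    (hn : Ideal.absNorm I = Ideal.absNorm J) : I = J := by
  obtain ⟨X, rfl⟩ := h
  have h0 : Ideal.absNorm (I * X) ≠ 0 := by rwa [Ne, Ideal.absNorm_eq_zero_iff]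
  rw [map_mul] at h0 hn
  have h1 : Ideal.absNorm X = 1 := by
    have : Ideal.absNorm I ≠ 0 := left_ne_zero_of_mul h0
    exact (Nat.mul_eq_left this).1 hn.symm
  rw [Ideal.absNorm_eq_one_iff.1 h1, Ideal.mul_top]

theorem Ideal.exists_intCast_sub_mem {P : Ideal (𝓞 K)} (hP : (Ideal.absNorm P).Prime) (x : 𝓞 K) :
    ∃ n : ℤ, x - n ∈ P := by
  have : Fact (Ideal.absNorm P).Prime := ⟨hP⟩
  have hcard : Nat.card (𝓞 K ⧸ P) = Ideal.absNorm P := by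
    rw [Ideal.absNorm_apply, Submodule.cardQuot_apply]
  have hne : (1 : 𝓞 K ⧸ P) ≠ 0 := by
    have : Nontrivial (𝓞 K ⧸ P) := Ideal.Quotient.nontrivial_iff.2 (by
      rintro rfl
      simp [Nat.not_prime_one] at hP)
    exact one_ne_zero
  obtain ⟨n, hn⟩ := mem_zmultiples_of_prime_card hcard hne (g' := Ideal.Quotient.mk P x)
  refine ⟨n, Ideal.Quotient.eq.1 ?_⟩
  rw [← hn]; simp

namespace IsQuadraticConj

theorem exists_dvd_of_absNorm_eq (hσ : IsQuadraticConj σ) {I J : Ideal (𝓞 K)} (hI : I ≠ ⊥)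
    (h : Ideal.absNorm I = Ideal.absNorm J) :
    ∃ A, A ∣ I ∧ J * A ^ 2 = Ideal.span {(Ideal.absNorm A : 𝓞 K)} * I := by
  obtain ⟨A, hA⟩ : I ⊔ J ∣ I := Ideal.dvd_iff_le.2 le_sup_left
  obtain ⟨B, hB⟩ : I ⊔ J ∣ J := Ideal.dvd_iff_le.2 le_sup_right
  set C := I ⊔ J with hC
  have hC0 : C ≠ ⊥ := fun h => hI (by rw [hA, h, Ideal.bot_mul])
  have hN : Ideal.absNorm A = Ideal.absNorm B := by
    rw [hA, hB, map_mul, map_mul] at h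
    exact mul_left_cancel₀ (by rwa [Ne, Ideal.absNorm_eq_zero_iff]) h
  have hcop : IsCoprime A B := by
    rw [Ideal.isCoprime_iff_sup_eq]
    have : C * (A ⊔ B) = C * ⊤ := by
      rw [Ideal.mul_sup, ← hA, ← hB, Ideal.mul_top]
    exact mul_left_cancel₀ hC0 this
  have hB0 : B ≠ ⊥ := by
    rintro rfl
    rw [Ideal.absNorm_bot, Ideal.absNorm_eq_zero_iff] at hN
    exact hI (by rw [hA, hN, Ideal.mul_bot])
  have hAB : A ∣ B.map σ := by
    apply hcop.dvd_of_dvd_mul_left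
    rw [hσ.mul_map_eq, ← hN, ← hσ.mul_map_eq]
    exact dvd_mul_right _ _
  have hB0' : B.map σ ≠ ⊥ := by
    rwa [Ne, ← Ideal.absNorm_eq_zero_iff, absNorm_map, Ideal.absNorm_eq_zero_iff]
  have hAeq : A = B.map σ := Ideal.eq_of_dvd_of_absNorm_eq hB0' hAB (by rw [absNorm_map, hN])
  have hBeq : B = A.map σ := by rw [hAeq, hσ.map_map]
  refine ⟨A, hA ▸ dvd_mul_left _ _, ?_⟩
  rw [← hσ.mul_map_eq, ← hBeq]
  calc J * A ^ 2 = C * B * A ^ 2 := by rw [← hB]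
    _ = A * B * (C * A) := by ring
    _ = A * B * I := by rw [← hA]

end IsQuadraticConj

/-- `R` is invariant under conjugation and divisible by no rational integer other than `1`. -/
structure IsPrimitiveAmbiguous (σ : 𝓞 K ≃+* 𝓞 K) (R : Ideal (𝓞 K)) : Prop where
  map_eq : R.map σ = R
  eq_one : ∀ k : ℕ, Ideal.span {(k : 𝓞 K)} ∣ R → k = 1

theorem IsPrimitiveAmbiguous.ne_bot {R : Ideal (𝓞 K)} (hR : IsPrimitiveAmbiguous σ R) :
    R ≠ ⊥ := by
  rintro rfl
  have := hR.eq_one 2 (Ideal.dvd_iff_le.2 bot_le)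
  omega

namespace IsQuadraticConj

theorem exists_isPrimitiveAmbiguous (hσ : IsQuadraticConj σ) {R : Ideal (𝓞 K)} (hR : R ≠ ⊥)
    (hmap : R.map σ = R) :
    ∃ (k : ℕ) (S : Ideal (𝓞 K)), R = Ideal.span {(k : 𝓞 K)} * S ∧ IsPrimitiveAmbiguous σ S := by
  induction h : Ideal.absNorm R using Nat.strong_induction_on generalizing R with
  | _ n ih =>
    by_cases hprim : ∀ k : ℕ, Ideal.span {(k : 𝓞 K)} ∣ R → k = 1
    · exact ⟨1, R, by simp, hmap, hprim⟩
    · push Not at hprim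
      obtain ⟨k, ⟨S, hS⟩, hk⟩ := hprim
      have hk0 : Ideal.span {(k : 𝓞 K)} ≠ ⊥ := fun h0 => hR (by rw [hS, h0, Ideal.bot_mul])
      have hS0 : S ≠ ⊥ := fun h0 => hR (by rw [hS, h0, Ideal.mul_bot])
      have hSmap : S.map σ = S := by
        rw [hS, Ideal.map_mul, Ideal.map_span, Set.image_singleton, map_natCast] at hmap
        exact mul_left_cancel₀ hk0 hmap
      have hlt : Ideal.absNorm S < n := by
        rw [← h, hS, map_mul, hσ.absNorm_span_natCast]
        have h1 : 0 < Ideal.absNorm S :=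
          Nat.pos_of_ne_zero (by rwa [Ne, Ideal.absNorm_eq_zero_iff])
        have h2 : k ≠ 0 := by rintro rfl; simp at hk0
        have h3 : 1 < k ^ 2 := Nat.one_lt_pow two_ne_zero (by omega)
        exact (Nat.lt_mul_iff_one_lt_left h1).2 h3
      obtain ⟨l, T, hT, hprim⟩ := ih _ hlt hS0 hSmap rfl
      refine ⟨k * l, T, ?_, hprim⟩
      rw [hS, hT, ← mul_assoc, Ideal.span_singleton_mul_span_singleton, Nat.cast_mul]

/-- An ideal whose square has a generator of positive norm is, in the class group, inverse to a
primitive ambiguous ideal. -/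
theorem exists_mul_isPrimitiveAmbiguous (hσ : IsQuadraticConj σ) {I : Ideal (𝓞 K)} (hI : I ≠ ⊥)
    {γ : 𝓞 K} (hγ : I ^ 2 = Ideal.span {γ})
    (hnorm : Algebra.norm ℤ γ = (Ideal.absNorm I : ℤ) ^ 2) :
    ∃ (δ : 𝓞 K) (R : Ideal (𝓞 K)), δ ≠ 0 ∧ Ideal.span {δ} = I * R ∧
      IsPrimitiveAmbiguous σ R := by
  set m := Ideal.absNorm I with hm
  have hm0 : (m : 𝓞 K) ≠ 0 := by
    rw [Ne, Nat.cast_eq_zero, hm, Ideal.absNorm_eq_zero_iff]; exact hI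
  have hmI : (m : 𝓞 K) ∈ I := Ideal.absNorm_mem I
  have hγI : γ ∈ I := by
    have : γ ∈ I ^ 2 := hγ ▸ Ideal.mem_span_singleton_self γ
    exact Ideal.pow_le_self two_ne_zero this
  have hγγ : γ * σ γ = m ^ 2 := by rw [← hσ.norm, hnorm]; simp
  have hIm : I.map σ ≠ ⊥ := by
    rwa [Ne, ← Ideal.absNorm_eq_zero_iff, absNorm_map, Ideal.absNorm_eq_zero_iff]
  obtain ⟨δ, R, hδ, hδR, hRmap⟩ : ∃ (δ : 𝓞 K) (R : Ideal (𝓞 K)), δ ≠ 0 ∧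
      Ideal.span {δ} = I * R ∧ R.map σ = R := by
    by_cases h0 : (m : 𝓞 K) + γ = 0
    · refine ⟨m, I.map σ, hm0, (hσ.mul_map_eq I).symm, ?_⟩
      have h1 : I * I.map σ = I * I := by
        rw [hσ.mul_map_eq, ← sq, hγ, eq_neg_of_add_eq_zero_right h0, Ideal.span_singleton_neg]
      rw [mul_left_cancel₀ hI h1, mul_left_cancel₀ hI h1]
    · obtain ⟨R, hR⟩ : I ∣ Ideal.span {(m : 𝓞 K) + γ} := by
        rw [Ideal.dvd_iff_le, Ideal.span_singleton_le_iff_mem]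
        exact I.add_mem hmI hγI
      refine ⟨m + γ, R, h0, hR, ?_⟩
      have h1 : Ideal.span {γ} * (Ideal.span {(m : 𝓞 K) + γ}).map σ =
          Ideal.span {(m : 𝓞 K)} * Ideal.span {(m : 𝓞 K) + γ} := by
        rw [Ideal.map_span, Set.image_singleton, Ideal.span_singleton_mul_span_singleton,
          Ideal.span_singleton_mul_span_singleton]
        congr 2
        rw [map_add, map_natCast, mul_add, hγγ]; ring
      rw [hR, ← hγ, ← hσ.mul_map_eq, Ideal.map_mul] at h1
      have h2 : I ^ 2 * I.map σ ≠ 0 := mul_ne_zero (pow_ne_zero 2 hI) hIm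
      apply mul_left_cancel₀ h2
      calc I ^ 2 * I.map σ * R.map σ = I ^ 2 * (I.map σ * R.map σ) := by ring
        _ = I * I.map σ * (I * R) := h1
        _ = I ^ 2 * I.map σ * R := by ring
  have hR0 : R ≠ ⊥ := by
    rintro rfl
    rw [Ideal.mul_bot, Ideal.span_singleton_eq_bot] at hδR
    exact hδ hδR
  obtain ⟨k, S, hS, hprim⟩ := hσ.exists_isPrimitiveAmbiguous hR0 hRmap
  have hk0 : Ideal.span {(k : 𝓞 K)} ≠ ⊥ := fun h0 => hR0 (by rw [hS, h0, Ideal.bot_mul])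
  obtain ⟨ε, hε⟩ : (k : 𝓞 K) ∣ δ := by
    rw [← Ideal.mem_span_singleton, ← Ideal.span_singleton_le_iff_mem, ← Ideal.dvd_iff_le, hδR, hS]
    exact Dvd.intro_left (I * S) (by ring)
  refine ⟨ε, S, fun h0 => hδ (by rw [hε, h0, mul_zero]), ?_, hprim⟩
  apply mul_left_cancel₀ hk0
  rw [Ideal.span_singleton_mul_span_singleton, ← hε, hδR, hS]
  ring

theorem exists_isPrime_of_dvd_absNorm (hσ : IsQuadraticConj σ) {I : Ideal (𝓞 K)} {q : ℕ}
    (hq : q.Prime) (h : q ∣ Ideal.absNorm I) :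
    ∃ P : Ideal (𝓞 K), P.IsPrime ∧ P ∣ I ∧ (q : 𝓞 K) ∈ P := by
  by_cases htop : I ⊔ Ideal.span {(q : 𝓞 K)} = ⊤
  · exfalso
    have h1 : IsCoprime I (Ideal.span {(q : 𝓞 K)}) := Ideal.isCoprime_iff_sup_eq.2 htop
    have h2 : IsCoprime (I.map σ) (Ideal.span {(q : 𝓞 K)}) := by
      rw [Ideal.isCoprime_iff_sup_eq]
      have := congrArg (Ideal.map σ) htop
      rwa [Ideal.map_sup, Ideal.map_span, Set.image_singleton, map_natCast, Ideal.map_top] at this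
    have h3 := Ideal.isCoprime_iff_sup_eq.1 (h1.mul_left h2)
    rw [hσ.mul_map_eq, sup_eq_right.2 (Ideal.span_singleton_le_span_singleton.2
      (Nat.cast_dvd_cast h))] at h3
    have h4 := hσ.absNorm_span_natCast q
    rw [h3, Ideal.absNorm_top] at h4
    have := hq.two_le
    nlinarith
  · obtain ⟨P, hP, hle⟩ := Ideal.exists_le_maximal _ htop
    exact ⟨P, hP.isPrime, Ideal.dvd_iff_le.2 (le_sup_left.trans hle),
      hle (Ideal.mem_sup_right (Ideal.mem_span_singleton_self _))⟩

theorem absNorm_eq_or_eq_span (hσ : IsQuadraticConj σ) {P : Ideal (𝓞 K)} [P.IsPrime] {q : ℕ}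
    (hq : q.Prime) (h : (q : 𝓞 K) ∈ P) :
    Ideal.absNorm P = q ∨ P = Ideal.span {(q : 𝓞 K)} := by
  have hdvd : P ∣ Ideal.span {(q : 𝓞 K)} := by
    rwa [Ideal.dvd_iff_le, Ideal.span_singleton_le_iff_mem]
  have h1 := map_dvd Ideal.absNorm hdvd
  rw [hσ.absNorm_span_natCast, Nat.dvd_prime_pow hq] at h1
  obtain ⟨i, hi, h1⟩ := h1
  interval_cases i
  · rw [pow_zero, Ideal.absNorm_eq_one_iff] at h1
    exact absurd h1 (Ideal.IsPrime.ne_top ‹_›)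
  · left; rw [h1, pow_one]
  · right
    refine Ideal.eq_of_dvd_of_absNorm_eq ?_ hdvd (by rw [h1, hσ.absNorm_span_natCast])
    rw [Ne, Ideal.span_singleton_eq_bot]
    exact_mod_cast hq.ne_zero

end IsQuadraticConj

namespace IsPrimitiveAmbiguous

theorem map_eq_of_isPrime (hσ : IsQuadraticConj σ) {R P : Ideal (𝓞 K)}
    (hR : IsPrimitiveAmbiguous σ R) (hP : Prime P) (h : P ∣ R) : P.map σ = P := by
  by_contra hne
  have hP' : P.IsPrime := Ideal.isPrime_of_prime hP
  have hmax : P.IsMaximal := hP'.isMaximal hP.ne_zero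
  have hmax' : (P.map σ).IsMaximal := Ideal.map_isMaximal_of_equiv σ
  have hcop : IsCoprime P (P.map σ) :=
    Ideal.isCoprime_iff_sup_eq.2 (hmax.coprime_of_ne hmax' (Ne.symm hne))
  have h2 : P.map σ ∣ R := by
    rw [← hR.map_eq, Ideal.dvd_iff_le]
    exact Ideal.map_mono (Ideal.dvd_iff_le.1 h)
  have h3 := hcop.mul_dvd h h2
  rw [hσ.mul_map_eq] at h3
  exact hP'.ne_top (Ideal.absNorm_eq_one_iff.1 (hR.eq_one _ h3))

theorem map_eq_of_dvd (hσ : IsQuadraticConj σ) {R A : Ideal (𝓞 K)}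
    (hR : IsPrimitiveAmbiguous σ R) (h : A ∣ R) : A.map σ = A := by
  induction A using UniqueFactorizationMonoid.induction_on_prime with
  | h₁ => exact absurd (zero_dvd_iff.1 h) hR.ne_bot
  | h₂ A hA => rw [Ideal.isUnit_iff.1 hA, Ideal.map_top]
  | h₃ A P hA hP ih =>
    rw [Ideal.map_mul, ih (dvd_of_mul_left_dvd h),
      hR.map_eq_of_isPrime hσ hP (dvd_of_mul_right_dvd h)]

theorem sq_eq_of_dvd (hσ : IsQuadraticConj σ) {R A : Ideal (𝓞 K)}
    (hR : IsPrimitiveAmbiguous σ R) (h : A ∣ R) :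
    A ^ 2 = Ideal.span {(Ideal.absNorm A : 𝓞 K)} := by
  rw [← hσ.mul_map_eq, hR.map_eq_of_dvd hσ h, sq]

theorem squarefree_absNorm (hσ : IsQuadraticConj σ) {R : Ideal (𝓞 K)}
    (hR : IsPrimitiveAmbiguous σ R) : Squarefree (Ideal.absNorm R) := by
  rw [Nat.squarefree_iff_prime_squarefree]
  rintro q hq ⟨t, ht⟩
  have h1 : Ideal.span {(q : 𝓞 K)} ^ 2 ∣ R ^ 2 := by
    rw [hR.sq_eq_of_dvd hσ dvd_rfl, Ideal.span_singleton_pow, Ideal.dvd_iff_le,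
      Ideal.span_singleton_le_span_singleton, ht]
    exact ⟨t, by push_cast; ring⟩
  exact hq.ne_one (hR.eq_one q ((UniqueFactorizationMonoid.pow_dvd_pow_iff_dvd two_ne_zero).1 h1))

theorem absNorm_dvd (hσ : IsQuadraticConj σ) {d : ℤ} {D : 𝓞 K} (hD : IsQuadraticSqrt σ d D)
    (hd : d % 4 = 1 ∨ 2 ∣ d) {R : Ideal (𝓞 K)} (hR : IsPrimitiveAmbiguous σ R) :
    Ideal.absNorm R ∣ d.natAbs := by
  rw [← Nat.prod_primeFactors_of_squarefree (hR.squarefree_absNorm hσ)]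
  apply Finset.prod_primes_dvd
  · exact fun q hq => (Nat.prime_of_mem_primeFactors hq).prime
  intro q hq
  obtain ⟨hq, hqR, -⟩ := Nat.mem_primeFactors.1 hq
  obtain ⟨P, hP, hPR, hqP⟩ := hσ.exists_isPrime_of_dvd_absNorm hq hqR
  rcases hσ.absNorm_eq_or_eq_span hq hqP with hNP | rfl
  swap
  · exact absurd (hR.eq_one q hPR) hq.ne_one
  have hPmap := hR.map_eq_of_dvd hσ hPR
  have hsub : ∀ x, x - σ x ∈ P := by
    intro x
    obtain ⟨n, hn⟩ := Ideal.exists_intCast_sub_mem (hNP ▸ hq) x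
    have h1 : σ (x - n) ∈ P := by
      have := Ideal.mem_map_of_mem σ hn
      rwa [hPmap] at this
    rw [map_sub, map_intCast] at h1
    have := P.sub_mem hn h1
    rwa [sub_sub_sub_cancel_right] at this
  have hDP : D ∈ P → q ∣ d.natAbs := by
    intro h
    have h1 := Ideal.absNorm_dvd_norm_of_mem h
    have h2 : Algebra.norm ℤ D = -d := by
      have : ((Algebra.norm ℤ D : ℤ) : 𝓞 K) = ((-d : ℤ) : 𝓞 K) := by
        rw [hσ.norm, hD.conj]; push_cast; rw [← hD.sq]; ring
      exact_mod_cast this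
    rw [h2, hNP, dvd_neg] at h1
    exact Int.natCast_dvd.1 h1
  rcases hd with hd | hd
  · apply hDP
    have hIntegral : IsIntegral ℤ ((1 + (D : K)) / 2) := by
      refine ⟨Polynomial.X ^ 2 - Polynomial.X - Polynomial.C (d / 4), ?_, ?_⟩
      · monicity!
      · have h4 : (d : K) = 4 * ((d / 4 : ℤ) : K) + 1 := by
          have : d = 4 * (d / 4) + 1 := by omega
          exact_mod_cast this
        have h5 := congrArg (algebraMap (𝓞 K) K) hD.sq
        rw [map_pow, map_intCast, h4] at h5
        simp only [Polynomial.eval₂_sub, Polynomial.eval₂_pow, Polynomial.eval₂_X,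
          Polynomial.eval₂_C]
        simp only [eq_intCast]
        linear_combination h5 / 4
    let z : 𝓞 K := ⟨_, hIntegral⟩
    have hz : 2 * z = 1 + D := by
      apply RingOfIntegers.ext
      change algebraMap (𝓞 K) K (2 * z) = algebraMap (𝓞 K) K (1 + D)
      rw [map_mul, map_ofNat, map_add, map_one]
      change (2 : K) * ((1 + (D : K)) / 2) = _
      field_simp
    have hz' : D = z - σ z := by
      have h2 := congrArg σ hz
      rw [map_mul, map_ofNat, map_add, map_one, hD.conj] at h2
      apply mul_left_cancel₀ (two_ne_zero' (𝓞 K))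
      linear_combination h2 - hz
    rw [hz']
    exact hsub z
  · rcases eq_or_ne q 2 with rfl | hq2
    · exact_mod_cast Int.natCast_dvd.1 hd
    apply hDP
    have h1 := hsub D
    rw [hD.conj, sub_neg_eq_add, ← two_mul] at h1
    rcases hP.mem_or_mem h1 with h2 | h2
    · exfalso
      apply hP.ne_top
      rw [Ideal.eq_top_iff_one]
      obtain ⟨k, hk⟩ := hq.odd_of_ne_two hq2
      have h3 := P.sub_mem hqP (P.mul_mem_right (k : 𝓞 K) h2)
      rw [hk] at h3
      push_cast at h3
      rwa [add_sub_cancel_left] at h3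
    · exact h2

end IsPrimitiveAmbiguous

end Ambiguous

section Genus

variable {K : Type*} [Field K] [NumberField K] {σ : 𝓞 K ≃+* 𝓞 K}

theorem Ideal.natCast_notMem_of_coprime {R : Type*} [CommRing R] {P : Ideal R} (hP : P ≠ ⊤)
    {m n : ℕ} (h : m.Coprime n) (hm : (m : R) ∈ P) : (n : R) ∉ P := by
  intro hn
  apply hP
  rw [Ideal.eq_top_iff_one]
  obtain ⟨x, y, hxy⟩ := (Nat.isCoprime_iff_coprime.2 h).map (Int.castRingHom R)
  simp only [map_natCast] at hxy
  rw [← hxy]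
  exact P.add_mem (P.mul_mem_left _ hm) (P.mul_mem_left _ hn)

theorem Ideal.exists_prime_natCast_mem {R : Type*} [CommRing R] {P : Ideal R} [hP : P.IsPrime]
    {n : ℕ} (hn0 : n ≠ 0) (hn : (n : R) ∈ P) : ∃ q : ℕ, q.Prime ∧ (q : R) ∈ P := by
  induction n using Nat.recOnMul with
  | zero => exact absurd rfl hn0
  | one => exact absurd ((Ideal.eq_top_iff_one P).2 (by simpa using hn)) hP.ne_top
  | prime q hq => exact ⟨q, hq, hn⟩
  | mul a b iha ihb =>
    rw [Nat.cast_mul] at hn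
    rcases hP.mem_or_mem hn with h | h
    · exact iha (left_ne_zero_of_mul hn0) h
    · exact ihb (right_ne_zero_of_mul hn0) h

theorem Ideal.isPrincipal_mul_iff {R : Type*} [CommRing R] [IsDedekindDomain R] {I J : Ideal R}
    (hI : I ≠ ⊥) (hI' : I.IsPrincipal) : (I * J).IsPrincipal ↔ J.IsPrincipal := by
  obtain ⟨a, rfl⟩ : ∃ a, I = Ideal.span {a} := hI'.principal
  constructor
  · rintro ⟨c, hc⟩
    change _ = Ideal.span {c} at hc
    obtain ⟨e, rfl⟩ : a ∣ c := by
      apply Ideal.span_singleton_le_span_singleton.1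
      rw [← hc]
      exact Ideal.mul_le_left
    refine ⟨e, ?_⟩
    rw [← Ideal.span_singleton_mul_span_singleton] at hc
    exact mul_left_cancel₀ hI hc
  · rintro ⟨c, hc⟩
    refine ⟨a * c, ?_⟩
    rw [hc]
    exact Ideal.span_singleton_mul_span_singleton a c

/-- If a prime `P` divides `p ^ 2 - b * y ^ 2` and none of `2 * b`, `y`, then the norm of `P` is a
quadratic residue modulo `b`. -/
theorem IsQuadraticConj.jacobiSym_absNorm_of_isPrime (hσ : IsQuadraticConj σ) {b p : ℕ}
    (hb : b % 4 = 1) {y : 𝓞 K} {P : Ideal (𝓞 K)} [hP : P.IsPrime] (hP0 : P ≠ ⊥)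
    (hf : (p : 𝓞 K) ^ 2 - b * y ^ 2 ∈ P) (hbP : ((2 * b : ℕ) : 𝓞 K) ∉ P) (hy : y ∉ P) :
    (Ideal.absNorm P).Coprime b ∧ J(Ideal.absNorm P | b) = 1 := by
  obtain ⟨q, hq, hqP⟩ := Ideal.exists_prime_natCast_mem
    (by rwa [Ne, Ideal.absNorm_eq_zero_iff]) (Ideal.absNorm_mem P)
  have hq2b : q.Coprime (2 * b) := by
    refine (Nat.Prime.coprime_iff_not_dvd hq).2 ?_
    rintro ⟨t, ht⟩
    apply hbP
    rw [ht, Nat.cast_mul]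
    exact P.mul_mem_right _ hqP
  have hqb : q.Coprime b := hq2b.coprime_mul_left_right
  rcases hσ.absNorm_eq_or_eq_span hq hqP with hN | hN
  swap
  · rw [hN, hσ.absNorm_span_natCast]
    refine ⟨hqb.pow_left 2, ?_⟩
    push_cast
    exact jacobiSym.sq_one' (by simpa using hqb)
  rw [hN]
  refine ⟨hqb, ?_⟩
  have hmem : ∀ n : ℤ, (n : 𝓞 K) ∈ P ↔ (q : ℤ) ∣ n := by
    intro n
    constructor
    · intro h
      have h1 := Ideal.absNorm_dvd_norm_of_mem h
      rw [hN, hσ.norm_intCast] at h1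
      exact Int.Prime.dvd_pow' hq h1
    · rintro ⟨t, rfl⟩
      push_cast
      exact P.mul_mem_right _ hqP
  obtain ⟨t, ht⟩ := Ideal.exists_intCast_sub_mem (hN ▸ hq) y
  have htP : (t : 𝓞 K) ∉ P := fun h => hy (by simpa using P.add_mem ht h)
  have hdvd : (q : ℤ) ∣ (p : ℤ) ^ 2 - b * t ^ 2 := by
    rw [← hmem]
    push_cast
    have h1 : (p : 𝓞 K) ^ 2 - b * t ^ 2 = (p ^ 2 - b * y ^ 2) + b * (y + t) * (y - t) := by ring
    rw [h1]
    exact P.add_mem hf (P.mul_mem_left _ ht)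
  have hgcd : ∀ n : ℤ, (n : 𝓞 K) ∉ P → n.gcd q = 1 := by
    intro n hn
    rw [hmem] at hn
    rw [Int.gcd_comm]
    exact Int.isCoprime_iff_gcd_eq_one.1 ((Nat.prime_iff_prime_int.1 hq).coprime_iff_not_dvd.2 hn)
  have hpP : ((p : ℤ) : 𝓞 K) ∉ P := by
    intro h
    have h1 : (b : 𝓞 K) * y ^ 2 ∈ P := by
      have h2 : (p : 𝓞 K) ^ 2 ∈ P := by
        rw [pow_two]; exact P.mul_mem_left _ (by simpa using h)
      simpa using P.sub_mem h2 hf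
    rcases hP.mem_or_mem h1 with h1 | h1
    · exact hbP (by push_cast; exact P.mul_mem_left _ h1)
    · exact hy (hP.mem_of_pow_mem 2 h1)
  have hJ := jacobiSym_congr hdvd
  rw [jacobiSym.sq_one' (hgcd _ hpP), jacobiSym.mul_left, jacobiSym.sq_one' (hgcd _ htP),
    mul_one] at hJ
  have hqodd : Odd q := (Nat.coprime_two_right).1 hq2b.coprime_mul_right_right
  rw [← jacobiSym.quadratic_reciprocity_one_mod_four hb hqodd, ← hJ]

namespace IsQuadraticSqrt

variable {d : ℤ} {D : 𝓞 K}

theorem norm_eq (hσ : IsQuadraticConj σ) (hD : IsQuadraticSqrt σ d D) (u v : ℤ) :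
    Algebra.norm ℤ (u + v * D : 𝓞 K) = u ^ 2 - d * v ^ 2 := by
  have : ((Algebra.norm ℤ (u + v * D : 𝓞 K) : ℤ) : 𝓞 K) = ((u ^ 2 - d * v ^ 2 : ℤ) : 𝓞 K) := by
    rw [hσ.norm, map_add, map_mul, map_intCast, map_intCast, hD.conj]
    push_cast
    rw [← hD.sq]; ring
  exact_mod_cast this

theorem exists_four_mul_norm_eq (hσ : IsQuadraticConj σ) (hD : IsQuadraticSqrt σ d D) (x : 𝓞 K) :
    ∃ u v : ℤ, 4 * Algebra.norm ℤ x = u ^ 2 - d * v ^ 2 := by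
  obtain ⟨u, v, h⟩ := hD.repr x
  refine ⟨u, v, ?_⟩
  rw [← hD.norm_eq hσ, ← h, map_mul]
  have := hσ.norm_intCast 2
  push_cast at this
  rw [this]

theorem map_eq_of_mem (hD : IsQuadraticSqrt σ d D) {P : Ideal (𝓞 K)} [hP : P.IsPrime]
    (hP0 : P ≠ ⊥) (h2 : (2 : 𝓞 K) ∉ P) (h : D ∈ P) : P.map σ = P := by
  have hmax : P.IsMaximal := hP.isMaximal hP0
  have hmax' : (P.map σ).IsMaximal := Ideal.map_isMaximal_of_equiv σ
  refine hmax'.eq_of_le hP.ne_top ?_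
  rw [Ideal.map_le_iff_le_comap]
  intro x hx
  rw [Ideal.mem_comap]
  obtain ⟨u, v, hx2⟩ := hD.repr x
  have hvD : (v : 𝓞 K) * D ∈ P := P.mul_mem_left _ h
  have h3 := congrArg σ hx2
  rw [map_mul, map_ofNat, map_add, map_mul, map_intCast, map_intCast, hD.conj] at h3
  have h4 : 2 * σ x = 2 * x - 2 * (v * D) := by rw [h3, hx2]; ring
  refine (hP.mem_or_mem (?_ : 2 * σ x ∈ P)).resolve_left h2
  rw [h4]
  exact P.sub_mem (P.mul_mem_left _ hx) (P.mul_mem_left _ hvD)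

/-- If `b * b' = d` is a factorization for which `J(· | b)` is a genus character, this character
is trivial on ideals whose square has a generator of positive norm. -/
theorem jacobiSym_absNorm_eq_one (hσ : IsQuadraticConj σ) (hD : IsQuadraticSqrt σ d D)
    (hd : d % 4 = 1 ∨ 2 ∣ d) {b b' : ℕ} (hbb : (b * b' : ℕ) = d)
    (hb : ∀ q : ℕ, q.Prime → q ∣ b → q % 4 = 1) (hr : ∀ r : ℕ, r ∣ b' → J(r | b) = 1)
    (hs : ∀ s : ℕ, s ∣ b → J(b' | s) = 1) {I : Ideal (𝓞 K)} (hI : I ≠ ⊥) {γ : 𝓞 K}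
    (hγ : I ^ 2 = Ideal.span {γ}) (hnorm : Algebra.norm ℤ γ = (Ideal.absNorm I : ℤ) ^ 2)
    (hcop : (Ideal.absNorm I).Coprime b) : J(Ideal.absNorm I | b) = 1 := by
  obtain ⟨δ, R, -, hδ, hR⟩ := hσ.exists_mul_isPrimitiveAmbiguous hI hγ hnorm
  have hrd := hR.absNorm_dvd hσ hD hd
  rw [← hbb, Int.natAbs_natCast] at hrd
  have hsq : Squarefree (b * b') := by
    have := hD.squarefree
    rwa [← hbb, Int.squarefree_natCast] at this
  have hN := congrArg Ideal.absNorm hδ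
  rw [map_mul, Ideal.absNorm_span_singleton] at hN
  obtain ⟨x, y, hxy⟩ := hD.exists_four_mul_norm_eq hσ δ
  rw [← hbb] at hxy
  push_cast at hxy
  rcases Int.natAbs_eq (Algebra.norm ℤ δ) with h | h <;> rw [hN] at h
  · refine jacobiSym_eq_one_of_ambiguous (x := x) (y := y) hsq hb hr hs hrd hcop (Or.inl rfl) ?_
    rw [← hxy, h]; push_cast; ring
  · refine jacobiSym_eq_one_of_ambiguous (x := x) (y := y) hsq hb hr hs hrd hcop (Or.inr rfl) ?_
    rw [← hxy, h]; push_cast; ring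

theorem exists_isPrime_absNorm_eq (hσ : IsQuadraticConj σ) (hD : IsQuadraticSqrt σ d D) {p : ℕ}
    {k : ℤ} (hp : p.Prime) (hp2 : p ≠ 2) (hpd : p.Coprime d.natAbs) (hk : (p : ℤ) ∣ k ^ 2 - d) :
    ∃ P : Ideal (𝓞 K), P.IsPrime ∧ P.map σ ≠ P ∧ Ideal.absNorm P = p ∧
      ∀ P' : Ideal (𝓞 K), P'.IsPrime → ((p : 𝓞 K) ∈ P' ∧ (k - D : 𝓞 K) ∈ P' ↔ P' = P) := by
  have hnot : ∀ P : Ideal (𝓞 K), P.IsPrime → (p : 𝓞 K) ∈ P → (k - D : 𝓞 K) ∈ P →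
      σ (k - D) ∉ P := by
    intro P hP hpP h1 h2
    rw [map_sub, map_intCast, hD.conj] at h2
    have h3 : 2 * D ∈ P := by
      have := P.sub_mem h2 h1
      ring_nf at this ⊢
      exact this
    rcases hP.mem_or_mem h3 with h3 | h3
    · refine Ideal.natCast_notMem_of_coprime hP.ne_top ?_ hpP (n := 2) (by simpa using h3)
      exact (Nat.coprime_primes hp Nat.prime_two).2 hp2
    · refine Ideal.natCast_notMem_of_coprime hP.ne_top hpd hpP ?_
      have h4 : (d : 𝓞 K) ∈ P := by rw [← hD.sq, pow_two]; exact P.mul_mem_left _ h3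
      rcases Int.natAbs_eq d with h | h <;> rw [h] at h4
      · simpa using h4
      · simpa using h4
  have hnk : Algebra.norm ℤ (k - D : 𝓞 K) = k ^ 2 - d := by
    have := hD.norm_eq hσ k (-1)
    push_cast at this
    rw [neg_one_mul, ← sub_eq_add_neg] at this
    rw [this]; ring
  obtain ⟨P, hP, hPk, hpP⟩ := hσ.exists_isPrime_of_dvd_absNorm
    (I := Ideal.span {(k - D : 𝓞 K)}) hp (by
      rw [Ideal.absNorm_span_singleton, hnk]
      exact Int.natCast_dvd.1 hk)
  rw [Ideal.dvd_span_singleton] at hPk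
  have hPmap : P.map σ ≠ P := by
    intro h
    exact hnot P hP hpP hPk (by have := Ideal.mem_map_of_mem σ hPk; rwa [h] at this)
  have hNP : Ideal.absNorm P = p := by
    refine (hσ.absNorm_eq_or_eq_span hp hpP).resolve_right fun h => hPmap ?_
    rw [h, Ideal.map_span, Set.image_singleton, map_natCast]
  refine ⟨P, hP, hPmap, hNP, fun P' hP' => ⟨fun ⟨h1, h2⟩ => ?_, fun h => h ▸ ⟨hpP, hPk⟩⟩⟩
  have hP0 : P ≠ ⊥ := by
    rintro rfl
    rw [Ideal.absNorm_bot] at hNP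
    exact hp.ne_zero hNP.symm
  have hmul : P * P.map σ ≤ P' := by
    rw [hσ.mul_map_eq, hNP, Ideal.span_singleton_le_iff_mem]
    exact h1
  rcases hP'.mul_le.1 hmul with h | h
  · exact ((hP.isMaximal hP0).eq_of_le hP'.ne_top h).symm
  · exact absurd (h (Ideal.mem_map_of_mem σ hPk)) (hnot P' hP' h1 h2)

/-- For `p` split in the field, there is an element `f` divisible exactly twice by a prime
above `p`, all of whose other prime factors have norm a quadratic residue modulo `b`. -/
theorem exists_span_eq_sq_mul (hσ : IsQuadraticConj σ) (hD : IsQuadraticSqrt σ d D) {p b : ℕ}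
    {k : ℤ} (hp : p.Prime) (hp2 : p ≠ 2) (hpd : p.Coprime d.natAbs) (hk : (p : ℤ) ∣ k ^ 2 - d)
    (hb : b % 4 = 1) (hpb : p.Coprime b) :
    ∃ (f : 𝓞 K) (P Q : Ideal (𝓞 K)), f ≠ 0 ∧ Ideal.absNorm P = p ∧ Ideal.span {f} = P ^ 2 * Q ∧
      ∀ A, A ∣ Q → (Ideal.absNorm A).Coprime b ∧ J(Ideal.absNorm A | b) = 1 := by
  obtain ⟨P, hP, hPmap, hNP, huniq⟩ := hD.exists_isPrime_absNorm_eq hσ hp hp2 hpd hk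
  obtain ⟨hpP, hkP⟩ := (huniq P hP).2 rfl
  have hP0 : P ≠ ⊥ := by
    rintro rfl
    rw [Ideal.absNorm_bot] at hNP
    exact hp.ne_zero hNP.symm
  have hPprime : Prime P := Ideal.prime_of_isPrime hP0 hP
  set y : 𝓞 K := ((2 * b : ℕ) : 𝓞 K) * (k - D) ^ 2 with hy
  set f : 𝓞 K := (p : 𝓞 K) ^ 2 - b * y ^ 2 with hf
  have hyP : y ∈ P ^ 2 := Ideal.mul_mem_left _ _ (Ideal.pow_mem_pow hkP 2)
  have hfP : f ∈ P ^ 2 := by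
    refine Ideal.sub_mem _ (Ideal.pow_mem_pow hpP 2) (Ideal.mul_mem_left _ _ ?_)
    rw [pow_two y]
    exact Ideal.mul_mem_left _ _ hyP
  have hfP3 : f ∉ P ^ 3 := by
    intro h
    have h1 : y ^ 2 ∈ P ^ 3 := by
      have h2 := Ideal.pow_mem_pow hyP 2
      rw [← pow_mul] at h2
      exact Ideal.pow_le_pow_right (by norm_num) h2
    have h2 : (p : 𝓞 K) ^ 2 ∈ P ^ 3 := by
      simpa [hf] using Ideal.add_mem _ h (Ideal.mul_mem_left _ (b : 𝓞 K) h1)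
    rw [← Ideal.dvd_span_singleton, ← Ideal.span_singleton_pow, ← hNP, ← hσ.mul_map_eq, mul_pow,
      pow_succ, mul_dvd_mul_iff_left (pow_ne_zero 2 hP0)] at h2
    have h3 := hPprime.dvd_of_dvd_pow h2
    have hmax : P.IsMaximal := hP.isMaximal hP0
    have hmax' : (P.map σ).IsMaximal := Ideal.map_isMaximal_of_equiv σ
    exact hPmap (hmax'.eq_of_le hP.ne_top (Ideal.dvd_iff_le.1 h3))
  obtain ⟨Q, hQ⟩ := Ideal.dvd_span_singleton.2 hfP
  have hf0 : f ≠ 0 := fun h => hfP3 (h ▸ Ideal.zero_mem _)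
  have hPQ : ¬ P ∣ Q := by
    rintro ⟨X, rfl⟩
    apply hfP3
    rw [← Ideal.dvd_span_singleton, hQ]
    exact ⟨X, by ring⟩
  have hQ0 : Q ≠ ⊥ := fun h => hPQ (h ▸ dvd_zero P)
  refine ⟨f, P, Q, hf0, hNP, hQ, fun A hA => ?_⟩
  induction A using UniqueFactorizationMonoid.induction_on_prime with
  | h₁ => exact absurd (zero_dvd_iff.1 hA) hQ0
  | h₂ A hu => rw [Ideal.isUnit_iff.1 hu, Ideal.absNorm_top]; simp
  | h₃ A P' hA0 hP' ih =>
    obtain ⟨ih1, ih2⟩ := ih (dvd_of_mul_left_dvd hA)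
    have hP'p : P'.IsPrime := Ideal.isPrime_of_prime hP'
    have hP'Q : P' ∣ Q := dvd_of_mul_right_dvd hA
    have hfP' : f ∈ P' := by
      rw [← Ideal.dvd_span_singleton, hQ]
      exact hP'Q.mul_left _
    have hp_mem : (b : 𝓞 K) * y ^ 2 ∈ P' → (p : 𝓞 K) ∈ P' := by
      intro h
      refine hP'p.mem_of_pow_mem 2 ?_
      simpa [hf] using P'.add_mem hfP' h
    have h2b : ((2 * b : ℕ) : 𝓞 K) ∉ P' := by
      intro h
      have hyP' : y ∈ P' := P'.mul_mem_right _ h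
      have h1 := hp_mem (P'.mul_mem_left _ (by rw [pow_two]; exact P'.mul_mem_left _ hyP'))
      refine Ideal.natCast_notMem_of_coprime hP'p.ne_top ?_ h1 h
      exact ((Nat.coprime_primes hp Nat.prime_two).2 hp2).mul_right hpb
    have hyP' : y ∉ P' := by
      intro h
      have h1 := hp_mem (P'.mul_mem_left _ (by rw [pow_two]; exact P'.mul_mem_left _ h))
      have h2 := hP'p.mem_of_pow_mem 2 ((hP'p.mem_or_mem h).resolve_left h2b)
      rw [(huniq P' hP'p).1 ⟨h1, h2⟩] at hP'Q
      exact hPQ hP'Q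
    obtain ⟨h1, h2⟩ := hσ.jacobiSym_absNorm_of_isPrime hb hP'.ne_zero hfP' h2b hyP'
    rw [map_mul]
    refine ⟨h1.mul_left ih1, ?_⟩
    rw [Nat.cast_mul, jacobiSym.mul_left, h2, ih2, one_mul]

end IsQuadraticSqrt

end Genus

section Main

variable {K : Type*} [Field K] [NumberField K] {σ : 𝓞 K ≃+* 𝓞 K}

theorem Nat.mod_four_eq_one_of_mul_sq_eq {d v x y q : ℕ} (hd : Squarefree d) (hv : v ≠ 0)
    (h : d * v ^ 2 = x ^ 2 + y ^ 2) (hq : q.Prime) (hq2 : q ≠ 2) (hqd : q ∣ d) : q % 4 = 1 := by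
  have : Fact q.Prime := ⟨hq⟩
  have hodd := Nat.odd_iff.1 (hq.odd_of_ne_two hq2)
  by_contra hne
  have hd0 := hd.ne_zero
  have heven := Nat.eq_sq_add_sq_iff.1 ⟨x, y, h⟩ q
    (Nat.mem_primeFactors.2 ⟨hq, hqd.mul_right _, mul_ne_zero hd0 (pow_ne_zero 2 hv)⟩) (by omega)
  have h1 : padicValNat q d = 1 := by
    rw [← Nat.factorization_def d hq]
    have h2 := (Nat.squarefree_iff_factorization_le_one hd0).1 hd q
    have h3 := hq.factorization_pos_of_dvd hd0 hqd
    omega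
  rw [padicValNat.mul hd0 (pow_ne_zero 2 hv), padicValNat.pow, h1] at heven
  obtain ⟨t, ht⟩ := heven
  omega

theorem Ideal.norm_eq_pow_or_eq_neg_pow (I : Ideal (𝓞 K)) {n : ℕ} {γ : 𝓞 K}
    (h : I ^ n = Ideal.span {γ}) : Algebra.norm ℤ γ = (Ideal.absNorm I : ℤ) ^ n ∨
      Algebra.norm ℤ γ = -(Ideal.absNorm I : ℤ) ^ n := by
  have h1 := congrArg Ideal.absNorm h
  rw [map_pow, Ideal.absNorm_span_singleton] at h1
  have h2 := Int.natAbs_eq (Algebra.norm ℤ γ)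
  rw [← h1] at h2
  exact_mod_cast h2

namespace IsQuadraticConj

theorem isPrincipal_sq_of_norm_eq (hσ : IsQuadraticConj σ)
    (hdiv : ∀ a b : 𝓞 K, a ≠ 0 → b ≠ 0 →
      (Algebra.norm ℤ a).natAbs ∣ (Algebra.norm ℤ b).natAbs →
      ∃ c : 𝓞 K,
        (Algebra.norm ℤ a).natAbs * (Algebra.norm ℤ c).natAbs = (Algebra.norm ℤ b).natAbs)
    {I : Ideal (𝓞 K)} (hI : I ≠ ⊥) {γ : 𝓞 K} (hγ : I ^ 4 = Ideal.span {γ})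
    (hnorm : Algebra.norm ℤ γ = (Ideal.absNorm I : ℤ) ^ 4) : (I ^ 2).IsPrincipal := by
  obtain ⟨δ, R, hδ0, hδ, hR⟩ := hσ.exists_mul_isPrimitiveAmbiguous (I := I ^ 2) (γ := γ)
    (pow_ne_zero 2 hI) (by rw [← pow_mul, hγ]) (by rw [hnorm, map_pow]; push_cast; ring)
  have hN0 : Ideal.absNorm I ≠ 0 := by rwa [Ne, Ideal.absNorm_eq_zero_iff]
  have hNI : (Algebra.norm ℤ (Ideal.absNorm I : 𝓞 K)).natAbs = Ideal.absNorm I ^ 2 := by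
    rw [← Ideal.absNorm_span_singleton, hσ.absNorm_span_natCast]
  have hNδ : (Algebra.norm ℤ δ).natAbs = Ideal.absNorm I ^ 2 * Ideal.absNorm R := by
    rw [← Ideal.absNorm_span_singleton, hδ, map_mul, map_pow]
  obtain ⟨c, hc⟩ := hdiv (Ideal.absNorm I) δ (by exact_mod_cast hN0) hδ0
    (by rw [hNI, hNδ]; exact dvd_mul_right _ _)
  rw [hNI, hNδ] at hc
  have hcR := mul_left_cancel₀ (pow_ne_zero 2 hN0) hc
  rw [← Ideal.absNorm_span_singleton] at hcR
  obtain ⟨A, hA, hcA⟩ := hσ.exists_dvd_of_absNorm_eq hR.ne_bot hcR.symm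
  have hA0 : A ≠ 0 := fun h => hR.ne_bot (zero_dvd_iff.1 (h ▸ hA))
  rw [← hR.sq_eq_of_dvd hσ hA, mul_comm] at hcA
  have hRc : Ideal.span {c} = R := mul_left_cancel₀ (pow_ne_zero 2 hA0) hcA
  rw [← Ideal.isPrincipal_mul_iff hR.ne_bot ⟨c, hRc.symm⟩, mul_comm, ← hδ]
  exact ⟨δ, rfl⟩

theorem norm_ne_neg_pow_four (hσ : IsQuadraticConj σ)
    (hdiv : ∀ a b : 𝓞 K, a ≠ 0 → b ≠ 0 →
      (Algebra.norm ℤ a).natAbs ∣ (Algebra.norm ℤ b).natAbs →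
      ∃ c : 𝓞 K,
        (Algebra.norm ℤ a).natAbs * (Algebra.norm ℤ c).natAbs = (Algebra.norm ℤ b).natAbs)
    (hunit : ∀ ε : 𝓞 K, Algebra.norm ℤ ε ≠ -1)
    {I : Ideal (𝓞 K)} (hI : I ≠ ⊥) (hIP : ∀ P : Ideal (𝓞 K), P.IsPrime → P ∣ I → P.map σ ≠ P)
    {γ : 𝓞 K} (hγ : I ^ 4 = Ideal.span {γ}) :
    Algebra.norm ℤ γ ≠ -(Ideal.absNorm I : ℤ) ^ 4 := by
  intro hnorm
  obtain ⟨d, D, hD⟩ := hσ.exists_sqrt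
  have hm0 : (Ideal.absNorm I : ℤ) ≠ 0 := by
    rw [Ne, Nat.cast_eq_zero, Ideal.absNorm_eq_zero_iff]; exact hI
  obtain ⟨u, v, huv⟩ := hD.exists_four_mul_norm_eq hσ γ
  rw [hnorm] at huv
  have huv' : d * v ^ 2 = u ^ 2 + (2 * (Ideal.absNorm I : ℤ) ^ 2) ^ 2 := by
    linear_combination huv
  have hdv : 0 < d * v ^ 2 := by rw [huv']; positivity
  have hd0 : 0 < d := pos_of_mul_pos_left hdv (sq_nonneg v)
  have hv0 : v ≠ 0 := by rintro rfl; simp at hdv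
  lift d to ℕ using hd0.le
  have hdsq : Squarefree d := Int.squarefree_natCast.1 hD.squarefree
  have hd4 : ∀ q : ℕ, q.Prime → q ≠ 2 → q ∣ d → q % 4 = 1 := by
    intro q hq hq2 hqd
    refine Nat.mod_four_eq_one_of_mul_sq_eq (v := v.natAbs) (x := u.natAbs)
      (y := 2 * Ideal.absNorm I ^ 2) hdsq (Int.natAbs_ne_zero.2 hv0) ?_ hq hq2 hqd
    zify
    rw [sq_abs, sq_abs]
    exact huv'
  have hd1 : 1 < d := by
    by_contra hle
    have hd : d = 1 := by omega
    subst hd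
    have h1 : (D - 1) * (D + 1) = 0 := by
      have := hD.sq
      push_cast at this
      linear_combination this
    have h2 : σ D = D := by
      rcases mul_eq_zero.1 h1 with h | h
      · rw [sub_eq_zero.1 h, map_one]
      · rw [eq_neg_of_add_eq_zero_left h, map_neg, map_one]
    rw [hD.conj] at h2
    have h3 : D = 0 := self_eq_neg.1 h2.symm
    rw [h3] at h1
    norm_num at h1
  have hneg : ∀ u v : ℤ, u ^ 2 - d * v ^ 2 ≠ -1 := by
    intro u v h
    exact hunit (u + v * D) (by rw [hD.norm_eq hσ]; exact h)
  obtain ⟨b, b', x, y, w, hbb, hb1, hb'1, hbodd, hw, hpell⟩ :=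
    exists_factorization_of_pell hd1 hdsq hd4 hneg
  have hsq : Squarefree (b * b') := hbb ▸ hdsq
  have hbd : b ∣ d := hbb ▸ dvd_mul_right _ _
  have hb'd : b' ∣ d := hbb ▸ dvd_mul_left _ _
  have hb2 : ∀ q : ℕ, q ∣ b → q ≠ 2 := by
    rintro _ h rfl
    have := Nat.odd_iff.1 hbodd
    omega
  have hbq : ∀ q : ℕ, q.Prime → q ∣ b → q % 4 = 1 := fun q hq hqb =>
    hd4 q hq (hb2 q hqb) (hqb.trans hbd)
  have hb4 : b % 4 = 1 := Nat.mod_four_eq_one_of_forall_prime (by omega) hbq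
  have hr : ∀ r : ℕ, r ∣ b' → J(r | b) = 1 := fun r hrb =>
    jacobiSym_eq_one_of_dvd_left hw hpell hb4 hrb (hsq.squarefree_of_dvd (dvd_mul_left _ _))
      fun q hq hq2 hqb => hd4 q hq hq2 (hqb.trans hb'd)
  have hs : ∀ s : ℕ, s ∣ b → J(b' | s) = 1 := fun s hsb =>
    jacobiSym_eq_one_of_dvd_right hw hpell hsb
      (Nat.mod_four_eq_one_of_odd (hbodd.of_dvd_nat hsb) (hsb.trans hbd) hd4)
  have hdmod : (d : ℤ) % 4 = 1 ∨ (2 : ℤ) ∣ d := by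
    rcases Nat.even_or_odd d with h | h
    · right; exact_mod_cast h.two_dvd
    · left
      have := Nat.mod_four_eq_one_of_odd h dvd_rfl hd4
      omega
  have hIb : (Ideal.absNorm I).Coprime b := by
    rw [Nat.coprime_iff_gcd_eq_one, Nat.eq_one_iff_not_exists_prime_dvd]
    intro q hq hqd
    obtain ⟨hqI, hqb⟩ := Nat.dvd_gcd_iff.1 hqd
    obtain ⟨P, hP, hPI, hqP⟩ := hσ.exists_isPrime_of_dvd_absNorm hq hqI
    have hP0 : P ≠ ⊥ := fun h => hI (zero_dvd_iff.1 (by rwa [h] at hPI))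
    refine hIP P hP hPI (hD.map_eq_of_mem hP0 ?_ ?_)
    · have := Ideal.natCast_notMem_of_coprime hP.ne_top
        ((Nat.coprime_primes hq Nat.prime_two).2 (hb2 q hqb)) hqP
      simpa using this
    · apply hP.mem_of_pow_mem 2
      obtain ⟨t, ht⟩ := hqb.trans hbd
      rw [hD.sq, ht]
      push_cast
      exact P.mul_mem_right _ hqP
  have hgenus : ∀ A : Ideal (𝓞 K), A ≠ ⊥ → (A ^ 2).IsPrincipal → (Ideal.absNorm A).Coprime b →
      J(Ideal.absNorm A | b) = 1 := by
    rintro A hA ⟨ε, hε⟩ hAb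
    rcases Ideal.norm_eq_pow_or_eq_neg_pow A hε with h | h
    · exact hD.jacobiSym_absNorm_eq_one hσ hdmod (by rw [hbb]) hbq hr hs hA hε h hAb
    · have h1 := hD.jacobiSym_absNorm_eq_one hσ hdmod (by rw [hbb]) hbq hr hs
        (I := A * I ^ 2) (γ := ε * γ) (mul_ne_zero hA (pow_ne_zero 2 hI)) (by
          rw [mul_pow, ← pow_mul, hγ, hε]
          exact Ideal.span_singleton_mul_span_singleton ε γ)
        (by rw [map_mul, h, hnorm, map_mul, map_pow]; push_cast; ring)
        (by rw [map_mul, map_pow]; exact hAb.mul_left (hIb.pow_left 2))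
      rw [map_mul, map_pow] at h1
      push_cast at h1
      rwa [jacobiSym.mul_left, jacobiSym.sq_one' (by simpa using hIb), mul_one] at h1
  obtain ⟨p, hp, hp2, hpd, hpb, hpb'⟩ := exists_prime_jacobiSym_eq_neg_one hb1 hb'1 hbodd hsq
    (by rwa [hbb])
  have : Fact p.Prime := ⟨hp⟩
  obtain ⟨k, hk⟩ : ∃ k : ℤ, (p : ℤ) ∣ k ^ 2 - d := by
    have h1 : legendreSym p d = 1 := by
      rw [jacobiSym.legendreSym.to_jacobiSym, ← hbb, Nat.cast_mul, jacobiSym.mul_left, hpb, hpb']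
      norm_num
    have h0 : ((d : ℤ) : ZMod p) ≠ 0 := by
      intro h0
      rw [(legendreSym.eq_zero_iff p d).2 h0] at h1
      norm_num at h1
    obtain ⟨z, hz⟩ := (legendreSym.eq_one_iff p h0).1 h1
    obtain ⟨k, rfl⟩ := ZMod.intCast_surjective z
    refine ⟨k, (ZMod.intCast_zmod_eq_zero_iff_dvd _ p).1 ?_⟩
    push_cast at hz ⊢
    rw [hz]; ring
  have hpcop : p.Coprime b := hpd.coprime_mul_right_right
  obtain ⟨f, P, Q, hf0, hNP, hfQ, hQ⟩ := hD.exists_span_eq_sq_mul hσ hp hp2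
    (by rw [Int.natAbs_natCast, ← hbb]; exact hpd) hk hb4 hpcop
  have hfspan : Ideal.span {f} ≠ ⊥ := by rwa [Ne, Ideal.span_singleton_eq_bot]
  have hP0 : P ≠ ⊥ := by rintro rfl; exact hp.ne_zero (by rw [← hNP, Ideal.absNorm_bot])
  have hQ0 : Q ≠ ⊥ := by rintro rfl; exact hfspan (by rw [hfQ, Ideal.mul_bot])
  have hNp : (Algebra.norm ℤ (p : 𝓞 K)).natAbs = p ^ 2 := by
    rw [← Ideal.absNorm_span_singleton, hσ.absNorm_span_natCast]
  have hNf : (Algebra.norm ℤ f).natAbs = p ^ 2 * Ideal.absNorm Q := by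
    rw [← Ideal.absNorm_span_singleton, hfQ, map_mul, map_pow, hNP]
  obtain ⟨c, hc⟩ := hdiv p f (by exact_mod_cast hp.ne_zero) hf0
    (by rw [hNp, hNf]; exact dvd_mul_right _ _)
  rw [hNp, hNf] at hc
  have hcQ := mul_left_cancel₀ (pow_ne_zero 2 hp.ne_zero) hc
  rw [← Ideal.absNorm_span_singleton] at hcQ
  obtain ⟨A, hA, hcA⟩ := hσ.exists_dvd_of_absNorm_eq hQ0 hcQ.symm
  have hA0 : A ≠ ⊥ := fun h => hQ0 (zero_dvd_iff.1 (by rwa [h] at hA))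
  have hc0 : Ideal.span {c} ≠ ⊥ := by
    intro h
    rw [h, Ideal.absNorm_bot] at hcQ
    exact hQ0 (Ideal.absNorm_eq_zero_iff.1 hcQ.symm)
  have hprinc : ((P * A) ^ 2).IsPrincipal := by
    rw [← Ideal.isPrincipal_mul_iff hc0 ⟨c, rfl⟩]
    refine ⟨Ideal.absNorm A * f, ?_⟩
    calc Ideal.span {c} * (P * A) ^ 2 = P ^ 2 * (Ideal.span {c} * A ^ 2) := by ring
      _ = Ideal.span {(Ideal.absNorm A : 𝓞 K)} * (P ^ 2 * Q) := by rw [hcA]; ring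
      _ = Ideal.span {Ideal.absNorm A * f} := by
        rw [← hfQ, Ideal.span_singleton_mul_span_singleton]
  obtain ⟨hAb, hAJ⟩ := hQ A hA
  have h1 := hgenus (P * A) (mul_ne_zero hP0 hA0) hprinc
    (by rw [map_mul, hNP]; exact hpcop.mul_left hAb)
  rw [map_mul, hNP, Nat.cast_mul, jacobiSym.mul_left, hAJ, mul_one,
    ← jacobiSym.quadratic_reciprocity_one_mod_four hb4 (hp.odd_of_ne_two hp2), hpb] at h1
  norm_num at h1

theorem isPrincipal_sq_of_isPrincipal_pow_four (hσ : IsQuadraticConj σ)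
    (hdiv : ∀ a b : 𝓞 K, a ≠ 0 → b ≠ 0 →
      (Algebra.norm ℤ a).natAbs ∣ (Algebra.norm ℤ b).natAbs →
      ∃ c : 𝓞 K,
        (Algebra.norm ℤ a).natAbs * (Algebra.norm ℤ c).natAbs = (Algebra.norm ℤ b).natAbs)
    {I : Ideal (𝓞 K)} (hI : I ≠ ⊥) (h4 : (I ^ 4).IsPrincipal) : (I ^ 2).IsPrincipal := by
  induction hn : Ideal.absNorm I using Nat.strong_induction_on generalizing I with
  | _ n ih =>
    obtain ⟨γ, hγ⟩ : ∃ γ, I ^ 4 = Ideal.span {γ} := h4.principal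
    by_cases hIP : ∀ P : Ideal (𝓞 K), P.IsPrime → P ∣ I → P.map σ ≠ P
    · rcases Ideal.norm_eq_pow_or_eq_neg_pow I hγ with h | h
      · exact hσ.isPrincipal_sq_of_norm_eq hdiv hI hγ h
      by_cases hunit : ∀ ε : 𝓞 K, Algebra.norm ℤ ε ≠ -1
      · exact absurd h (hσ.norm_ne_neg_pow_four hdiv hunit hI hIP hγ)
      push Not at hunit
      obtain ⟨ε, hε⟩ := hunit
      have hεu : IsUnit ε := by
        have h1 := hσ.norm ε
        rw [hε] at h1
        refine IsUnit.of_mul_eq_one (-σ ε) ?_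
        push_cast at h1
        linear_combination h1
      refine hσ.isPrincipal_sq_of_norm_eq hdiv hI (γ := ε * γ) ?_ (by rw [map_mul, hε, h]; ring)
      rw [hγ, Ideal.span_singleton_mul_left_unit hεu]
    · push Not at hIP
      obtain ⟨P, hP, ⟨J, hJ⟩, hPmap⟩ := hIP
      have hP0 : P ≠ ⊥ := fun h => hI (by rw [hJ, h, Ideal.bot_mul])
      have hJ0 : J ≠ ⊥ := fun h => hI (by rw [hJ, h, Ideal.mul_bot])
      have hP2 : P ^ 2 = Ideal.span {(Ideal.absNorm P : 𝓞 K)} := by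
        rw [← hσ.mul_map_eq, hPmap, pow_two]
      have hlt : Ideal.absNorm J < n := by
        rw [← hn, hJ, map_mul]
        have h1 : 0 < Ideal.absNorm J :=
          Nat.pos_of_ne_zero (by rwa [Ne, Ideal.absNorm_eq_zero_iff])
        have h2 : Ideal.absNorm P ≠ 0 := by rwa [Ne, Ideal.absNorm_eq_zero_iff]
        have h3 : Ideal.absNorm P ≠ 1 := by
          rw [Ne, Ideal.absNorm_eq_one_iff]; exact hP.ne_top
        exact (Nat.lt_mul_iff_one_lt_left h1).2 (by omega)
      have hP4 : P ^ 4 = Ideal.span {(Ideal.absNorm P : 𝓞 K) ^ 2} := by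
        rw [← Ideal.span_singleton_pow, ← hP2, ← pow_mul]
      rw [hJ, mul_pow, Ideal.isPrincipal_mul_iff (pow_ne_zero 4 hP0) ⟨_, hP4⟩] at h4
      rw [hJ, mul_pow, Ideal.isPrincipal_mul_iff (pow_ne_zero 2 hP0) ⟨_, hP2⟩]
      exact ih _ hlt hJ0 h4 rfl

end IsQuadraticConj

end Main

/-- let `K` be a quadratic number field. If the image of the
absolute norm `N` is closed under division, then the class group has no
element of order four. -/
theorem stmt_14 (K : Type*) [Field K] [NumberField K]
    (hdeg : Module.finrank ℚ K = 2)
    (hdiv : ∀ a b : 𝓞 K, a ≠ 0 → b ≠ 0 →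
      (Algebra.norm ℤ a).natAbs ∣ (Algebra.norm ℤ b).natAbs →
      ∃ c : 𝓞 K,
        (Algebra.norm ℤ a).natAbs * (Algebra.norm ℤ c).natAbs =
          (Algebra.norm ℤ b).natAbs) :
    ∀ g : ClassGroup (𝓞 K), orderOf g ≠ 4 := by
  intro g hg
  obtain ⟨σ, hσ⟩ := exists_isQuadraticConj hdeg
  obtain ⟨I, rfl⟩ := ClassGroup.mk0_surjective g
  have hI : (I : Ideal (𝓞 K)) ≠ ⊥ := nonZeroDivisors.ne_zero I.2
  have hpow : ∀ n : ℕ, ClassGroup.mk0 I ^ n = 1 ↔ ((I : Ideal (𝓞 K)) ^ n).IsPrincipal := by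
    intro n
    rw [← map_pow]
    exact ClassGroup.mk0_eq_one_iff (I ^ n).2
  have h4 : ClassGroup.mk0 I ^ 4 = 1 := by rw [← hg]; exact pow_orderOf_eq_one _
  have h2 := (hpow 2).2 (hσ.isPrincipal_sq_of_isPrincipal_pow_four hdiv hI ((hpow 4).1 h4))
  have := orderOf_dvd_of_pow_eq_one h2
  rw [hg] at this
  norm_num at this
end

section
/- Let L be a multiplicative lattice and define r_s : Set L → Set L by r_s(X) = {h ∈ L | there exist finitely many h₁, …, hₙ ∈ X with h ≤ h₁ ⊔ ⋯ ⊔ hₙ}. Then r_s is a finitary weak ideal system on L (it satisfies (s1)–(s4) and r_s(X) = ⋃ {r_s(Z) | Z ⊆ X finite}), and for every x ∈ L the interval {y ∈ L | y ≤ x} is an r_s-ideal, i.e. r_s({y | y ≤ x}) = {y | y ≤ x}; consequently x ↦ {y | y ≤ x} is an injective map from L into the set of r_s-ideals. -/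
/-- The finitary closure operation:
`rs X = {h | h ≤ h₁ ⊔ ⋯ ⊔ hₙ for some finitely many h₁, …, hₙ ∈ X}`. -/
def rs {L : Type*} [CompleteLattice L] (X : Set L) : Set L :=
  {h | ∃ Z : Finset L, ↑Z ⊆ X ∧ h ≤ Z.sup id}

section MultiplicativeLattice

variable {L : Type*} [CompleteLattice L]

theorem mem_rs_of_mem {X : Set L} {x : L} (hx : x ∈ X) : x ∈ rs X :=
  ⟨{x}, by simpa using hx, by simp⟩

theorem rs_mono {X Y : Set L} (hXY : X ⊆ Y) : rs X ⊆ rs Y := by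
  rintro h ⟨Z, hZ, hh⟩
  exact ⟨Z, hZ.trans hXY, hh⟩

theorem mem_rs_of_le {X : Set L} {a b : L} (hab : a ≤ b) (hb : b ∈ rs X) : a ∈ rs X := by
  obtain ⟨Z, hZ, hh⟩ := hb
  exact ⟨Z, hZ, hab.trans hh⟩

theorem finset_sup_mem_rs {X : Set L} {Z : Finset L} (hZ : ↑Z ⊆ rs X) : Z.sup id ∈ rs X := by
  classical
  refine Finset.sup_induction ⟨∅, by simp, by simp⟩ ?_ fun z hz => hZ hz
  rintro a ⟨A, hA, ha⟩ b ⟨B, hB, hb⟩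
  refine ⟨A ∪ B, by simp [hA, hB], ?_⟩
  rw [Finset.sup_union]
  exact sup_le_sup ha hb

theorem rs_rs (X : Set L) : rs (rs X) = rs X := by
  refine Set.Subset.antisymm ?_ fun x hx => mem_rs_of_mem hx
  rintro h ⟨Z, hZ, hh⟩
  exact mem_rs_of_le hh (finset_sup_mem_rs hZ)

theorem rs_eq_sUnion_finite (X : Set L) :
    rs X = ⋃₀ {A | ∃ Z : Set L, Z ⊆ X ∧ Z.Finite ∧ A = rs Z} := by
  refine Set.Subset.antisymm ?_ ?_
  · rintro h ⟨Z, hZ, hh⟩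
    exact ⟨rs ↑Z, ⟨↑Z, hZ, Z.finite_toSet, rfl⟩, Z, subset_rfl, hh⟩
  · rintro h ⟨_, ⟨Z, hZ, -, rfl⟩, hh⟩
    exact rs_mono hZ hh

theorem rs_setOf_le (x : L) : rs {y : L | y ≤ x} = {y : L | y ≤ x} := by
  refine Set.Subset.antisymm ?_ fun y hy => mem_rs_of_mem hy
  rintro h ⟨Z, hZ, hh⟩
  exact hh.trans (Finset.sup_le fun z hz => hZ hz)

variable [CommMonoid L]

theorem mul_le_mul_left_of_mul_sSup
    (hdist : ∀ (a : L) (S : Set L), a * sSup S = ⨆ b ∈ S, a * b)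
    (c : L) {a b : L} (hab : a ≤ b) : c * a ≤ c * b := by
  have h := hdist c {a, b}
  rw [sSup_pair, sup_eq_right.2 hab, iSup_pair] at h
  rw [h]
  exact le_sup_left

theorem mul_finset_sup_of_mul_sSup
    (hdist : ∀ (a : L) (S : Set L), a * sSup S = ⨆ b ∈ S, a * b)
    (c : L) (Z : Finset L) : c * Z.sup id = Z.sup fun b => c * b := by
  rw [Finset.sup_id_eq_sSup, hdist, Finset.sup_eq_iSup]
  simp

theorem image_mul_rs_subset
    (hdist : ∀ (a : L) (S : Set L), a * sSup S = ⨆ b ∈ S, a * b)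
    (c : L) (X : Set L) : (fun y => c * y) '' rs X ⊆ rs ((fun y => c * y) '' X) := by
  classical
  rintro _ ⟨h, ⟨Z, hZ, hh⟩, rfl⟩
  refine ⟨Z.image fun y => c * y, ?_, ?_⟩
  · rw [Finset.coe_image]
    exact Set.image_mono hZ
  · rw [Finset.sup_image, Function.id_comp, ← mul_finset_sup_of_mul_sSup hdist]
    exact mul_le_mul_left_of_mul_sSup hdist c hh

theorem mul_le_left_of_one_eq_top
    (hdist : ∀ (a : L) (S : Set L), a * sSup S = ⨆ b ∈ S, a * b)
    (hone : (1 : L) = ⊤) (x h : L) : x * h ≤ x := by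
  have hle : h ≤ 1 := hone ▸ le_top
  simpa using mul_le_mul_left_of_mul_sSup hdist x hle

end MultiplicativeLattice

/-- for a multiplicative lattice `L`, the map `rs` is a finitary
weak ideal system on `L` ((s1)–(s4) plus finitariness), each interval
`{y | y ≤ x}` is an `rs`-ideal, and hence `x ↦ {y | y ≤ x}` is an injective
map from `L` into the set of `rs`-ideals. -/
theorem stmt_16 {L : Type*} [CompleteLattice L] [CommMonoid L]
    (hdist : ∀ (a : L) (S : Set L), a * sSup S = ⨆ b ∈ S, a * b)
    (hone : (1 : L) = ⊤) :
    (∀ X : Set L, ∀ x ∈ X, ∀ h : L, x * h ∈ rs X) ∧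
    (∀ X Y : Set L, X ⊆ Y → rs X ⊆ rs Y) ∧
    (∀ X : Set L, rs (rs X) = rs X) ∧
    (∀ (c : L) (X : Set L), (fun y => c * y) '' rs X ⊆ rs ((fun y => c * y) '' X)) ∧
    (∀ X : Set L, rs X = ⋃₀ {A | ∃ Z : Set L, Z ⊆ X ∧ Z.Finite ∧ A = rs Z}) ∧
    (∀ x : L, rs {y : L | y ≤ x} = {y : L | y ≤ x}) ∧
    Function.Injective (fun x : L => {y : L | y ≤ x}) := by
  exact ⟨fun _ x hx h =>
      mem_rs_of_le (mul_le_left_of_one_eq_top hdist hone x h) (mem_rs_of_mem hx),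
    fun _ _ => rs_mono, rs_rs, image_mul_rs_subset hdist, rs_eq_sUnion_finite, rs_setOf_le,
    fun _ _ h => Set.Iic_injective h⟩
end
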